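/- arXiv:2407.17680 — 2 statements merged into one kernel-verified Lean document; each statement's English description precedes it below -/
import Mathlib

section
/- For every integer M ≥ 0 there is a constant C_M > 0 such that for all X ≥ 3, the number of integers a with 0 < |a| ≤ X for which rank(E_a(ℚ)) > ω(a) − M is at most C_M · X / log log X, where E_a is the elliptic curve y² = x³ + a over ℚ. -/
open TensorProduct

/-- The elliptic curve `y² = x³ + a` over `ℚ`. -/
noncomputable def Ea (a : ℤ) : WeierstrassCurve.Affine ℚ :=
  { a₁ := 0, a₂ := 0, a₃ := 0, a₄ := 0, a₆ := (a : ℚ) }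

/-- The Mordell–Weil rank of a Weierstrass curve over `ℚ`: the dimension of the
`ℚ`-vector space `E(ℚ) ⊗_ℤ ℚ`. -/
noncomputable def mwRank (W : WeierstrassCurve.Affine ℚ) : Cardinal :=
  Module.rank ℚ (ℚ ⊗[ℤ] W.Point)

/-- The number of distinct prime factors of a nonzero integer. -/
def omega (n : ℤ) : ℕ := n.natAbs.primeFactors.card

/-!
The curve `E_a : y² = x³ + a` has a rational `3`-isogeny to `E_{-27a}`, which over an extension
containing `√-3` is multiplication by `√-3` followed by an isomorphism. Descent along it attaches
to the points of `E_b(ℚ)`, modulo the image of the isogeny, `SL₂(ℤ)`-classes of binary cubic forms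
`a x³ + 3 b x² y + 3 c x y² + d y³` of discriminant `4 b`. So `3 ^ rank E_a` is at most a product
of two class counts, for `-27 a` and `729 a`, as soon as neither of these integers is a square.

Reduction theory moves all forms with `|b| ≤ X` into a region with `O(X)` integral points off its
cusp, so the class counts are bounded on average, and by Markov's inequality they exceed a fixed
multiple of `log log X` for only `O(X / log log X)` of the integers `a`. For the other ones
`3 ^ rank E_a` is at most a fixed multiple of `(log log X)²`, while Turán's second-moment
inequality shows `ω(a) > ½ log log X + O(1)` outside a set of size `O(X / log log X)`.
-/

open WeierstrassCurve.Affine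

/-- The Mordell curve `y² = x³ + a`, including the cuspidal cubic `a = 0`, whose nonsingular points
form the additive group. -/
def mordellCurve {R : Type*} [CommRing R] (a : R) : WeierstrassCurve.Affine R :=
  { a₁ := 0, a₂ := 0, a₃ := 0, a₄ := 0, a₆ := a }

namespace mordellCurve

section GroupLaw

variable {F : Type*} [Field F] {a x y x₁ y₁ x₂ y₂ x₃ y₃ m : F}

lemma equation_iff : (mordellCurve a).Equation x y ↔ y ^ 2 = x ^ 3 + a := by
  rw [WeierstrassCurve.Affine.equation_iff]
  simp [mordellCurve]

lemma nonsingular_iff [CharZero F] :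
    (mordellCurve a).Nonsingular x y ↔ y ^ 2 = x ^ 3 + a ∧ (x ≠ 0 ∨ y ≠ 0) := by
  rw [WeierstrassCurve.Affine.nonsingular_iff, equation_iff]
  simp [mordellCurve, eq_comm (a := (0 : F)), self_eq_neg]

lemma eq_of_nonsingular (h : (mordellCurve a).Nonsingular x y) : y ^ 2 = x ^ 3 + a :=
  equation_iff.1 h.1

@[simp]
lemma negY_eq : (mordellCurve a).negY x y = -y := by
  simp [WeierstrassCurve.Affine.negY, mordellCurve]

/-- The line of slope `m` through the points `(x₁, y₁)` and `(x₂, y₂)` of a Mordell curve is their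
chord or, if the points coincide, the tangent. For points of the same curve that are not opposite
to each other the two equations have exactly one common solution `m`. -/
structure IsSlope (x₁ y₁ x₂ y₂ m : F) : Prop where
  chord : m * (x₂ - x₁) = y₂ - y₁
  tangent : m * (y₁ + y₂) = x₁ ^ 2 + x₁ * x₂ + x₂ ^ 2

lemma exists_isSlope (e₁ : y₁ ^ 2 = x₁ ^ 3 + a) (e₂ : y₂ ^ 2 = x₂ ^ 3 + a)
    (hne : x₁ ≠ x₂ ∨ y₁ + y₂ ≠ 0) : ∃ m, IsSlope x₁ y₁ x₂ y₂ m := by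
  by_cases hx : x₁ = x₂
  · subst hx
    have hy : y₁ + y₂ ≠ 0 := hne.resolve_left (by simp)
    refine ⟨(3 * x₁ ^ 2) / (y₁ + y₂), ?_, ?_⟩
    · have : (y₁ + y₂) * (y₂ - y₁) = 0 := by linear_combination e₂ - e₁
      rw [sub_self, mul_zero, (mul_eq_zero.1 this).resolve_left hy]
    · rw [div_mul_cancel₀ _ hy]
      ring
  · have hx' : x₂ - x₁ ≠ 0 := sub_ne_zero.2 (Ne.symm hx)
    refine ⟨(y₂ - y₁) / (x₂ - x₁), div_mul_cancel₀ _ hx', mul_left_cancel₀ hx' ?_⟩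
    field_simp
    linear_combination e₂ - e₁

variable [DecidableEq F]

lemma slope_eq_of_isSlope (hm : IsSlope x₁ y₁ x₂ y₂ m) (hne : x₁ ≠ x₂ ∨ y₁ + y₂ ≠ 0) :
    (mordellCurve a).slope x₁ x₂ y₁ y₂ = m := by
  by_cases hx : x₁ = x₂
  · subst hx
    obtain rfl : y₂ = y₁ := by linear_combination -hm.chord
    have hy : y₂ + y₂ ≠ 0 := hne.resolve_left (by simp)
    rw [slope_of_Y_ne rfl (by rw [negY_eq]; exact fun h ↦ hy (by linear_combination h)), negY_eq,
      sub_neg_eq_add, div_eq_iff hy]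
    simp only [mordellCurve]
    linear_combination -hm.tangent
  · rw [slope_of_X_ne hx, div_eq_iff (sub_ne_zero.2 hx)]
    linear_combination hm.chord

lemma some_add_some (h₁ : (mordellCurve a).Nonsingular x₁ y₁)
    (h₂ : (mordellCurve a).Nonsingular x₂ y₂) (h₃ : (mordellCurve a).Nonsingular x₃ y₃)
    (hm : IsSlope x₁ y₁ x₂ y₂ m) (hne : x₁ ≠ x₂ ∨ y₁ + y₂ ≠ 0)
    (hx₃ : x₃ = m ^ 2 - x₁ - x₂) (hy₃ : y₃ = -(m * (x₃ - x₁) + y₁)) :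
    (Point.some x₁ y₁ h₁ + Point.some x₂ y₂ h₂ : (mordellCurve a).Point) = .some x₃ y₃ h₃ := by
  have hxy : ¬(x₁ = x₂ ∧ y₁ = (mordellCurve a).negY x₂ y₂) := by
    rw [negY_eq, not_and_or, ← add_eq_zero_iff_eq_neg]
    exact hne
  have hX : (mordellCurve a).addX x₁ x₂ m = x₃ := by
    rw [hx₃]
    simp [WeierstrassCurve.Affine.addX, mordellCurve]
  rw [Point.add_some hxy, Point.some.injEq, slope_eq_of_isSlope hm hne]
  simp only [WeierstrassCurve.Affine.addY, WeierstrassCurve.Affine.negAddY, negY_eq, hX, hy₃,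
    and_self]

lemma exists_some_add_some (h₁ : (mordellCurve a).Nonsingular x₁ y₁)
    (h₂ : (mordellCurve a).Nonsingular x₂ y₂) (hne : x₁ ≠ x₂ ∨ y₁ + y₂ ≠ 0) :
    ∃ m x₃ y₃, ∃ h₃ : (mordellCurve a).Nonsingular x₃ y₃, IsSlope x₁ y₁ x₂ y₂ m ∧
      x₃ = m ^ 2 - x₁ - x₂ ∧ y₃ = -(m * (x₃ - x₁) + y₁) ∧
      (Point.some x₁ y₁ h₁ + Point.some x₂ y₂ h₂ : (mordellCurve a).Point) = .some x₃ y₃ h₃ := by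
  obtain ⟨m, hm⟩ := exists_isSlope (eq_of_nonsingular h₁) (eq_of_nonsingular h₂) hne
  have hxy : ¬(x₁ = x₂ ∧ y₁ = (mordellCurve a).negY x₂ y₂) := by
    rw [negY_eq, not_and_or, ← add_eq_zero_iff_eq_neg]
    exact hne
  have hX : (mordellCurve a).addX x₁ x₂ m = m ^ 2 - x₁ - x₂ := by
    simp [WeierstrassCurve.Affine.addX, mordellCurve]
  have hY : (mordellCurve a).addY x₁ x₂ y₁ m = -(m * (m ^ 2 - x₁ - x₂ - x₁) + y₁) := by
    simp only [WeierstrassCurve.Affine.addY, WeierstrassCurve.Affine.negAddY, negY_eq, hX]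
  have h₃ := WeierstrassCurve.Affine.nonsingular_add h₁ h₂ hxy
  rw [slope_eq_of_isSlope hm hne, hX, hY] at h₃
  exact ⟨m, _, _, h₃, hm, rfl, rfl, some_add_some h₁ h₂ h₃ hm hne rfl rfl⟩

end GroupLaw

section Scale

variable {F K : Type*} [Field F] [CharZero F] [Field K] [CharZero K] {a x y : F} {b u : K}

lemma nonsingular_scale (f : F →+* K) (hu : u ≠ 0) (hb : b = u ^ 6 * f a)
    (h : (mordellCurve a).Nonsingular x y) :
    (mordellCurve b).Nonsingular (u ^ 2 * f x) (u ^ 3 * f y) := by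
  obtain ⟨e, hxy⟩ := nonsingular_iff.1 h
  refine nonsingular_iff.2 ⟨?_, by simpa [hu] using hxy⟩
  have e' := congrArg f e
  simp only [map_pow, map_add] at e'
  linear_combination u ^ 6 * e' - hb

variable [DecidableEq F] [DecidableEq K]

/-- The map `(x, y) ↦ (u² x, u³ y)` from the points over `F` of `y² = x³ + a` to the points over
an extension `K` of `y² = x³ + u⁶ a`; it covers base changes, twists and isomorphisms at once. -/
def scale (f : F →+* K) (hu : u ≠ 0) (hb : b = u ^ 6 * f a) :
    (mordellCurve a).Point →+ (mordellCurve b).Point where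
  toFun
    | .zero => .zero
    | .some _ _ h => .some _ _ (nonsingular_scale f hu hb h)
  map_zero' := rfl
  map_add' := by
    rintro (_ | ⟨x₁, y₁, h₁⟩) (_ | ⟨x₂, y₂, h₂⟩)
    · rfl
    · rw [← Point.zero_def, zero_add]
      exact (zero_add _).symm
    · rw [← Point.zero_def, add_zero]
      exact (add_zero _).symm
    by_cases hne : x₁ ≠ x₂ ∨ y₁ + y₂ ≠ 0
    · obtain ⟨m, x₃, y₃, h₃, hm, rfl, rfl, hadd⟩ := exists_some_add_some h₁ h₂ hne
      have chord := congrArg f hm.chord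
      have tangent := congrArg f hm.tangent
      simp only [map_mul, map_sub, map_add, map_pow] at chord tangent
      rw [hadd]
      refine (some_add_some (m := u * f m) _ _ _ ⟨?_, ?_⟩ ?_ ?_ ?_).symm
      · linear_combination u ^ 3 * chord
      · linear_combination u ^ 4 * tangent
      · rwa [← mul_add, ← map_add, (mul_right_injective₀ (pow_ne_zero 2 hu)).ne_iff,
          f.injective.ne_iff, mul_ne_zero_iff_left (pow_ne_zero 3 hu), map_ne_zero]
      · simp only [map_sub, map_pow]; ring
      · simp only [map_sub, map_pow, map_neg, map_add, map_mul]; ring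
    · rw [not_or, not_not, not_not] at hne
      obtain ⟨rfl, hy⟩ := hne
      rw [Point.add_of_Y_eq rfl (by rw [negY_eq]; linear_combination hy)]
      refine (Point.add_of_Y_eq rfl ?_).symm
      rw [negY_eq, eq_neg_of_add_eq_zero_left hy, map_neg, mul_neg]

@[simp]
lemma scale_some (f : F →+* K) (hu : u ≠ 0) (hb : b = u ^ 6 * f a)
    (h : (mordellCurve a).Nonsingular x y) :
    scale f hu hb (.some x y h) = .some _ _ (nonsingular_scale f hu hb h) := rfl

lemma scale_injective (f : F →+* K) (hu : u ≠ 0) (hb : b = u ^ 6 * f a) :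
    Function.Injective (scale f hu hb) := by
  rw [injective_iff_map_eq_zero]
  rintro (_ | ⟨x, y, h⟩) h0
  · rfl
  · exact absurd h0 (Point.some_ne_zero _)

end Scale

section ComplexMultiplication

variable {K : Type*} [Field K] {b ω : K}

lemma sub_sq_sq_of_primitive (hω : ω ^ 2 + ω + 1 = 0) : (ω - ω ^ 2) ^ 2 = -3 := by
  linear_combination (ω ^ 2 - 3 * ω + 3) * hω

variable [CharZero K]

lemma sub_sq_ne_zero_of_primitive (hω : ω ^ 2 + ω + 1 = 0) : ω - ω ^ 2 ≠ 0 := fun h0 ↦ by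
  simpa [h0] using sub_sq_sq_of_primitive hω

lemma ne_zero_of_primitive (hω : ω ^ 2 + ω + 1 = 0) : ω ≠ 0 := by
  rintro rfl
  norm_num at hω

variable [DecidableEq K]

/-- The automorphism `(x, y) ↦ (ω x, y)` of a Mordell curve attached to a primitive cube root of
unity `ω`. -/
def rotation (hω : ω ^ 2 + ω + 1 = 0) (b : K) : (mordellCurve b).Point →+ (mordellCurve b).Point :=
  scale (RingHom.id K) (pow_ne_zero 2 (ne_zero_of_primitive hω)) <| by
    rw [RingHom.id_apply]
    linear_combination (-(ω - 1) * (ω ^ 9 + ω ^ 6 + ω ^ 3 + 1) * b) * hω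

lemma exists_rotation_some (hω : ω ^ 2 + ω + 1 = 0) {x y : K}
    (h : (mordellCurve b).Nonsingular x y) :
    ∃ h', rotation hω b (.some x y h) = .some (ω * x) y h' := by
  have hx : (ω ^ 2) ^ 2 * x = ω * x := by linear_combination (ω * (ω - 1) * x) * hω
  have hy : (ω ^ 2) ^ 3 * y = y := by linear_combination ((ω - 1) * (ω ^ 3 + 1) * y) * hω
  have h' := nonsingular_scale (b := b) (u := ω ^ 2) (RingHom.id K)
    (pow_ne_zero 2 (ne_zero_of_primitive hω)) (by
      rw [RingHom.id_apply]
      linear_combination (-(ω - 1) * (ω ^ 9 + ω ^ 6 + ω ^ 3 + 1) * b) * hω) h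
  simp only [RingHom.id_apply, hx, hy] at h'
  exact ⟨h', by simp only [rotation, scale_some, RingHom.id_apply, hx, hy]⟩

lemma add_rotation_add_rotation_rotation (hω : ω ^ 2 + ω + 1 = 0) (P : (mordellCurve b).Point) :
    P + rotation hω b P + rotation hω b (rotation hω b P) = 0 := by
  rcases P with _ | ⟨x, y, h⟩
  · simp [← Point.zero_def]
  obtain ⟨h₁, e₁⟩ := exists_rotation_some hω h
  obtain ⟨h₂, e₂⟩ := exists_rotation_some hω h₁
  rw [e₁, e₂, ← eq_neg_iff_add_eq_zero, Point.neg_some]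
  refine some_add_some (m := 0) _ _ _ ⟨?_, ?_⟩ ?_ ?_ ?_
  · ring
  · linear_combination -x ^ 2 * hω
  · rcases (nonsingular_iff.1 h).2 with hx | hy
    · refine .inl fun hωx ↦ ?_
      have hω1 : ω = 1 := mul_right_cancel₀ hx (by rw [← hωx, one_mul])
      norm_num [hω1] at hω
    · exact .inr (by simpa [← two_mul] using hy)
  · linear_combination x * hω
  · rw [negY_eq]
    ring

/-- Multiplication by `√-3 = ω - ω²` on a Mordell curve. -/
def sqrtNegThree (hω : ω ^ 2 + ω + 1 = 0) (b : K) :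
    (mordellCurve b).Point →+ (mordellCurve b).Point :=
  rotation hω b - (rotation hω b).comp (rotation hω b)

lemma sqrtNegThree_sqrtNegThree (hω : ω ^ 2 + ω + 1 = 0) (P : (mordellCurve b).Point) :
    sqrtNegThree hω b (sqrtNegThree hω b P) = -(3 • P) := by
  have hρρ (Q : (mordellCurve b).Point) :
      rotation hω b (rotation hω b Q) = -(Q + rotation hω b Q) :=
    eq_neg_of_add_eq_zero_right (add_rotation_add_rotation_rotation hω Q)
  have hψ (Q : (mordellCurve b).Point) : sqrtNegThree hω b Q = Q + 2 • rotation hω b Q := by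
    rw [sqrtNegThree, AddMonoidHom.sub_apply, AddMonoidHom.comp_apply, hρρ]
    abel
  rw [hψ, hψ, map_add, map_nsmul, hρρ]
  abel

lemma sqrtNegThree_eq_zero (hω : ω ^ 2 + ω + 1 = 0) {x y : K}
    (h : (mordellCurve b).Nonsingular x y) (hx : x = 0) :
    sqrtNegThree hω b (.some x y h) = 0 := by
  subst hx
  obtain ⟨h₁, e₁⟩ := exists_rotation_some hω h
  simp only [mul_zero] at h₁ e₁
  rw [sqrtNegThree, AddMonoidHom.sub_apply, AddMonoidHom.comp_apply, e₁, e₁, sub_self]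

lemma sqrtNegThree_some (hω : ω ^ 2 + ω + 1 = 0) {x y x' y' : K}
    (h : (mordellCurve b).Nonsingular x y) (h' : (mordellCurve b).Nonsingular x' y') (hx : x ≠ 0)
    (hx' : 3 * x ^ 2 * x' = -(x ^ 3 + 4 * b))
    (hy' : 3 * (ω - ω ^ 2) * x ^ 3 * y' = y * (8 * b - x ^ 3)) :
    sqrtNegThree hω b (.some x y h) = .some x' y' h' := by
  have hθ := sub_sq_sq_of_primitive hω
  have hθ0 := sub_sq_ne_zero_of_primitive hω
  have e := eq_of_nonsingular h
  obtain ⟨m, hm⟩ : ∃ m, (ω - ω ^ 2) * x * m = 2 * y :=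
    ⟨_, mul_div_cancel₀ (2 * y) (mul_ne_zero hθ0 hx)⟩
  have hm_sq : 3 * x ^ 2 * m ^ 2 = -4 * y ^ 2 := by
    linear_combination -((ω - ω ^ 2) * x * m + 2 * y) * hm + x ^ 2 * m ^ 2 * hθ
  obtain ⟨h₁, e₁⟩ := exists_rotation_some hω h
  obtain ⟨h₂, e₂⟩ := exists_rotation_some hω h₁
  rw [sqrtNegThree, AddMonoidHom.sub_apply, AddMonoidHom.comp_apply, e₁, e₂, sub_eq_add_neg,
    Point.neg_some]
  have hx'm : x' = m ^ 2 - ω * x - ω * (ω * x) := by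
    refine mul_left_cancel₀ (mul_ne_zero three_ne_zero (pow_ne_zero 2 hx)) ?_
    linear_combination hx' - hm_sq + 4 * e + 3 * x ^ 3 * hω
  refine some_add_some (m := m) _ _ _ ⟨?_, ?_⟩ ?_ hx'm ?_
  · rw [negY_eq]
    linear_combination -hm
  · rw [negY_eq]
    linear_combination -ω ^ 2 * x ^ 2 * hω
  · refine .inl fun h0 ↦ mul_ne_zero hθ0 hx ?_
    linear_combination h0
  · refine mul_left_cancel₀
      (mul_ne_zero (mul_ne_zero three_ne_zero hθ0) (pow_ne_zero 3 hx)) ?_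
    linear_combination hy' + 3 * x ^ 2 * (x' - ω * x) * hm + 2 * y * hx' - 3 * x ^ 3 * y * hω

end ComplexMultiplication

section Isogeny

variable {F K : Type*} [Field F] [CharZero F] [Field K] [CharZero K] {a x y : F} {b u ω : K}

lemma nonsingular_isogeny (h : (mordellCurve a).Nonsingular x y) (hx : x ≠ 0) :
    (mordellCurve (-27 * a)).Nonsingular ((x ^ 3 + 4 * a) / x ^ 2)
      (y * (x ^ 3 - 8 * a) / x ^ 3) := by
  have e := eq_of_nonsingular h
  refine nonsingular_iff.2 ⟨?_, ?_⟩
  · field_simp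
    linear_combination (x ^ 3 - 8 * a) ^ 2 * e
  · by_contra! h0
    rw [div_eq_zero_iff, div_eq_zero_iff, or_iff_left (pow_ne_zero 2 hx),
      or_iff_left (pow_ne_zero 3 hx)] at h0
    have hya : (y * a) ^ 2 = 0 := by
      have : y * a = 0 := by linear_combination (y * h0.1 - h0.2) / 12
      rw [this, zero_pow two_ne_zero]
    have ha : a = 0 := by
      refine pow_eq_zero_iff three_ne_zero |>.1 ?_
      linear_combination (a ^ 2 * h0.1 - hya + a ^ 2 * e) / 3
    refine pow_ne_zero 3 hx ?_
    linear_combination h0.1 - 4 * ha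

open Classical in
/-- The underlying map of `isogeny`. -/
noncomputable def isogenyFun (a : F) :
    (mordellCurve a).Point → (mordellCurve (-27 * a)).Point
  | .zero => .zero
  | .some _ _ h => if hx : _ = 0 then .zero else .some _ _ (nonsingular_isogeny h hx)

lemma eq_div_pow_six (hω : ω ^ 2 + ω + 1 = 0) (f : F →+* K) (hb : b = u ^ 6 * f a) :
    b = (u / (ω - ω ^ 2)) ^ 6 * f (-27 * a) := by
  have hθ : (ω - ω ^ 2) ^ 6 = -27 := by
    rw [pow_mul _ 2 3, sub_sq_sq_of_primitive hω]
    norm_num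
  rw [div_pow, hθ, hb, map_mul, map_neg, map_ofNat]
  ring

/-- Over an extension containing `√-3`, the map `isogenyFun` is multiplication by `√-3` followed by
an isomorphism. -/
lemma scale_isogenyFun [DecidableEq F] [DecidableEq K] (hω : ω ^ 2 + ω + 1 = 0) (f : F →+* K)
    (hu : u ≠ 0) (hb : b = u ^ 6 * f a) (P : (mordellCurve a).Point) :
    scale f (div_ne_zero hu (sub_sq_ne_zero_of_primitive hω)) (eq_div_pow_six hω f hb)
      (isogenyFun a P) = sqrtNegThree hω b (scale f hu hb P) := by
  have hθ := sub_sq_ne_zero_of_primitive hω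
  have hθsq := sub_sq_sq_of_primitive hω
  rcases P with _ | ⟨x, y, h⟩
  · exact (map_zero (sqrtNegThree hω b)).symm
  by_cases hx : x = 0
  · rw [scale_some, sqrtNegThree_eq_zero hω _ (by simp [hx]), isogenyFun, dif_pos hx]
    rfl
  have hfx : f x ≠ 0 := by simpa using hx
  simp only [isogenyFun, dif_neg hx, scale_some]
  refine (sqrtNegThree_some hω _ _ (by simp [hx, hu]) ?_ ?_).symm
  · simp only [hb, map_div₀, map_add, map_pow, map_mul, map_ofNat, div_pow, hθsq]
    field_simp
  · rw [hb, map_div₀, map_mul, map_sub, map_mul, map_pow, map_ofNat, div_pow,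
      pow_succ (ω - ω ^ 2), hθsq]
    generalize ω - ω ^ 2 = θ at hθ
    field_simp
    ring

lemma exists_primitive (F : Type*) [Field F] :
    ∃ ω : AlgebraicClosure F, ω ^ 2 + ω + 1 = 0 := by
  obtain ⟨ω, hω⟩ := IsAlgClosed.exists_aeval_eq_zero (AlgebraicClosure F)
    (Polynomial.cyclotomic 3 F) (Polynomial.degree_cyclotomic_pos 3 F three_pos).ne'
  exact ⟨ω, by simpa [Polynomial.cyclotomic_three] using hω⟩

variable [DecidableEq F]

/-- The `3`-isogeny `(x, y) ↦ ((x³ + 4a) / x², y (x³ - 8a) / x³)` from `y² = x³ + a` to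
`y² = x³ - 27a`. -/
noncomputable def isogeny (a : F) : (mordellCurve a).Point →+ (mordellCurve (-27 * a)).Point where
  toFun := isogenyFun a
  map_zero' := rfl
  map_add' P Q := by
    classical
    obtain ⟨ω, hω⟩ := exists_primitive F
    have hspec := scale_isogenyFun (a := a) hω (algebraMap F (AlgebraicClosure F)) one_ne_zero rfl
    apply scale_injective (algebraMap F (AlgebraicClosure F)) _ _
    rw [map_add, hspec, hspec, hspec, map_add, map_add]

lemma isogeny_some (h : (mordellCurve a).Nonsingular x y) (hx : x ≠ 0) :
    isogeny a (.some x y h) = .some _ _ (nonsingular_isogeny h hx) :=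
  dif_neg hx

/-- The isomorphism from `y² = x³ + 729a` to `y² = x³ + a`. -/
def descale (a : F) : (mordellCurve (-27 * (-27 * a))).Point →+ (mordellCurve a).Point :=
  scale (u := -1 / 3) (RingHom.id F) (by norm_num) (by rw [RingHom.id_apply]; ring)

lemma scale_descale [DecidableEq K] (f : F →+* K) (hu : u ≠ 0) (hb : b = u ^ 6 * f a)
    (hb' : b = (-u / 3) ^ 6 * f (-27 * (-27 * a)))
    (P : (mordellCurve (-27 * (-27 * a))).Point) :
    scale f hu hb (descale a P) = scale f (by simpa using hu) hb' P := by
  rcases P with _ | ⟨x, y, h⟩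
  · rfl
  simp only [descale, scale_some, RingHom.id_apply, Point.some.injEq, map_mul, map_pow, map_div₀,
    map_neg, map_one, map_ofNat]
  constructor <;> ring

lemma descale_bijective (a : F) : Function.Bijective (descale a) := by
  refine ⟨scale_injective _ _ _, ?_⟩
  rintro (_ | ⟨x, y, h⟩)
  · exact ⟨0, map_zero _⟩
  · refine ⟨scale (u := -3) (RingHom.id F) (by norm_num) ?_ (.some x y h), ?_⟩
    · rw [RingHom.id_apply]
      ring
    · simp only [descale, scale_some, RingHom.id_apply, Point.some.injEq]
      constructor <;> ring

lemma descale_isogeny_isogeny (P : (mordellCurve a).Point) :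
    descale a (isogeny (-27 * a) (isogeny a P)) = -(3 • P) := by
  classical
  obtain ⟨ω, hω⟩ := exists_primitive F
  set f := algebraMap F (AlgebraicClosure F)
  have hθ := sub_sq_ne_zero_of_primitive hω
  have hu : 1 / (ω - ω ^ 2) / (ω - ω ^ 2) = -1 / 3 := by
    rw [div_div, ← sq, sub_sq_sq_of_primitive hω, div_neg, neg_div]
  have ha : 1 ^ 6 * f a = (-1 / 3) ^ 6 * f (-27 * (-27 * a)) := by
    rw [map_mul, map_mul, map_neg, map_ofNat]
    ring
  have h₁ := scale_isogenyFun (a := a) hω f one_ne_zero rfl P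
  have h₂ := scale_isogenyFun hω f (div_ne_zero one_ne_zero hθ) (eq_div_pow_six hω f rfl)
    (isogenyFun a P)
  rw [h₁, sqrtNegThree_sqrtNegThree, ← map_nsmul, ← map_neg] at h₂
  apply scale_injective f one_ne_zero rfl
  rw [scale_descale f one_ne_zero rfl ha, ← h₂]
  simp only [hu]
  rfl

/-- Multiplication by `3` is the composite of the two isogenies up to the isomorphism `descale`. -/
lemma index_three_nsmul_le (h₁ : (isogeny a).range.index ≠ 0)
    (h₂ : (isogeny (-27 * a)).range.index ≠ 0) :
    (nsmulAddMonoidHom (α := (mordellCurve a).Point) 3).range.index ≠ 0 ∧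
      (nsmulAddMonoidHom (α := (mordellCurve a).Point) 3).range.index ≤
        (isogeny a).range.index * (isogeny (-27 * a)).range.index := by
  have hrange : (nsmulAddMonoidHom (α := (mordellCurve a).Point) 3).range =
      (((isogeny a).range).map (isogeny (-27 * a))).map (descale a) := by
    ext P
    simp only [AddMonoidHom.mem_range, AddSubgroup.mem_map, nsmulAddMonoidHom_apply,
      exists_exists_eq_and, descale_isogeny_isogeny, ← smul_neg]
    exact (Equiv.neg _).exists_congr_left
  have hdvd := AddSubgroup.index_dvd_of_le
    (le_sup_left (a := (isogeny a).range) (b := (isogeny (-27 * a)).ker))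
  rw [hrange, AddSubgroup.index_map_of_bijective (descale_bijective a), AddSubgroup.index_map]
  exact ⟨mul_ne_zero (ne_zero_of_dvd_ne_zero h₁ hdvd) h₂,
    Nat.mul_le_mul_right _ (Nat.le_of_dvd (Nat.pos_of_ne_zero h₁) hdvd)⟩

end Isogeny

end mordellCurve

lemma quadraticAlgebra_mk_pow_three {b : ℚ} (u v : ℚ) :
    (⟨u, v⟩ : QuadraticAlgebra ℚ b 0) ^ 3 =
      ⟨u ^ 3 + 3 * b * u * v ^ 2, 3 * u ^ 2 * v + b * v ^ 3⟩ := by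
  rw [pow_succ, pow_two]
  ext <;> simp <;> ring

/-- The binary cubic form `a x³ + 3 b x² y + 3 c x y² + d y³`. -/
@[ext]
structure BinaryCubicForm (R : Type*) where
  a : R
  b : R
  c : R
  d : R

namespace BinaryCubicForm

section CommRing

variable {R S : Type*} [CommRing R] [CommRing S] (f : BinaryCubicForm R)

/-- The value of a form at `(x, y)`. -/
def eval (x y : R) : R := f.a * x ^ 3 + 3 * f.b * x ^ 2 * y + 3 * f.c * x * y ^ 2 + f.d * y ^ 3

/-- The discriminant of the Hessian, which is `-1/27` times the usual discriminant of the form. -/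
def disc : R := (f.b * f.c - f.a * f.d) ^ 2 - 4 * (f.b ^ 2 - f.a * f.c) * (f.c ^ 2 - f.b * f.d)

/-- Twice the polarization of the Hessian covariant. -/
def hessian (x y z w : R) : R :=
  2 * (f.b ^ 2 - f.a * f.c) * x * z + (f.b * f.c - f.a * f.d) * (x * w + y * z) +
    2 * (f.c ^ 2 - f.b * f.d) * y * w

/-- The cubic covariant: the Jacobian of the form and its Hessian. -/
def covariant (x y : R) : R :=
  (f.b * x ^ 2 + 2 * f.c * x * y + f.d * y ^ 2) *
      (2 * (f.b ^ 2 - f.a * f.c) * x + (f.b * f.c - f.a * f.d) * y) -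
    (f.a * x ^ 2 + 2 * f.b * x * y + f.c * y ^ 2) *
      ((f.b * f.c - f.a * f.d) * x + 2 * (f.c ^ 2 - f.b * f.d) * y)

/-- The form `f (α x + β y, γ x + δ y)`. -/
@[simps]
def subst (α β γ δ : R) : BinaryCubicForm R where
  a := f.eval α γ
  b := f.a * α ^ 2 * β + f.b * (α ^ 2 * δ + 2 * α * β * γ) +
    f.c * (γ ^ 2 * β + 2 * α * γ * δ) + f.d * γ ^ 2 * δ
  c := f.a * α * β ^ 2 + f.b * (β ^ 2 * γ + 2 * α * β * δ) +
    f.c * (δ ^ 2 * α + 2 * β * γ * δ) + f.d * γ * δ ^ 2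
  d := f.eval β δ

/-- Writing `F`, `G`, `H`, `D` for the form, its covariant, its polarized Hessian and its
discriminant, this and `covariant_mul_eval_sub` are the two components of
`2 (G + √D F)(x, y) (G - √D F)(z, w) = (H - √D (x w - y z))³`. -/
lemma covariant_mul_covariant_sub (x y z w : R) :
    2 * (f.covariant x y * f.covariant z w - f.disc * f.eval x y * f.eval z w) =
      f.hessian x y z w ^ 3 + 3 * f.hessian x y z w * f.disc * (x * w - y * z) ^ 2 := by
  simp only [covariant, disc, eval, hessian]
  ring

lemma covariant_mul_eval_sub (x y z w : R) :
    2 * (f.covariant x y * f.eval z w - f.eval x y * f.covariant z w) =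
      3 * f.hessian x y z w ^ 2 * (x * w - y * z) + f.disc * (x * w - y * z) ^ 3 := by
  simp only [covariant, disc, eval, hessian]
  ring

lemma eval_subst (α β γ δ x y : R) :
    (f.subst α β γ δ).eval x y = f.eval (α * x + β * y) (γ * x + δ * y) := by
  simp only [eval, subst]
  ring

lemma disc_subst (α β γ δ : R) :
    (f.subst α β γ δ).disc = (α * δ - β * γ) ^ 6 * f.disc := by
  simp only [disc, eval, subst]
  ring

lemma covariant_subst (α β γ δ x y : R) :
    (f.subst α β γ δ).covariant x y =
      (α * δ - β * γ) ^ 3 * f.covariant (α * x + β * y) (γ * x + δ * y) := by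
  simp only [covariant, eval, subst]
  ring

lemma subst_subst (α β γ δ α' β' γ' δ' : R) :
    (f.subst α β γ δ).subst α' β' γ' δ' =
      f.subst (α * α' + β * γ') (α * β' + β * δ') (γ * α' + δ * γ') (γ * β' + δ * δ') := by
  ext <;> simp only [eval, subst] <;> ring

/-- The form obtained by applying a ring homomorphism to the coefficients. -/
@[simps]
def map (φ : R →+* S) : BinaryCubicForm S where
  a := φ f.a
  b := φ f.b
  c := φ f.c
  d := φ f.d

lemma map_subst (φ : R →+* S) (α β γ δ : R) :
    (f.subst α β γ δ).map φ = (f.map φ).subst (φ α) (φ β) (φ γ) (φ δ) := by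
  ext <;> simp [eval, map_ofNat φ]

lemma disc_map (φ : R →+* S) : (f.map φ).disc = φ f.disc := by
  simp [disc, map_ofNat φ]

end CommRing

section Represents

variable {f : BinaryCubicForm ℤ} {b : ℚ} {y y' : ℚ}

/-- An integral form of discriminant `4 b` represents a rational point of `y² = x³ + b` if its
value at some integral vector is a cube `T³` and its covariant there is `2 y T³`, where `y` is the
ordinate of the point. -/
def Represents (f : BinaryCubicForm ℤ) (y : ℚ) : Prop :=
  ∃ x z : ℤ, ∃ T : ℚ, T ≠ 0 ∧ f.eval x z = T ^ 3 ∧ f.covariant x z = 2 * y * T ^ 3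

lemma Represents.subst (h : f.Represents y) {α β γ δ : ℤ} (hdet : α * δ - β * γ = 1) :
    (f.subst α β γ δ).Represents y := by
  obtain ⟨x, z, T, hT, hF, hG⟩ := h
  have hx : α * (δ * x - β * z) + β * (α * z - γ * x) = x := by linear_combination x * hdet
  have hz : γ * (δ * x - β * z) + δ * (α * z - γ * x) = z := by linear_combination z * hdet
  refine ⟨δ * x - β * z, α * z - γ * x, T, hT, ?_, ?_⟩
  · rw [eval_subst, hx, hz, hF]
  · rw [covariant_subst, hx, hz, hdet, one_pow, one_mul, hG]

lemma Represents.exists_cube_mul (hD : (f.disc : ℚ) = 4 * b) (h : f.Represents y)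
    (h' : f.Represents y') :
    ∃ w : QuadraticAlgebra ℚ b 0, ⟨y, 1⟩ * ⟨-y', 1⟩ = w ^ 3 := by
  obtain ⟨x, z, T, hT, hF, hG⟩ := h
  obtain ⟨x', z', T', hT', hF', hG'⟩ := h'
  have hre := congrArg (Int.cast : ℤ → ℚ) (f.covariant_mul_covariant_sub x z x' z')
  have him := congrArg (Int.cast : ℤ → ℚ) (f.covariant_mul_eval_sub x z x' z')
  push_cast [hF, hG, hF', hG', hD] at hre him
  generalize (f.hessian x z x' z' : ℚ) = h at hre him
  generalize (x * z' - z * x' : ℚ) = e at hre him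
  refine ⟨⟨-h / (2 * T * T'), e / (T * T')⟩, ?_⟩
  rw [quadraticAlgebra_mk_pow_three]
  ext <;> simp only [QuadraticAlgebra.re_mul, QuadraticAlgebra.im_mul] <;> field_simp
  · linear_combination -hre
  · linear_combination him

lemma Represents.exists_cube (hb : b ≠ 0) (ha : f.a = 0) (hD : (f.disc : ℚ) = 4 * b)
    (h : f.Represents y) : ∃ w : QuadraticAlgebra ℚ b 0, ⟨y, 1⟩ = w ^ 3 := by
  obtain ⟨x, z, T, hT, hF, hG⟩ := h
  have hfb : (f.b : ℚ) ≠ 0 := by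
    intro h0
    rw [Int.cast_eq_zero] at h0
    refine hb ?_
    simpa [disc, ha, h0] using hD.symm
  have hF' : f.eval 1 0 = 0 := by simp [eval, ha]
  have hG' : f.covariant 1 0 = 2 * f.b ^ 3 := by
    simp only [covariant, ha]
    ring
  have hre := congrArg (Int.cast : ℤ → ℚ) (f.covariant_mul_covariant_sub x z 1 0)
  have him := congrArg (Int.cast : ℤ → ℚ) (f.covariant_mul_eval_sub x z 1 0)
  rw [hF', hG'] at hre him
  push_cast [hF, hG, hD] at hre him
  generalize (f.hessian x z 1 0 : ℚ) = h at hre him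
  refine ⟨⟨h / (2 * T * f.b), z / (T * f.b)⟩, ?_⟩
  rw [quadraticAlgebra_mk_pow_three]
  ext <;> dsimp only <;> field_simp
  · linear_combination hre
  · linear_combination -him

end Represents

end BinaryCubicForm

section Descent

namespace mordellCurve

lemma IsSlope.prod_eq_cube {b x₁ y₁ x₂ y₂ x₃ y₃ m : ℚ} (e₁ : y₁ ^ 2 = x₁ ^ 3 + b)
    (hm : IsSlope x₁ y₁ x₂ y₂ m) (hx₃ : x₃ = m ^ 2 - x₁ - x₂)
    (hy₃ : y₃ = -(m * (x₃ - x₁) + y₁)) :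
    (⟨y₁, 1⟩ * ⟨y₂, 1⟩ * ⟨-y₃, 1⟩ : QuadraticAlgebra ℚ b 0) = ⟨y₁ - m * x₁, 1⟩ ^ 3 := by
  -- the elementary symmetric functions of the abscissae of three collinear points
  have s₂ : x₁ * x₂ + x₁ * x₃ + x₂ * x₃ = -2 * m * (y₁ - m * x₁) := by
    rw [hx₃]
    linear_combination hm.tangent + m * hm.chord
  have s₃ : x₁ * x₂ * x₃ = (y₁ - m * x₁) ^ 2 - b := by
    linear_combination x₁ * s₂ - x₁ ^ 2 * hx₃ - e₁
  have hy₂ : y₂ = m * x₂ + (y₁ - m * x₁) := by linear_combination -hm.chord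
  rw [quadraticAlgebra_mk_pow_three, hy₃, hy₂]
  ext <;> simp only [QuadraticAlgebra.re_mul, QuadraticAlgebra.im_mul]
  · linear_combination m ^ 3 * s₃ + m ^ 2 * (y₁ - m * x₁) * s₂ +
      m * ((y₁ - m * x₁) ^ 2 + b) * hx₃
  · linear_combination m ^ 2 * s₂ + 2 * m * (y₁ - m * x₁) * hx₃

variable {a : ℚ}

lemma some_mem_range_isogeny {x y : ℚ} (h : (mordellCurve (-27 * a)).Nonsingular x y)
    {w : QuadraticAlgebra ℚ (-27 * a) 0} (hw : ⟨y, 1⟩ = w ^ 3) :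
    Point.some x y h ∈ (isogeny a).range := by
  obtain ⟨u, v⟩ := w
  rw [quadraticAlgebra_mk_pow_three, QuadraticAlgebra.mk.injEq] at hw
  obtain ⟨hy, hv⟩ := hw
  have hv0 : v ≠ 0 := by
    rintro rfl
    norm_num at hv
  have hx : x = u ^ 2 + 27 * a * v ^ 2 := by
    refine (Odd.strictMono_pow (by decide : Odd 3)).injective ?_
    have e := eq_of_nonsingular h
    rw [hy] at e
    linear_combination -e + 27 * a * (3 * u ^ 2 * v + -27 * a * v ^ 3 + 1) * hv
  have hx0 : 1 / (3 * v) ≠ 0 := by positivity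
  have hR : (mordellCurve a).Nonsingular (1 / (3 * v)) (u / (3 * v)) := by
    refine nonsingular_iff.2 ⟨?_, .inl hx0⟩
    field_simp
    linear_combination -hv
  refine ⟨_, (isogeny_some hR hx0).trans ?_⟩
  rw [Point.some.injEq, hx, hy]
  constructor <;> field_simp
  · linear_combination hv
  · linear_combination u * hv

lemma some_sub_some_mem_range_isogeny (hsq : ¬IsSquare (-27 * a)) {x₁ y₁ x₂ y₂ : ℚ}
    (h₁ : (mordellCurve (-27 * a)).Nonsingular x₁ y₁)
    (h₂ : (mordellCurve (-27 * a)).Nonsingular x₂ y₂)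
    {w : QuadraticAlgebra ℚ (-27 * a) 0} (hw : ⟨y₁, 1⟩ * ⟨-y₂, 1⟩ = w ^ 3) :
    Point.some x₁ y₁ h₁ - Point.some x₂ y₂ h₂ ∈ (isogeny a).range := by
  by_cases hne : x₁ ≠ x₂ ∨ y₁ + -y₂ ≠ 0
  · have : Fact (∀ r : ℚ, r ^ 2 ≠ -27 * a + 0 * r) :=
      ⟨fun r hr ↦ hsq ⟨r, by linear_combination -hr⟩⟩
    have h₂' : (mordellCurve (-27 * a)).Nonsingular x₂ (-y₂) := by
      simpa only [negY_eq] using (nonsingular_neg ..).2 h₂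
    obtain ⟨m, x₃, y₃, h₃, hm, hx₃, hy₃, hadd⟩ := exists_some_add_some h₁ h₂' hne
    have hcube := hm.prod_eq_cube (eq_of_nonsingular h₁) hx₃ hy₃
    have hw0 : w ^ 3 ≠ 0 := by
      rw [← hw]
      exact mul_ne_zero (fun h0 ↦ by simpa using congrArg QuadraticAlgebra.im h0)
        (fun h0 ↦ by simpa using congrArg QuadraticAlgebra.im h0)
    have hsub : Point.some x₁ y₁ h₁ - Point.some x₂ y₂ h₂ = Point.some x₃ y₃ h₃ := by
      simpa only [sub_eq_add_neg, Point.neg_some, negY_eq] using hadd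
    rw [hsub, ← neg_mem_iff, Point.neg_some]
    refine some_mem_range_isogeny _ (w := ⟨y₁ - m * x₁, 1⟩ / w) ?_
    rw [negY_eq, div_pow, ← hcube, hw, mul_div_cancel_left₀ _ hw0]
  · rw [not_or, not_not, not_not, ← sub_eq_add_neg, sub_eq_zero] at hne
    obtain ⟨rfl, rfl⟩ := hne
    rw [sub_self]
    exact zero_mem _

end mordellCurve

lemma exists_eq_div_sq_div_cube (b : ℤ) {x y : ℚ} (h : y ^ 2 = x ^ 3 + b) :
    ∃ A B t : ℤ, t ≠ 0 ∧ IsCoprime A t ∧ x = A / t ^ 2 ∧ y = B / t ^ 3 := by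
  have hden : y.den ^ 2 = x.den ^ 3 := by
    have := congrArg Rat.den h
    rwa [Rat.den_pow, Rat.add_intCast_den, Rat.den_pow] at this
  obtain ⟨t, ht⟩ : x.den ∣ y.den := by
    rw [← Nat.pow_dvd_pow_iff two_ne_zero, hden]
    exact pow_dvd_pow _ (by norm_num)
  have hx : x.den = t ^ 2 := by
    refine Nat.eq_of_mul_eq_mul_left (pow_pos x.den_pos 2) ?_
    rw [← mul_pow, ← ht, hden]
    ring
  have hy : y.den = t ^ 3 := by
    rw [ht, hx]
    ring
  have ht0 : t ≠ 0 := by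
    rintro rfl
    exact x.den_ne_zero hx
  refine ⟨x.num, y.num, t, by exact_mod_cast ht0, ?_, ?_, ?_⟩
  · have := x.isCoprime_num_den
    rw [hx, Nat.cast_pow] at this
    exact (IsCoprime.pow_right_iff two_pos).1 this
  · exact_mod_cast hx ▸ x.num_div_den.symm
  · exact_mod_cast hy ▸ y.num_div_den.symm

namespace BinaryCubicForm

/-- The form is `(t³, β, t³ l, β l - 2 k)`, where `β ≡ B / A` modulo `t⁶` for the point
`(A / t², B / t³)`; it represents the point at `(1, 0)`. -/
lemma exists_represents {b : ℤ} {x y : ℚ} (h : y ^ 2 = x ^ 3 + b) :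
    ∃ f : BinaryCubicForm ℤ, f.disc = 4 * b ∧ f.Represents y := by
  obtain ⟨A, B, t, ht, hco, rfl, rfl⟩ := exists_eq_div_sq_div_cube b h
  have htq : (t : ℚ) ≠ 0 := by exact_mod_cast ht
  have hAB : B ^ 2 = A ^ 3 + b * t ^ 6 := by
    field_simp at h
    rw [mul_comm]
    exact_mod_cast h
  obtain ⟨β, k, hk⟩ : ∃ β k, β * A = B + t ^ 6 * k := by
    obtain ⟨u, v, huv⟩ : IsCoprime A (t ^ 6) := hco.pow_right
    exact ⟨u * B, -v * B, by linear_combination B * huv⟩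
  obtain ⟨l, hl⟩ : t ^ 6 ∣ β ^ 2 - A := by
    have hcoA : IsCoprime (t ^ 6) (A ^ 2) := hco.symm.pow
    refine hcoA.dvd_of_dvd_mul_left ⟨2 * B * k + t ^ 6 * k ^ 2 + b, ?_⟩
    linear_combination hAB + (β * A + B + t ^ 6 * k) * hk
  set f : BinaryCubicForm ℤ := ⟨t ^ 3, β, t ^ 3 * l, β * l - 2 * k⟩ with hf
  have hF : f.eval 1 0 = t ^ 3 := by simp [eval, hf]
  have hG : f.covariant 1 0 = 2 * B := by
    simp only [covariant, hf]
    linear_combination 2 * β * hl + 2 * hk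
  have hH : f.hessian 1 0 1 0 = 2 * A := by
    simp only [hessian, hf]
    linear_combination 2 * hl
  refine ⟨f, ?_, 1, 0, t, htq, ?_, ?_⟩
  · have hid := f.covariant_mul_covariant_sub 1 0 1 0
    rw [hG, hF, hH] at hid
    refine mul_left_cancel₀ (by positivity : 2 * t ^ 6 ≠ 0) ?_
    linear_combination -hid + 8 * hAB
  · exact_mod_cast hF
  · rw [hG]
    push_cast
    field_simp

/-- `S` meets every `SL₂(ℤ)`-class of forms of discriminant `4 b`, except possibly those classes
that contain a form with vanishing first coefficient: they represent trivial points only. -/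
def Covers (b : ℤ) (S : Set (BinaryCubicForm ℤ)) : Prop :=
  ∀ f : BinaryCubicForm ℤ, f.disc = 4 * b → ∃ α β γ δ : ℤ, α * δ - β * γ = 1 ∧
    ((f.subst α β γ δ).a = 0 ∨ f.subst α β γ δ ∈ S)

end BinaryCubicForm

lemma addSubgroup_index_le_of_fibers {G T : Type*} [AddCommGroup G] (H : AddSubgroup G) {S : Set T}
    (hS : S.Finite) (f : G → T) (hf : ∀ x ∉ H, f x ∈ S)
    (hH : ∀ x ∉ H, ∀ y ∉ H, f x = f y → x - y ∈ H) :
    H.index ≠ 0 ∧ H.index ≤ S.ncard + 1 := by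
  classical
  have := hS.to_subtype
  let g : G ⧸ H → Option S := fun z ↦ if h : z.out ∈ H then none else some ⟨f z.out, hf _ h⟩
  have hg : Function.Injective g := by
    intro z w hzw
    have hout : z.out - w.out ∈ H := by
      simp only [g] at hzw
      split_ifs at hzw with h₁ h₂ h₂
      · exact sub_mem h₁ h₂
      · exact hH _ h₁ _ h₂ (by simpa using hzw)
    rw [← z.out_eq', ← w.out_eq']
    refine QuotientAddGroup.eq.2 ?_
    rwa [neg_add_eq_sub, ← neg_mem_iff, neg_sub]
  have : Finite (G ⧸ H) := Finite.of_injective g hg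
  refine ⟨Nat.card_pos.ne', ?_⟩
  simpa [AddSubgroup.index, Nat.card_coe_set_eq] using Nat.card_le_card_of_injective g hg

namespace mordellCurve

open BinaryCubicForm

theorem index_isogeny_le {a : ℚ} {b : ℤ} (hb : -27 * a = b) (hsq : ¬IsSquare (b : ℚ))
    {S : Set (BinaryCubicForm ℤ)} (hS : S.Finite) (hc : Covers b S) :
    (isogeny a).range.index ≠ 0 ∧ (isogeny a).range.index ≤ S.ncard + 1 := by
  have hdisc {f : BinaryCubicForm ℤ} (hf : f.disc = 4 * b) : (f.disc : ℚ) = 4 * (-27 * a) := by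
    rw [hf, hb]
    norm_cast
  have hform : ∀ P ∉ (isogeny a).range, ∃ f ∈ S, f.disc = 4 * b ∧
      ∃ x y h, P = Point.some x y h ∧ f.Represents y := by
    rintro (_ | ⟨x, y, h⟩) hP
    · exact absurd (zero_mem _) hP
    obtain ⟨f, hD, hf⟩ := exists_represents (hb ▸ eq_of_nonsingular h)
    obtain ⟨α, β, γ, δ, hdet, hS⟩ := hc f hD
    have hD' : (f.subst α β γ δ).disc = 4 * b := by
      rw [disc_subst, hdet, one_pow, one_mul, hD]
    refine ⟨_, hS.resolve_left fun h0 ↦ hP ?_, hD', x, y, h, rfl, hf.subst hdet⟩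
    have hb0 : -27 * a ≠ 0 := fun h0 ↦ hsq (by rw [← hb, h0]; exact .zero)
    obtain ⟨w, hw⟩ := (hf.subst hdet).exists_cube hb0 h0 (hdisc hD')
    exact some_mem_range_isogeny h hw
  have : Nonempty (BinaryCubicForm ℤ) := ⟨⟨0, 0, 0, 0⟩⟩
  choose! F hFS hFD hF using hform
  refine addSubgroup_index_le_of_fibers _ hS F hFS fun P hP Q hQ hPQ ↦ ?_
  obtain ⟨x, y, h, rfl, hr⟩ := hF P hP
  obtain ⟨x', y', h', rfl, hr'⟩ := hF Q hQ
  obtain ⟨w, hw⟩ := hr.exists_cube_mul (hdisc (hFD _ hP)) (hPQ ▸ hr')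
  exact some_sub_some_mem_range_isogeny (hb ▸ hsq) _ _ hw

end mordellCurve

end Descent

section Rank

lemma pow_finrank_le_index (A : Type*) [AddCommGroup A] [Module.Finite ℤ A] {n : ℕ}
    (hn : (nsmulAddMonoidHom (α := A) n).range.index ≠ 0) :
    n ^ Module.finrank ℤ A ≤ (nsmulAddMonoidHom (α := A) n).range.index := by
  let T := Submodule.torsion ℤ A
  have hmap : (nsmulAddMonoidHom (α := A) n).range.map (T.mkQ : A →+ A ⧸ T) =
      (nsmulAddMonoidHom (α := A ⧸ T) n).range := by
    ext z
    simp only [AddSubgroup.mem_map, AddMonoidHom.mem_range, exists_exists_eq_and,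
      nsmulAddMonoidHom_apply, map_nsmul]
    exact (T.mkQ_surjective.exists (p := fun w ↦ n • w = z)).symm
  rw [← finrank_quotient_eq_of_le_torsion (le_refl T), ← AddSubgroup.index_range_nsmul, ← hmap]
  exact Nat.le_of_dvd (Nat.pos_of_ne_zero hn) (AddSubgroup.index_map_dvd _ T.mkQ_surjective)

lemma rank_rat_tensorProduct (A : Type) [AddCommGroup A] [Module.Finite ℤ A] :
    Module.rank ℚ (ℚ ⊗[ℤ] A) = Module.finrank ℤ A := by
  have := (isLocalizedModule_iff_isBaseChange (nonZeroDivisors ℤ) ℚ _).2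
    (TensorProduct.isBaseChange ℤ A ℚ)
  rw [Module.finrank_eq_rank,
    ← IsLocalizedModule.rank_eq (nonZeroDivisors ℤ) le_rfl (TensorProduct.mk ℤ ℚ A 1)]
  exact IsFractionRing.rank_right_eq ℤ ℚ _

end Rank

namespace mordellCurve

section Height

variable {a : ℚ}

lemma eval_addSubMap (s t u : ℚ) :
    (fun i ↦ ((mordellCurve a).addSubMap i).eval ![s, t, u]) =
      ![s ^ 2 - 4 * a * t * u, 2 * t * s + 4 * a * u ^ 2, t ^ 2 - 4 * s * u] := by
  funext i
  fin_cases i <;> simp [WeierstrassCurve.addSubMap, mordellCurve, WeierstrassCurve.b₂,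
    WeierstrassCurve.b₄, WeierstrassCurve.b₆, WeierstrassCurve.b₈]

lemma eval_addSubMap_sym2x_self (ha : a ≠ 0) (P : (mordellCurve a).Point) : ∃ c : ℚ, c ≠ 0 ∧
    (fun i ↦ ((mordellCurve a).addSubMap i).eval (P.sym2x P)) = c • (P + P).sym2x 0 := by
  rcases P with _ | ⟨x, y, h⟩
  · refine ⟨1, one_ne_zero, ?_⟩
    rw [← Point.zero_def, add_zero, Point.sym2x_zero_zero, eval_addSubMap]
    simp
  have hE := eq_of_nonsingular h
  rw [Point.sym2x_some_some, eval_addSubMap]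
  by_cases hy : y = 0
  · subst hy
    have hx : x ≠ 0 := by
      rintro rfl
      exact ha (by linear_combination -hE)
    have hadd : Point.some x 0 h + Point.some x 0 h = 0 :=
      Point.add_of_Y_eq rfl (by rw [negY_eq, neg_zero])
    refine ⟨9 * x ^ 4, by positivity, ?_⟩
    rw [hadd, Point.sym2x_zero_zero]
    ext i
    fin_cases i <;> simp
    · linear_combination 8 * x * hE
    · linear_combination -4 * hE
    · ring
  · obtain ⟨m, x₃, y₃, h₃, hm, hx₃, -, hadd⟩ := exists_some_add_some h h
      (.inr (by simpa [← two_mul] using hy))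
    refine ⟨4 * y ^ 2, by positivity, ?_⟩
    rw [hadd, Point.sym2x_some_zero]
    ext i
    fin_cases i <;> simp
    · linear_combination -4 * y ^ 2 * hx₃ + (-2 * m * y - 3 * x ^ 2) * hm.tangent + 8 * x * hE
    · linear_combination -4 * hE
    · ring

lemma eval_addSubMap_sym2x_some_some {x₁ y₁ x₂ y₂ : ℚ}
    (h₁ : (mordellCurve a).Nonsingular x₁ y₁) (h₂ : (mordellCurve a).Nonsingular x₂ y₂)
    (hne : x₁ ≠ x₂) :
    (fun i ↦ ((mordellCurve a).addSubMap i).eval ((Point.some x₁ y₁ h₁).sym2x (.some x₂ y₂ h₂))) =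
      (x₂ - x₁) ^ 2 • (Point.some x₁ y₁ h₁ + Point.some x₂ y₂ h₂).sym2x
        (Point.some x₁ y₁ h₁ - Point.some x₂ y₂ h₂) := by
  have h₂' : (mordellCurve a).Nonsingular x₂ (-y₂) := by
    simpa only [negY_eq] using (nonsingular_neg ..).2 h₂
  obtain ⟨m, x₃, y₃, h₃, hm, hx₃, -, hadd⟩ := exists_some_add_some h₁ h₂ (.inl hne)
  obtain ⟨n, x₄, y₄, h₄, hn, hx₄, -, hsub⟩ := exists_some_add_some h₁ h₂' (.inl hne)
  have hsub' : Point.some x₁ y₁ h₁ - Point.some x₂ y₂ h₂ = Point.some x₄ y₄ h₄ := by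
    simpa only [sub_eq_add_neg, Point.neg_some, negY_eq] using hsub
  rw [hadd, hsub', Point.sym2x_some_some, Point.sym2x_some_some, eval_addSubMap]
  have E₁ := eq_of_nonsingular h₁
  have E₂ := eq_of_nonsingular h₂
  have e₃ : (x₂ - x₁) ^ 2 * x₃ = (y₂ - y₁) ^ 2 - (x₂ - x₁) ^ 2 * (x₁ + x₂) := by
    rw [hx₃, ← hm.chord]
    ring
  have e₄ : (x₂ - x₁) ^ 2 * x₄ = (y₂ + y₁) ^ 2 - (x₂ - x₁) ^ 2 * (x₁ + x₂) := by
    rw [hx₄, ← neg_sq (y₂ + y₁), neg_add', ← hn.chord]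
    ring
  have hprod : (x₁ * x₂) ^ 2 - 4 * a * (x₁ + x₂) = (x₂ - x₁) ^ 2 * (x₃ * x₄) := by
    refine mul_left_cancel₀ (pow_ne_zero 2 (sub_ne_zero.2 hne.symm)) (Eq.symm ?_)
    calc (x₂ - x₁) ^ 2 * ((x₂ - x₁) ^ 2 * (x₃ * x₄))
      _ = ((x₂ - x₁) ^ 2 * x₃) * ((x₂ - x₁) ^ 2 * x₄) := by ring
      _ = (y₂ ^ 2 - y₁ ^ 2) ^ 2 - 2 * (y₂ ^ 2 + y₁ ^ 2) * ((x₂ - x₁) ^ 2 * (x₁ + x₂)) +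
          ((x₂ - x₁) ^ 2 * (x₁ + x₂)) ^ 2 := by rw [e₃, e₄]; ring
      _ = (x₂ - x₁) ^ 2 * ((x₁ * x₂) ^ 2 - 4 * a * (x₁ + x₂)) := by rw [E₁, E₂]; ring
  ext i
  fin_cases i <;> simp
  · linear_combination hprod
  · linear_combination -e₃ - e₄ - 2 * E₁ - 2 * E₂
  · ring

lemma eval_addSubMap_sym2x (ha : a ≠ 0) (P Q : (mordellCurve a).Point) : ∃ c : ℚ, c ≠ 0 ∧
    (fun i ↦ ((mordellCurve a).addSubMap i).eval (P.sym2x Q)) = c • (P + Q).sym2x (P - Q) := by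
  by_cases hPQ : P = Q ∨ P = -Q
  · rcases hPQ with rfl | rfl
    · rw [sub_self]
      exact eval_addSubMap_sym2x_self ha P
    · rw [neg_add_cancel, ← neg_add', Point.sym2x_comm 0, Point.sym2x_neg_left,
        Point.sym2x_neg_left]
      exact eval_addSubMap_sym2x_self ha Q
  rcases P with _ | ⟨x₁, y₁, h₁⟩ <;> rcases Q with _ | ⟨x₂, y₂, h₂⟩
  · exact absurd (.inl rfl) hPQ
  · refine ⟨1, one_ne_zero, ?_⟩
    rw [← Point.zero_def, zero_add, zero_sub, Point.sym2x_neg_right, one_smul,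
      Point.sym2x_some_some, Point.sym2x_zero_some, eval_addSubMap]
    ext i
    fin_cases i <;> simp <;> ring
  · refine ⟨1, one_ne_zero, ?_⟩
    rw [← Point.zero_def, add_zero, sub_zero, one_smul,
      Point.sym2x_some_some, Point.sym2x_some_zero, eval_addSubMap]
    ext i
    fin_cases i <;> simp <;> ring
  · have hne : x₁ ≠ x₂ := fun hx ↦ hPQ (Point.eq_or_eq_neg_of_xRep_eq_xRep (by simp [hx]))
    exact ⟨(x₂ - x₁) ^ 2, pow_ne_zero 2 (sub_ne_zero.2 hne.symm),
      eval_addSubMap_sym2x_some_some h₁ h₂ hne⟩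

variable (a) in
lemma isElliptic_of_ne_zero (ha : a ≠ 0) : (mordellCurve a).IsElliptic :=
  ⟨by simp [mordellCurve, WeierstrassCurve.Δ, WeierstrassCurve.b₂, WeierstrassCurve.b₄,
    WeierstrassCurve.b₆, WeierstrassCurve.b₈, ha]⟩

lemma exists_abs_logHeight_parallelogram_le (ha : a ≠ 0) :
    ∃ C : ℝ, ∀ P Q : (mordellCurve a).Point,
      |Height.logHeight (P + Q).xRep + Height.logHeight (P - Q).xRep -
        2 * (Height.logHeight P.xRep + Height.logHeight Q.xRep)| ≤ C := by
  have := isElliptic_of_ne_zero a ha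
  obtain ⟨C₁, h₁⟩ :=
    WeierstrassCurve.abs_logHeight_addSubMap_sub_two_mul_logHeight_le (mordellCurve a)
  obtain ⟨C₂, h₂⟩ := Height.abs_logHeight_sym2_sub_le ℚ
  have hsym : ∀ P Q : (mordellCurve a).Point, |Height.logHeight (P.sym2x Q) -
      (Height.logHeight P.xRep + Height.logHeight Q.xRep)| ≤ C₂ := by
    intro P Q
    have hx : ∀ R : (mordellCurve a).Point, ![R.xRep 0, R.xRep 1] = R.xRep :=
      fun R ↦ List.ofFn_inj.1 rfl
    have h := h₂ (a := P.xRep 0) (b := P.xRep 1) (c := Q.xRep 0) (d := Q.xRep 1)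
      (by rw [hx]; exact P.xRep_ne_zero) (by rw [hx]; exact Q.xRep_ne_zero)
    rwa [hx, hx] at h
  refine ⟨C₁ + 3 * C₂, fun P Q ↦ ?_⟩
  obtain ⟨c, hc, hcPQ⟩ := eval_addSubMap_sym2x ha P Q
  have hadd := h₁ (P.sym2x Q)
  rw [hcPQ, Height.logHeight_smul_eq_logHeight _ hc] at hadd
  have hPQ := hsym P Q
  have hPQ' := hsym (P + Q) (P - Q)
  rw [abs_le] at *
  constructor <;> linarith

lemma northcott_logHeight_xRep :
    Northcott fun P : (mordellCurve a).Point ↦ Height.logHeight P.xRep := by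
  refine ⟨fun B ↦ ?_⟩
  have hfin : {x : ℚ | Height.logHeight₁ x ≤ B}.Finite := Northcott.finite_le B
  refine Set.Finite.of_finite_fibers Point.xRep
    (((hfin.image fun x ↦ ![x, 1]).insert ![1, 0]).subset ?_) ?_
  · rintro _ ⟨_ | ⟨x, y, h⟩, hP, rfl⟩
    · exact .inl rfl
    · exact .inr ⟨x, by rwa [Set.mem_ofPred_eq, Height.logHeight₁_eq_logHeight], rfl⟩
  · rintro _ ⟨P, -, rfl⟩
    refine (Set.toFinite {P, -P}).subset ?_
    rintro Q ⟨-, hQ⟩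
    exact Point.eq_or_eq_neg_of_xRep_eq_xRep hQ

theorem fg_of_index_three_nsmul_ne_zero (ha : a ≠ 0)
    (hindex : (nsmulAddMonoidHom (α := (mordellCurve a).Point) 3).range.index ≠ 0) :
    AddGroup.FG (mordellCurve a).Point := by
  obtain ⟨C, hC⟩ := exists_abs_logHeight_parallelogram_le ha
  have := northcott_logHeight_xRep (a := a)
  let h (P : (mordellCurve a).Point) := Height.logHeight P.xRep
  refine AddCommGroup.fg_of_descent (n := 3) (h := h) (a := 2) (b := 9) (c₀ := 3 * C + 2 * h 0)
    (c := fun Q ↦ 2 * h Q + C) (by norm_num) (by norm_num) ⟨hindex⟩ (fun Q P ↦ ?_) fun P ↦ ?_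
  · have hQP := hC (Q + P) Q
    have hnonneg : 0 ≤ h (Q + P + Q) := Height.logHeight_nonneg _
    rw [add_sub_cancel_left, abs_le] at hQP
    linarith [hQP.1]
  · have h₂ := hC P P
    have h₃ := hC (P + P) P
    rw [sub_self, abs_le] at h₂
    rw [add_sub_cancel_right, abs_le] at h₃
    rw [show 3 • P = P + P + P by abel]
    linarith [h₂.1, h₃.1]

end Height

theorem rank_le_of_covers {a : ℤ} (ha : a ≠ 0) (h₁ : ¬IsSquare ((-27 * a : ℤ) : ℚ))
    (h₂ : ¬IsSquare ((729 * a : ℤ) : ℚ)) {S₁ S₂ : Set (BinaryCubicForm ℤ)} (hS₁ : S₁.Finite)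
    (hS₂ : S₂.Finite) (hc₁ : BinaryCubicForm.Covers (-27 * a) S₁)
    (hc₂ : BinaryCubicForm.Covers (729 * a) S₂) :
    ∃ n : ℕ, mwRank (mordellCurve (a : ℚ)) = n ∧ 3 ^ n ≤ (S₁.ncard + 1) * (S₂.ncard + 1) := by
  have ha' : (a : ℚ) ≠ 0 := by exact_mod_cast ha
  have hi₁ := index_isogeny_le (a := a) (by push_cast; ring) h₁ hS₁ hc₁
  have hi₂ := index_isogeny_le (a := -27 * a) (by push_cast; ring) h₂ hS₂ hc₂
  have hi := index_three_nsmul_le hi₁.1 hi₂.1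
  have := fg_of_index_three_nsmul_ne_zero ha' hi.1
  have : Module.Finite ℤ (mordellCurve (a : ℚ)).Point := Module.Finite.iff_addGroup_fg.2 this
  exact ⟨_, rank_rat_tensorProduct _,
    (pow_finrank_le_index _ hi.1).trans (hi.2.trans (Nat.mul_le_mul hi₁.2 hi₂.2))⟩

end mordellCurve

section Reduction

lemma exists_moebius_mem_fd (u : ℝ) {v : ℝ} (hv : 0 < v) :
    ∃ (a b c d : ℤ) (x y : ℝ), a * d - b * c = 1 ∧ |x| ≤ 1 / 2 ∧ 1 ≤ x ^ 2 + y ^ 2 ∧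
      x * (c * u + d) - y * (c * v) = a * u + b ∧ x * (c * v) + y * (c * u + d) = a * v := by
  let τ : UpperHalfPlane := ⟨⟨u, v⟩, hv⟩
  obtain ⟨g, hnorm, hre⟩ := ModularGroup.exists_smul_mem_fd τ
  have hz := UpperHalfPlane.coe_specialLinearGroup_apply g τ
  rw [eq_div_iff (by exact UpperHalfPlane.denom_ne_zero g τ), Complex.ext_iff] at hz
  rw [Complex.normSq_apply, ← sq, ← sq] at hnorm
  exact ⟨g 0 0, g 0 1, g 1 0, g 1 1, _, _, by rw [← Matrix.det_fin_two, g.det_coe], hre, hnorm,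
    by simpa [τ] using hz⟩

/-- The form is `L |x - τ y|²` with `τ = u + v i`, and `τ` is moved to the fundamental domain. -/
lemma exists_int_reduced_quadratic {L M N : ℝ} (hL : 0 < L) (hD : M ^ 2 < 4 * L * N) :
    ∃ α β γ δ : ℤ, α * δ - β * γ = 1 ∧
      |2 * L * α * β + M * (α * δ + β * γ) + 2 * N * γ * δ| ≤ L * α ^ 2 + M * α * γ + N * γ ^ 2 ∧
      L * α ^ 2 + M * α * γ + N * γ ^ 2 ≤ L * β ^ 2 + M * β * δ + N * δ ^ 2 := by
  obtain ⟨u, v, hv, rfl, rfl⟩ :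
      ∃ u v : ℝ, 0 < v ∧ M = -2 * L * u ∧ N = L * (u ^ 2 + v ^ 2) := by
    have hD' : 0 < 4 * L * N - M ^ 2 := sub_pos.2 hD
    refine ⟨-M / (2 * L), √(4 * L * N - M ^ 2) / (2 * L), by positivity, by field_simp, ?_⟩
    rw [div_pow, div_pow, Real.sq_sqrt hD'.le]
    field_simp
    ring
  obtain ⟨a, b, c, d, x, y, hdet, hx, hxy, hre, him⟩ := exists_moebius_mem_fd u hv
  set n : ℝ := L * ((c * u + d) ^ 2 + (c * v) ^ 2)
  have hn : 0 ≤ n := by positivity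
  have hL' : L * (d : ℝ) ^ 2 + -2 * L * u * d * (-c) + L * (u ^ 2 + v ^ 2) * (-c) ^ 2 = n := by
    ring
  have hM' : 2 * L * (d : ℝ) * (-b) + -2 * L * u * (d * a + (-b) * (-c)) +
      2 * (L * (u ^ 2 + v ^ 2)) * (-c) * a = -(2 * x) * n := by
    linear_combination 2 * L * (c * u + d) * hre + 2 * L * (c * v) * him
  have hN' : L * (-b : ℝ) ^ 2 + -2 * L * u * (-b) * a + L * (u ^ 2 + v ^ 2) * a ^ 2 =
      (x ^ 2 + y ^ 2) * n := by
    linear_combination (-L) * (x * (c * u + d) - y * (c * v) + a * u + b) * hre -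
      L * (x * (c * v) + y * (c * u + d) + a * v) * him
  refine ⟨d, -b, -c, a, by linarith, ?_, ?_⟩ <;> push_cast
  · rw [hL', hM', abs_mul, abs_neg, abs_mul, abs_two, abs_of_nonneg hn]
    exact mul_le_of_le_one_left hn (by linarith)
  · rw [hL', hN']
    exact le_mul_of_one_le_left hn hxy

end Reduction

lemma exists_pow_three_eq (x : ℝ) : ∃ y : ℝ, y ^ 3 = x := by
  rcases le_total 0 x with hx | hx
  · exact ⟨_, Real.rpow_inv_natCast_pow hx three_ne_zero⟩
  · exact ⟨-(-x) ^ ((3 : ℕ) : ℝ)⁻¹, by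
      rw [Odd.neg_pow (by decide), Real.rpow_inv_natCast_pow (neg_nonneg.2 hx) three_ne_zero,
        neg_neg]⟩

namespace BinaryCubicForm

section Real

lemma exists_rotation_a_eq_zero (f : BinaryCubicForm ℝ) :
    ∃ θ : ℝ, (f.subst (Real.cos θ) (-Real.sin θ) (Real.sin θ) (Real.cos θ)).a = 0 := by
  have hcont : Continuous fun θ ↦ f.eval (Real.cos θ) (Real.sin θ) := by
    unfold eval
    fun_prop
  have hπ : f.eval (Real.cos Real.pi) (Real.sin Real.pi) =
      -f.eval (Real.cos 0) (Real.sin 0) := by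
    simp [eval, Odd.neg_one_pow (by decide : Odd 3)]
  simp only [subst_a]
  rcases le_total (f.eval (Real.cos 0) (Real.sin 0)) 0 with h | h
  · exact mem_range_of_exists_le_of_exists_ge hcont ⟨_, h⟩ ⟨Real.pi, by rw [hπ]; linarith⟩
  · exact mem_range_of_exists_le_of_exists_ge hcont ⟨Real.pi, by rw [hπ]; linarith⟩ ⟨_, h⟩

/-- The form `x³ + 3 σ x y²`, of discriminant `4 σ³`. Over the reals, every nondegenerate form is
equivalent to one of these, with `σ` of the sign of the discriminant. -/
@[simps]
def normalForm (σ : ℝ) : BinaryCubicForm ℝ := ⟨1, 0, σ, 0⟩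

lemma exists_eq_normalForm_subst_of_a_eq_zero {f : BinaryCubicForm ℝ} (ha : f.a = 0) {σ : ℝ}
    (hσ : 0 < σ * f.disc) : ∃ α β γ δ : ℝ, f = (normalForm σ).subst α β γ δ := by
  have hdisc : f.disc = f.b ^ 2 * (4 * f.b * f.d - 3 * f.c ^ 2) := by
    rw [disc, ha]
    ring
  have hb : f.b ≠ 0 := fun hb ↦ by simp [hdisc, hb] at hσ
  obtain ⟨κ, hκ⟩ := exists_pow_three_eq ((4 * f.b * f.d - 3 * f.c ^ 2) / (4 * f.b))
  rw [eq_div_iff (by positivity)] at hκ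
  have hpos : 0 < σ * κ * f.b := by
    refine pos_of_mul_pos_left (b := 4 * f.b ^ 2 * κ ^ 2) ?_ (by positivity)
    rw [hdisc, ← hκ] at hσ
    linear_combination hσ
  obtain ⟨hσκ, -⟩ := mul_ne_zero_iff.1 hpos.ne'
  obtain ⟨μ, hμ⟩ : ∃ μ : ℝ, σ * κ * μ ^ 2 = f.b := by
    refine ⟨√(f.b / (σ * κ)), ?_⟩
    rw [Real.sq_sqrt, mul_div_cancel₀ _ hσκ]
    rw [← mul_div_mul_left _ _ hσκ]
    exact div_nonneg hpos.le (mul_self_nonneg _)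
  refine ⟨0, κ, μ, μ * (f.c / (2 * f.b)), ?_⟩
  ext <;> simp only [subst, eval, normalForm]
  · rw [ha]
    ring
  · linear_combination -hμ
  · field_simp
    linear_combination -4 * f.b * f.c * hμ
  · field_simp
    linear_combination -2 * f.b ^ 2 * hκ - 6 * f.b * f.c ^ 2 * hμ

lemma exists_eq_normalForm_subst {f : BinaryCubicForm ℝ} {σ : ℝ} (hσ : 0 < σ * f.disc) :
    ∃ α β γ δ : ℝ, f = (normalForm σ).subst α β γ δ := by
  obtain ⟨θ, hθ⟩ := f.exists_rotation_a_eq_zero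
  have hcs := Real.sin_sq_add_cos_sq θ
  obtain ⟨α, β, γ, δ, h⟩ := exists_eq_normalForm_subst_of_a_eq_zero (σ := σ) hθ (by
    rwa [disc_subst, show Real.cos θ * Real.cos θ - -Real.sin θ * Real.sin θ = 1 by
      linear_combination hcs, one_pow, one_mul])
  have hinv := congrArg (subst · (Real.cos θ) (Real.sin θ) (-Real.sin θ) (Real.cos θ)) h
  simp only [subst_subst] at hinv
  refine ⟨_, _, _, _, Eq.trans ?_ hinv⟩
  have h1 : Real.cos θ * Real.cos θ + -Real.sin θ * -Real.sin θ = 1 := by linear_combination hcs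
  have h2 : Real.cos θ * Real.sin θ + -Real.sin θ * Real.cos θ = 0 := by ring
  have h3 : Real.sin θ * Real.cos θ + Real.cos θ * -Real.sin θ = 0 := by ring
  have h4 : Real.sin θ * Real.sin θ + Real.cos θ * Real.cos θ = 1 := by linear_combination hcs
  rw [h1, h2, h3, h4]
  ext <;> simp [eval]

end Real
end BinaryCubicForm

namespace BinaryCubicForm

section Real

lemma det_ne_zero_of_disc_subst_ne_zero {f : BinaryCubicForm ℝ} {α β γ δ : ℝ}
    (h : (f.subst α β γ δ).disc ≠ 0) : α * δ - β * γ ≠ 0 := by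
  rintro h₀
  exact h (by rw [disc_subst, h₀, zero_pow (by decide), zero_mul])

lemma sq_add_sq_pos_of_disc_subst_ne_zero {f : BinaryCubicForm ℝ} {α β γ δ : ℝ}
    (h : (f.subst α β γ δ).disc ≠ 0) : 0 < α ^ 2 + γ ^ 2 := by
  refine lt_of_le_of_ne (by positivity) fun h₀ ↦ det_ne_zero_of_disc_subst_ne_zero h ?_
  have hα : α = 0 := by nlinarith
  have hγ : γ = 0 := by nlinarith
  rw [hα, hγ, zero_mul, mul_zero, sub_zero]

/-- Reduction theory for the positive definite covariant `(α x + β y)² + (γ x + δ y)²`. -/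
lemma exists_int_subst_eq_normalForm_subst {f : BinaryCubicForm ℝ} {σ : ℝ}
    (hσ : 0 < σ * f.disc) : ∃ p q r s : ℤ, p * s - q * r = 1 ∧ ∃ α β γ δ : ℝ,
      f.subst p q r s = (normalForm σ).subst α β γ δ ∧
      |2 * (α * β + γ * δ)| ≤ α ^ 2 + γ ^ 2 ∧ α ^ 2 + γ ^ 2 ≤ β ^ 2 + δ ^ 2 := by
  obtain ⟨α, β, γ, δ, rfl⟩ := exists_eq_normalForm_subst hσ
  have hdisc := right_ne_zero_of_mul hσ.ne'
  have hΔ := det_ne_zero_of_disc_subst_ne_zero hdisc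
  obtain ⟨p, q, r, s, hdet, hM, hN⟩ := exists_int_reduced_quadratic
    (M := 2 * (α * β + γ * δ)) (N := β ^ 2 + δ ^ 2)
    (sq_add_sq_pos_of_disc_subst_ne_zero hdisc) (by nlinarith [sq_pos_of_ne_zero hΔ])
  refine ⟨p, q, r, s, hdet, _, _, _, _, subst_subst .., ?_, ?_⟩
  · convert hM using 1
    · congr 1
      ring
    · ring
  · convert hN using 1 <;> ring

lemma disc_normalForm (σ : ℝ) : (normalForm σ).disc = 4 * σ ^ 3 := by
  simp only [disc, normalForm]
  ring

lemma abs_normalForm_subst_le {σ α β γ δ h : ℝ} (hσ : |σ| ≤ 1) (h₁ : α ^ 2 + γ ^ 2 = h)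
    (h₂ : β ^ 2 + δ ^ 2 = h) :
    |((normalForm σ).subst α β γ δ).a| ≤ 4 * √h ^ 3 ∧
    |((normalForm σ).subst α β γ δ).b| ≤ 4 * √h ^ 3 ∧
    |((normalForm σ).subst α β γ δ).c| ≤ 4 * √h ^ 3 ∧
    |((normalForm σ).subst α β γ δ).d| ≤ 4 * √h ^ 3 := by
  have hα : |α| ≤ √h := Real.abs_le_sqrt (by nlinarith)
  have hβ : |β| ≤ √h := Real.abs_le_sqrt (by nlinarith)
  have hγ : |γ| ≤ √h := Real.abs_le_sqrt (by nlinarith)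
  have hδ : |δ| ≤ √h := Real.abs_le_sqrt (by nlinarith)
  have hmul {x y z : ℝ} (hx : |x| ≤ √h) (hy : |y| ≤ √h) (hz : |z| ≤ √h) :
      |x * y * z| ≤ √h ^ 3 := by
    rw [abs_mul, abs_mul, pow_three']
    gcongr
  have hsum {x y z w : ℝ} (hx : |x| ≤ √h ^ 3) (hy : |y| ≤ √h ^ 3) (hz : |z| ≤ √h ^ 3)
      (hw : |w| ≤ √h ^ 3) : |x + σ * (y + z + w)| ≤ 4 * √h ^ 3 := calc
    _ ≤ |x| + |σ| * |y + z + w| := (abs_add_le _ _).trans_eq (by rw [abs_mul])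
    _ ≤ √h ^ 3 + 1 * (√h ^ 3 + √h ^ 3 + √h ^ 3) := by
      gcongr
      exact (abs_add_three _ _ _).trans (by gcongr)
    _ = 4 * √h ^ 3 := by ring
  refine ⟨?_, ?_, ?_, ?_⟩ <;> simp only [subst, eval, normalForm]
  · convert hsum (hmul hα hα hα) (hmul hα hγ hγ) (hmul hα hγ hγ) (hmul hα hγ hγ) using 2
    ring
  · convert hsum (hmul hα hα hβ) (hmul hβ hγ hγ) (hmul hα hγ hδ) (hmul hα hγ hδ) using 2
    ring
  · convert hsum (hmul hα hβ hβ) (hmul hα hδ hδ) (hmul hβ hγ hδ) (hmul hβ hγ hδ) using 2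
    ring
  · convert hsum (hmul hβ hβ hβ) (hmul hβ hδ hδ) (hmul hβ hδ hδ) (hmul hβ hδ hδ) using 2
    ring

lemma abs_normalForm_neg_one_subst_le {α β γ δ h : ℝ} (h₁ : α ^ 2 + γ ^ 2 = h)
    (h₂ : β ^ 2 + δ ^ 2 = h) :
    |((normalForm (-1)).subst α β γ δ).a * ((normalForm (-1)).subst α β γ δ).d -
      ((normalForm (-1)).subst α β γ δ).b * ((normalForm (-1)).subst α β γ δ).c| ≤
        h ^ 2 * |2 * (α * β + γ * δ)| := by
  have hid : ((normalForm (-1)).subst α β γ δ).a * ((normalForm (-1)).subst α β γ δ).d -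
      ((normalForm (-1)).subst α β γ δ).b * ((normalForm (-1)).subst α β γ δ).c =
        -(α * δ - β * γ) ^ 2 * (2 * (α * β + γ * δ)) := by
    simp only [subst, eval, normalForm]
    ring
  rw [hid, abs_mul]
  gcongr
  rw [abs_neg, abs_sq]
  nlinarith [sq_nonneg (α * β + γ * δ), sq_nonneg h]

lemma abs_normalForm_third_subst_le {α β γ δ h : ℝ} (h₁ : α ^ 2 + γ ^ 2 = h)
    (h₂ : β ^ 2 + δ ^ 2 = h) :
    |((normalForm (1 / 3)).subst α β γ δ).a * ((normalForm (1 / 3)).subst α β γ δ).d -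
      9 * ((normalForm (1 / 3)).subst α β γ δ).b * ((normalForm (1 / 3)).subst α β γ δ).c| ≤
        4 * h ^ 2 * |2 * (α * β + γ * δ)| := by
  have hid : ((normalForm (1 / 3)).subst α β γ δ).a * ((normalForm (1 / 3)).subst α β γ δ).d -
      9 * ((normalForm (1 / 3)).subst α β γ δ).b * ((normalForm (1 / 3)).subst α β γ δ).c =
        -(α ^ 2 * (β ^ 2 + δ ^ 2) + 2 * α * β * (α * β + γ * δ) + β ^ 2 * (α ^ 2 + γ ^ 2)) *
          (2 * (α * β + γ * δ)) := by
    simp only [subst, eval, normalForm]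
    ring
  rw [hid, abs_mul]
  gcongr
  have hS : |α * β + γ * δ| ≤ h := abs_le_of_sq_le_sq (by
    nlinarith [sq_nonneg (α * δ - β * γ)]) (h₁ ▸ by positivity)
  obtain ⟨hS₁, hS₂⟩ := abs_le.1 hS
  rw [abs_neg, h₁, h₂, abs_le]
  constructor
  · nlinarith [mul_nonneg (sq_nonneg (α + β)) (sub_nonneg.2 hS₂)]
  · nlinarith [mul_nonneg (sq_nonneg (α + β)) (sub_nonneg.2 hS₂)]

end Real
end BinaryCubicForm

namespace BinaryCubicForm

/-- A region of `ℝ⁴` containing all the reduced forms of discriminant at most a constant times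
`A ^ 4`. The parameter `t` measures how far the covariant of the form has gone into the cusp, and
`κ` is `1` or `9` according to the sign of the discriminant. -/
def reducedRegion (A : ℝ) : Set (BinaryCubicForm ℝ) :=
  {f | ∃ t ≥ 1, |f.a| * t ^ 3 ≤ A ∧ |f.b| * t ≤ A ∧ |f.c| ≤ A * t ∧ |f.d| ≤ A * t ^ 3 ∧
    ∃ κ, (κ = 1 ∨ κ = 9) ∧ |f.a * f.d - κ * f.b * f.c| * t ^ 2 ≤ A ^ 2}

/-- The integral forms in `reducedRegion A` which do not vanish at `(1, 0)`. -/
def reducedForms (A : ℝ) : Set (BinaryCubicForm ℤ) :=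
  {f | f.a ≠ 0 ∧ f.map (Int.castRingHom ℝ) ∈ reducedRegion A}

section Real

variable {σ α β γ δ h Λ : ℝ}

lemma pow_three_le_of_abs_disc_normalForm_subst_le (hσ : 1 / 3 ≤ |σ|)
    (h₁ : α ^ 2 + γ ^ 2 = h) (h₂ : β ^ 2 + δ ^ 2 = h) (hM : |2 * (α * β + γ * δ)| ≤ h)
    (hdisc : |((normalForm σ).subst α β γ δ).disc| ≤ 4 * Λ ^ 4) : h ^ 3 ≤ 8 * Λ ^ 2 := by
  have hΔ : 3 * h ^ 2 ≤ 4 * (α * δ - β * γ) ^ 2 := by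
    have hsq : (2 * (α * β + γ * δ)) ^ 2 ≤ h ^ 2 := sq_le_sq.2 (hM.trans (le_abs_self h))
    have hlagrange : (α * δ - β * γ) ^ 2 + (α * β + γ * δ) ^ 2 = h ^ 2 := by
      rw [sq h]
      nth_rw 1 [← h₁]
      rw [← h₂]
      ring
    linarith
  have hdisc' : (α * δ - β * γ) ^ 6 * |σ| ^ 3 ≤ Λ ^ 4 := by
    rw [disc_subst, disc_normalForm, abs_mul, abs_mul, abs_pow, abs_pow, Even.pow_abs (by decide),
      abs_of_pos (four_pos (α := ℝ))] at hdisc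
    linarith
  refine abs_le_of_sq_le_sq' (a := h ^ 3) ?_ (by positivity) |>.2
  calc (h ^ 3) ^ 2 = (3 * h ^ 2) ^ 3 / 27 := by ring
    _ ≤ (4 * (α * δ - β * γ) ^ 2) ^ 3 / 27 := by gcongr
    _ = 64 * ((α * δ - β * γ) ^ 6 * (1 / 3) ^ 3) := by ring
    _ ≤ 64 * ((α * δ - β * γ) ^ 6 * |σ| ^ 3) := by gcongr
    _ ≤ 64 * Λ ^ 4 := by gcongr
    _ = (8 * Λ ^ 2) ^ 2 := by ring

lemma exists_abs_normalForm_subst_le (hσ : σ = -1 ∨ σ = 1 / 3)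
    (h₁ : α ^ 2 + γ ^ 2 = h) (h₂ : β ^ 2 + δ ^ 2 = h) : ∃ κ : ℝ, (κ = 1 ∨ κ = 9) ∧
      |((normalForm σ).subst α β γ δ).a * ((normalForm σ).subst α β γ δ).d -
        κ * ((normalForm σ).subst α β γ δ).b * ((normalForm σ).subst α β γ δ).c| ≤
          4 * h ^ 2 * |2 * (α * β + γ * δ)| := by
  rcases hσ with rfl | rfl
  · refine ⟨1, .inl rfl, ?_⟩
    rw [one_mul]
    exact (abs_normalForm_neg_one_subst_le h₁ h₂).trans (by gcongr; nlinarith [sq_nonneg h])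
  · exact ⟨9, .inr rfl, abs_normalForm_third_subst_le h₁ h₂⟩

lemma abs_normalForm_subst_le_of_abs_disc_le (hσ : σ = -1 ∨ σ = 1 / 3) (hΛ : 0 ≤ Λ)
    (h₁ : α ^ 2 + γ ^ 2 = h) (h₂ : β ^ 2 + δ ^ 2 = h) (hM : |2 * (α * β + γ * δ)| ≤ h)
    (hdisc : |((normalForm σ).subst α β γ δ).disc| ≤ 4 * Λ ^ 4) :
    |((normalForm σ).subst α β γ δ).a| ≤ 12 * Λ ∧
    |((normalForm σ).subst α β γ δ).b| ≤ 12 * Λ ∧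
    |((normalForm σ).subst α β γ δ).c| ≤ 12 * Λ ∧
    |((normalForm σ).subst α β γ δ).d| ≤ 12 * Λ := by
  have hh : 0 ≤ h := (abs_nonneg _).trans hM
  have hσ₁ : |σ| ≤ 1 := by rcases hσ with rfl | rfl <;> norm_num [abs_of_pos]
  have hσ₃ : 1 / 3 ≤ |σ| := by rcases hσ with rfl | rfl <;> norm_num [abs_of_pos]
  have hpow := pow_three_le_of_abs_disc_normalForm_subst_le hσ₃ h₁ h₂ hM hdisc
  have hsqrt : √h ^ 3 ≤ 3 * Λ := abs_le_of_sq_le_sq' (by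
    rw [← pow_mul, mul_comm, pow_mul, Real.sq_sqrt hh]
    nlinarith [sq_nonneg Λ]) (by positivity) |>.2
  have hle : 4 * √h ^ 3 ≤ 12 * Λ := by linarith
  obtain ⟨ha, hb, hc, hd⟩ := abs_normalForm_subst_le hσ₁ h₁ h₂
  exact ⟨ha.trans hle, hb.trans hle, hc.trans hle, hd.trans hle⟩

lemma mem_reducedRegion_of_subst_diag {f : BinaryCubicForm ℝ} {A t κ : ℝ} (ht : 1 ≤ t)
    (hκ : κ = 1 ∨ κ = 9) (ha : |(f.subst t 0 0 t⁻¹).a| ≤ A) (hb : |(f.subst t 0 0 t⁻¹).b| ≤ A)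
    (hc : |(f.subst t 0 0 t⁻¹).c| ≤ A) (hd : |(f.subst t 0 0 t⁻¹).d| ≤ A)
    (hmix : |(f.subst t 0 0 t⁻¹).a * (f.subst t 0 0 t⁻¹).d -
      κ * (f.subst t 0 0 t⁻¹).b * (f.subst t 0 0 t⁻¹).c| * t ^ 2 ≤ A ^ 2) :
    f ∈ reducedRegion A := by
  have ht₀ : 0 < t := one_pos.trans_le ht
  have hdiag : f.subst t 0 0 t⁻¹ = ⟨f.a * t ^ 3, f.b * t, f.c / t, f.d / t ^ 3⟩ := by
    ext <;> simp only [subst, eval] <;> field_simp <;> ring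
  rw [hdiag] at ha hb hc hd hmix
  simp only [abs_mul, abs_div, abs_pow, abs_of_pos ht₀] at ha hb hc hd
  refine ⟨t, ht, ha, hb, (div_le_iff₀ ht₀).1 hc, (div_le_iff₀ (by positivity)).1 hd, κ, hκ, ?_⟩
  convert hmix using 3
  field_simp

/-- Rescaling by `diag(t, t⁻¹)` makes the two diagonal coefficients of the covariant equal. -/
lemma normalForm_subst_mem_reducedRegion (hσ : σ = -1 ∨ σ = 1 / 3) (hΛ : 0 ≤ Λ)
    (hL : 0 < α ^ 2 + γ ^ 2) (hM : |2 * (α * β + γ * δ)| ≤ α ^ 2 + γ ^ 2)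
    (hN : α ^ 2 + γ ^ 2 ≤ β ^ 2 + δ ^ 2)
    (hdisc : |((normalForm σ).subst α β γ δ).disc| ≤ 4 * Λ ^ 4) :
    (normalForm σ).subst α β γ δ ∈ reducedRegion (12 * Λ) := by
  obtain ⟨t, ht, htN⟩ : ∃ t ≥ 1, t ^ 4 * (α ^ 2 + γ ^ 2) = β ^ 2 + δ ^ 2 := by
    refine ⟨√√((β ^ 2 + δ ^ 2) / (α ^ 2 + γ ^ 2)), by simpa using (one_le_div hL).2 hN, ?_⟩
    rw [pow_mul _ 2 2, Real.sq_sqrt (by positivity), Real.sq_sqrt (by positivity),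
      div_mul_cancel₀ _ hL.ne']
  have ht₀ : 0 < t := one_pos.trans_le ht
  obtain ⟨h, hh⟩ : ∃ h, h = t ^ 2 * (α ^ 2 + γ ^ 2) := ⟨_, rfl⟩
  have h₁ : (α * t) ^ 2 + (γ * t) ^ 2 = h := by rw [hh]; ring
  have h₂ : (β * t⁻¹) ^ 2 + (δ * t⁻¹) ^ 2 = h := by
    rw [mul_pow, mul_pow, ← add_mul, ← htN, hh]
    field_simp
  have hMt : |2 * (α * t * (β * t⁻¹) + γ * t * (δ * t⁻¹))| * t ^ 2 ≤ h := by
    rw [show α * t * (β * t⁻¹) + γ * t * (δ * t⁻¹) = α * β + γ * δ by field_simp, hh, mul_comm]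
    gcongr
  have hMh := (le_mul_of_one_le_right (abs_nonneg _) (one_le_pow₀ (n := 2) ht)).trans hMt
  have hdiag : ((normalForm σ).subst α β γ δ).subst t 0 0 t⁻¹ =
      (normalForm σ).subst (α * t) (β * t⁻¹) (γ * t) (δ * t⁻¹) := by
    rw [subst_subst]
    congr 1 <;> ring
  have hdisc' : |((normalForm σ).subst (α * t) (β * t⁻¹) (γ * t) (δ * t⁻¹)).disc| ≤
      4 * Λ ^ 4 := by
    rwa [← hdiag, disc_subst, mul_inv_cancel₀ ht₀.ne', mul_zero, sub_zero, one_pow, one_mul]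
  have hσ₃ : 1 / 3 ≤ |σ| := by rcases hσ with rfl | rfl <;> norm_num [abs_of_pos]
  have hpow := pow_three_le_of_abs_disc_normalForm_subst_le hσ₃ h₁ h₂ hMh hdisc'
  obtain ⟨ha, hb, hc, hd⟩ := abs_normalForm_subst_le_of_abs_disc_le hσ hΛ h₁ h₂ hMh hdisc'
  obtain ⟨κ, hκ, hmix⟩ := exists_abs_normalForm_subst_le hσ h₁ h₂
  rw [← hdiag] at ha hb hc hd hmix
  refine mem_reducedRegion_of_subst_diag ht hκ ha hb hc hd ?_
  calc _ ≤ 4 * h ^ 2 * |2 * (α * t * (β * t⁻¹) + γ * t * (δ * t⁻¹))| * t ^ 2 := by gcongr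
    _ ≤ 4 * h ^ 2 * h := by rw [mul_assoc]; gcongr
    _ ≤ (12 * Λ) ^ 2 := by nlinarith [sq_nonneg Λ]

end Real

theorem covers_reducedForms {b : ℤ} (hb : b ≠ 0) {Λ : ℝ} (hΛ : 0 ≤ Λ) (h : |(b : ℝ)| ≤ Λ ^ 4) :
    Covers b {f ∈ reducedForms (12 * Λ) | f.disc = 4 * b} := by
  intro f hf
  have hdisc : (f.map (Int.castRingHom ℝ)).disc = 4 * b := by
    rw [disc_map, hf]
    simp
  obtain ⟨σ, hσ, hσb⟩ : ∃ σ : ℝ, (σ = -1 ∨ σ = 1 / 3) ∧ 0 < σ * (4 * b) := by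
    rcases hb.lt_or_gt with hneg | hpos
    · have : (b : ℝ) < 0 := mod_cast hneg
      exact ⟨-1, .inl rfl, by linarith⟩
    · exact ⟨1 / 3, .inr rfl, by positivity⟩
  obtain ⟨p, q, r, s, hdet, α, β, γ, δ, hsubst, hM, hN⟩ :=
    exists_int_subst_eq_normalForm_subst (hdisc ▸ hσb)
  have hmap : (f.subst p q r s).map (Int.castRingHom ℝ) = (normalForm σ).subst α β γ δ := by
    rw [map_subst, ← hsubst]
    rfl
  have hdisc' : (f.subst p q r s).disc = 4 * b := by rw [disc_subst, hdet, hf, one_pow, one_mul]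
  refine ⟨p, q, r, s, hdet, or_iff_not_imp_left.2 fun ha ↦ ⟨⟨ha, ?_⟩, hdisc'⟩⟩
  have hdisc_map : ((normalForm σ).subst α β γ δ).disc = 4 * b := by
    rw [← hmap, disc_map, hdisc', eq_intCast, Int.cast_mul, Int.cast_ofNat]
  rw [hmap]
  refine normalForm_subst_mem_reducedRegion hσ hΛ
    (sq_add_sq_pos_of_disc_subst_ne_zero (by rw [hdisc_map]; positivity)) hM hN ?_
  rw [hdisc_map, abs_mul, abs_of_pos four_pos]
  gcongr

end BinaryCubicForm

section LatticePoints

lemma mem_Icc_floor_of_abs_le {r : ℝ} {n : ℤ} (h : |(n : ℝ)| ≤ r) :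
    n ∈ Finset.Icc (-⌊r⌋) ⌊r⌋ := by
  rw [Finset.mem_Icc, ← abs_le, Int.le_floor, Int.cast_abs]
  exact h

lemma card_Icc_floor_le {r : ℝ} (hr : 0 ≤ r) :
    ((Finset.Icc (-⌊r⌋) ⌊r⌋).card : ℝ) ≤ 2 * r + 1 := by
  have hcard : ((Finset.Icc (-⌊r⌋) ⌊r⌋).card : ℤ) = 2 * ⌊r⌋ + 1 := by
    rw [Int.card_Icc_of_le _ _ (by linarith [Int.floor_nonneg.2 hr])]
    ring
  calc ((Finset.Icc (-⌊r⌋) ⌊r⌋).card : ℝ) = 2 * ⌊r⌋ + 1 := mod_cast hcard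
    _ ≤ 2 * r + 1 := by linarith [Int.floor_le r]

lemma card_Icc_floor_erase_zero_le {r : ℝ} (hr : 0 ≤ r) :
    (((Finset.Icc (-⌊r⌋) ⌊r⌋).erase 0).card : ℝ) ≤ 2 * r := by
  have hadd : (((Finset.Icc (-⌊r⌋) ⌊r⌋).erase 0).card : ℝ) + 1 = (Finset.Icc (-⌊r⌋) ⌊r⌋).card :=
    mod_cast Finset.card_erase_add_one (mem_Icc_floor_of_abs_le (by simpa using hr))
  linarith [card_Icc_floor_le hr]

end LatticePoints

namespace BinaryCubicForm

lemma finite_and_ncard_le_of_window {S : Set (BinaryCubicForm ℤ)} {A B C D : ℝ} (hA : 0 ≤ A)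
    (hB : 0 ≤ B) (hC : 0 ≤ C) (hD : 0 ≤ D) (w : ℤ → ℤ → ℤ → ℝ)
    (h : ∀ f ∈ S, f.a ≠ 0 ∧ |(f.a : ℝ)| ≤ A ∧ |(f.b : ℝ)| ≤ B ∧ |(f.c : ℝ)| ≤ C ∧
      w f.a f.b f.c ≤ f.d ∧ f.d ≤ w f.a f.b f.c + D) :
    S.Finite ∧ (S.ncard : ℝ) ≤ 2 * A * ((2 * B + 1) * ((2 * C + 1) * (D + 1))) := by
  classical
  let box : Finset (ℤ × ℤ × ℤ × ℕ) := (Finset.Icc (-⌊A⌋) ⌊A⌋).erase 0 ×ˢ Finset.Icc (-⌊B⌋) ⌊B⌋ ×ˢ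
    Finset.Icc (-⌊C⌋) ⌊C⌋ ×ˢ Finset.range (⌊D⌋₊ + 1)
  let form : ℤ × ℤ × ℤ × ℕ → BinaryCubicForm ℤ := fun x ↦
    ⟨x.1, x.2.1, x.2.2.1, ⌈w x.1 x.2.1 x.2.2.1⌉ + x.2.2.2⟩
  have hsub : S ⊆ box.image form := by
    intro f hf
    obtain ⟨ha₀, ha, hb, hc, hd, hd'⟩ := h f hf
    obtain ⟨n, hn⟩ := Int.eq_ofNat_of_zero_le (sub_nonneg.2 (Int.ceil_le.2 hd))
    have hnD : (n : ℝ) ≤ D := by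
      have hn' : (f.d : ℝ) - ⌈w f.a f.b f.c⌉ = n := mod_cast hn
      linarith [Int.le_ceil (w f.a f.b f.c)]
    refine Finset.mem_image.2 ⟨(f.a, f.b, f.c, n), ?_, ?_⟩
    · simp only [box, Finset.mem_product, Finset.mem_erase, Finset.mem_range, Nat.lt_succ_iff]
      exact ⟨⟨ha₀, mem_Icc_floor_of_abs_le ha⟩, mem_Icc_floor_of_abs_le hb,
        mem_Icc_floor_of_abs_le hc, Nat.le_floor hnD⟩
    · ext <;> simp only [form]
      linarith
  refine ⟨(Finset.finite_toSet _).subset hsub, ?_⟩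
  calc (S.ncard : ℝ) ≤ box.card := by
        refine mod_cast (Set.ncard_le_ncard hsub (Finset.finite_toSet _)).trans ?_
        rw [Set.ncard_coe_finset]
        exact Finset.card_image_le
    _ = ((Finset.Icc (-⌊A⌋) ⌊A⌋).erase 0).card * ((Finset.Icc (-⌊B⌋) ⌊B⌋).card *
          ((Finset.Icc (-⌊C⌋) ⌊C⌋).card * ((⌊D⌋₊ : ℝ) + 1))) := by
        simp only [box, Finset.card_product, Finset.card_range, Nat.cast_mul, Nat.cast_add,
          Nat.cast_one]
    _ ≤ 2 * A * ((2 * B + 1) * ((2 * C + 1) * (D + 1))) := by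
        gcongr
        exacts [card_Icc_floor_erase_zero_le hA, card_Icc_floor_le hB, card_Icc_floor_le hC,
          Nat.floor_le hD]

/-- The part of `reducedForms A` on which the cusp parameter `t` lies in `[T, 2 * T]`. -/
def dyadicForms (A T : ℝ) : Set (BinaryCubicForm ℤ) :=
  {f | f.a ≠ 0 ∧ |(f.a : ℝ)| * T ^ 3 ≤ A ∧ |(f.b : ℝ)| * T ≤ A ∧ |(f.c : ℝ)| ≤ 2 * A * T ∧
    |(f.d : ℝ)| ≤ 8 * A * T ^ 3 ∧
    ∃ κ : ℝ, (κ = 1 ∨ κ = 9) ∧ |(f.a : ℝ) * f.d - κ * f.b * f.c| * T ^ 2 ≤ A ^ 2}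

section Count

variable {A T : ℝ}

lemma pow_three_le_of_mem_dyadicForms (hT : 0 ≤ T) {f : BinaryCubicForm ℤ}
    (hf : f ∈ dyadicForms A T) : T ^ 3 ≤ A := by
  have ha : (1 : ℝ) ≤ |(f.a : ℝ)| := mod_cast Int.one_le_abs hf.1
  exact (le_mul_of_one_le_left (by positivity) ha).trans hf.2.1

lemma dyadicForms_eq_empty (hT : 0 ≤ T) (hTA : A < T ^ 3) : dyadicForms A T = ∅ :=
  Set.eq_empty_iff_forall_notMem.2 fun _ hf ↦
    hTA.not_ge (pow_three_le_of_mem_dyadicForms hT hf)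

lemma one_le_div_of_pow_three_le (hT : 1 ≤ T) (hTA : T ^ 3 ≤ A) : 1 ≤ A / T :=
  (one_le_div (one_pos.trans_le hT)).2 ((le_self_pow₀ hT three_ne_zero).trans hTA)

lemma dyadicForms_small_a_count (hT : 1 ≤ T) (hTA : T ^ 3 ≤ A) :
    {f ∈ dyadicForms A T | |(f.a : ℝ)| * T ^ 4 ≤ A}.Finite ∧
    ({f ∈ dyadicForms A T | |(f.a : ℝ)| * T ^ 4 ≤ A}.ncard : ℝ) ≤ 510 * (A ^ 4 / T) := by
  have hT₀ : 0 < T := one_pos.trans_le hT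
  have hA : 1 ≤ A := (one_le_pow₀ hT).trans hTA
  refine (finite_and_ncard_le_of_window (A := A / T ^ 4) (B := A / T) (C := 2 * A * T)
    (D := 16 * A * T ^ 3) (by positivity) (by positivity) (by positivity) (by positivity)
    (fun _ _ _ ↦ -(8 * A * T ^ 3)) ?_).imp_right fun hcard ↦ hcard.trans ?_
  · rintro f ⟨⟨ha₀, -, hb, hc, hd, -⟩, ha⟩
    obtain ⟨hd₁, hd₂⟩ := abs_le.1 hd
    exact ⟨ha₀, (le_div_iff₀ (by positivity)).2 ha, (le_div_iff₀ hT₀).2 hb, hc, hd₁, by linarith⟩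
  · have hB : 2 * (A / T) + 1 ≤ 3 * (A / T) := by linarith [one_le_div_of_pow_three_le hT hTA]
    have hC : 2 * (2 * A * T) + 1 ≤ 5 * (A * T) := by nlinarith
    have hD : 16 * A * T ^ 3 + 1 ≤ 17 * (A * T ^ 3) := by nlinarith [one_le_pow₀ (n := 3) hT]
    calc _ ≤ 2 * (A / T ^ 4) * (3 * (A / T) * (5 * (A * T) * (17 * (A * T ^ 3)))) := by gcongr
      _ = 510 * (A ^ 4 / T) := by field_simp; ring

lemma abs_sub_div_le_of_large_a {κ a b c d : ℝ} (hT : 0 < T) (hA : 0 < A) (ha : A ≤ |a| * T ^ 4)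
    (hκ : |a * d - κ * b * c| * T ^ 2 ≤ A ^ 2) : |d - κ * b * c / a| ≤ A * T ^ 2 := by
  have ha₀ : a ≠ 0 := by
    rintro rfl
    rw [abs_zero, zero_mul] at ha
    exact ha.not_gt hA
  rw [show a * d - κ * b * c = a * (d - κ * b * c / a) by field_simp, abs_mul] at hκ
  refine le_of_mul_le_mul_left ?_ hA
  calc A * |d - κ * b * c / a| ≤ |a| * T ^ 4 * |d - κ * b * c / a| := by gcongr
    _ = |a| * |d - κ * b * c / a| * T ^ 2 * T ^ 2 := by ring
    _ ≤ A ^ 2 * T ^ 2 := by gcongr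
    _ = A * (A * T ^ 2) := by ring

lemma dyadicForms_large_a_count (κ : ℝ) (hT : 1 ≤ T) (hTA : T ^ 3 ≤ A) :
    {f ∈ dyadicForms A T | A ≤ |(f.a : ℝ)| * T ^ 4 ∧
      |(f.a : ℝ) * f.d - κ * f.b * f.c| * T ^ 2 ≤ A ^ 2}.Finite ∧
    ({f ∈ dyadicForms A T | A ≤ |(f.a : ℝ)| * T ^ 4 ∧
      |(f.a : ℝ) * f.d - κ * f.b * f.c| * T ^ 2 ≤ A ^ 2}.ncard : ℝ) ≤ 90 * (A ^ 4 / T) := by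
  have hT₀ : 0 < T := one_pos.trans_le hT
  have hA : 1 ≤ A := (one_le_pow₀ hT).trans hTA
  refine (finite_and_ncard_le_of_window (A := A / T ^ 3) (B := A / T) (C := 2 * A * T)
    (D := 2 * A * T ^ 2) (by positivity) (by positivity) (by positivity) (by positivity)
    (fun a b c ↦ κ * b * c / a - A * T ^ 2) ?_).imp_right fun hcard ↦ hcard.trans ?_
  · rintro f ⟨⟨ha₀, ha, hb, hc, -, -⟩, ha', hκ⟩
    obtain ⟨hd₁, hd₂⟩ := abs_le.1 (abs_sub_div_le_of_large_a hT₀ (one_pos.trans_le hA) ha' hκ)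
    exact ⟨ha₀, (le_div_iff₀ (by positivity)).2 ha, (le_div_iff₀ hT₀).2 hb, hc, by linarith,
      by linarith⟩
  · have hB : 2 * (A / T) + 1 ≤ 3 * (A / T) := by linarith [one_le_div_of_pow_three_le hT hTA]
    have hC : 2 * (2 * A * T) + 1 ≤ 5 * (A * T) := by nlinarith
    have hD : 2 * A * T ^ 2 + 1 ≤ 3 * (A * T ^ 2) := by nlinarith [one_le_pow₀ (n := 2) hT]
    calc _ ≤ 2 * (A / T ^ 3) * (3 * (A / T) * (5 * (A * T) * (3 * (A * T ^ 2)))) := by gcongr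
      _ = 90 * (A ^ 4 / T) := by field_simp; ring

lemma dyadicForms_count (hT : 1 ≤ T) :
    (dyadicForms A T).Finite ∧ ((dyadicForms A T).ncard : ℝ) ≤ 690 * (A ^ 4 / T) := by
  rcases lt_or_ge A (T ^ 3) with hTA | hTA
  · rw [dyadicForms_eq_empty (by positivity) hTA, Set.ncard_empty, Nat.cast_zero]
    exact ⟨Set.finite_empty, by positivity⟩
  obtain ⟨hfin, hcard⟩ := dyadicForms_small_a_count hT hTA
  obtain ⟨hfin₁, hcard₁⟩ := dyadicForms_large_a_count 1 hT hTA
  obtain ⟨hfin₉, hcard₉⟩ := dyadicForms_large_a_count 9 hT hTA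
  set S := {f ∈ dyadicForms A T | |(f.a : ℝ)| * T ^ 4 ≤ A}
  set L : ℝ → Set (BinaryCubicForm ℤ) := fun κ ↦ {f ∈ dyadicForms A T | A ≤ |(f.a : ℝ)| * T ^ 4 ∧
    |(f.a : ℝ) * f.d - κ * f.b * f.c| * T ^ 2 ≤ A ^ 2}
  have hsub : dyadicForms A T ⊆ S ∪ (L 1 ∪ L 9) := by
    intro f hf
    rcases le_total (|(f.a : ℝ)| * T ^ 4) A with ha | ha
    · exact .inl ⟨hf, ha⟩
    · obtain ⟨κ, rfl | rfl, hκ⟩ := hf.2.2.2.2.2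
      · exact .inr (.inl ⟨hf, ha, hκ⟩)
      · exact .inr (.inr ⟨hf, ha, hκ⟩)
  have hfin' := hfin.union (hfin₁.union hfin₉)
  refine ⟨hfin'.subset hsub, ?_⟩
  calc ((dyadicForms A T).ncard : ℝ) ≤ S.ncard + ((L 1).ncard + (L 9).ncard) := mod_cast
        (Set.ncard_le_ncard hsub hfin').trans ((Set.ncard_union_le _ _).trans
          (by gcongr; exact Set.ncard_union_le _ _))
    _ ≤ 510 * (A ^ 4 / T) + (90 * (A ^ 4 / T) + 90 * (A ^ 4 / T)) := by gcongr
    _ = 690 * (A ^ 4 / T) := by ring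

lemma exists_reducedForms_subset_biUnion_dyadicForms (A : ℝ) :
    ∃ K : ℕ, reducedForms A ⊆ ⋃ k ∈ Finset.range K, dyadicForms A (2 ^ k) := by
  obtain ⟨K, hK⟩ := pow_unbounded_of_one_lt A one_lt_two
  refine ⟨K, ?_⟩
  rintro f ⟨ha₀, t, ht, ha, hb, hc, hd, κ, hκ, hmix⟩
  simp only [map_a, map_b, map_c, map_d, eq_intCast] at ha hb hc hd hmix
  have hA : 0 ≤ A := le_trans (by positivity) hb
  obtain ⟨k, hkt, htk⟩ := exists_nat_pow_near ht one_lt_two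
  have htk' : t ≤ 2 * 2 ^ k := by rw [← pow_succ']; exact htk.le
  have hf : f ∈ dyadicForms A (2 ^ k) := by
    refine ⟨ha₀, le_trans (by gcongr) ha, le_trans (by gcongr) hb, hc.trans ?_, hd.trans ?_, κ, hκ,
      le_trans (by gcongr) hmix⟩
    · calc A * t ≤ A * (2 * 2 ^ k) := by gcongr
        _ = 2 * A * 2 ^ k := by ring
    · calc A * t ^ 3 ≤ A * (2 * 2 ^ k) ^ 3 := by gcongr
        _ = 8 * A * (2 ^ k) ^ 3 := by ring
  have hkA : (2 : ℝ) ^ k < 2 ^ K :=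
    ((le_self_pow₀ (one_le_pow₀ one_le_two) three_ne_zero).trans
      (pow_three_le_of_mem_dyadicForms (by positivity) hf)).trans_lt hK
  exact Set.mem_biUnion (Finset.mem_range.2 ((pow_lt_pow_iff_right₀ one_lt_two).1 hkA)) hf

theorem reducedForms_count (A : ℝ) :
    (reducedForms A).Finite ∧ ((reducedForms A).ncard : ℝ) ≤ 1380 * A ^ 4 := by
  obtain ⟨K, hK⟩ := exists_reducedForms_subset_biUnion_dyadicForms A
  have hpow (k : ℕ) : (1 : ℝ) ≤ 2 ^ k := one_le_pow₀ one_le_two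
  have hfin : (⋃ k ∈ Finset.range K, dyadicForms A (2 ^ k)).Finite :=
    Set.Finite.biUnion (Finset.finite_toSet _) fun k _ ↦ (dyadicForms_count (hpow k)).1
  refine ⟨hfin.subset hK, ?_⟩
  calc ((reducedForms A).ncard : ℝ)
      ≤ ∑ k ∈ Finset.range K, ((dyadicForms A (2 ^ k)).ncard : ℝ) := by
        rw [← Nat.cast_sum, Nat.cast_le]
        exact (Set.ncard_le_ncard hK hfin).trans (Finset.set_ncard_biUnion_le _ _)
    _ ≤ ∑ k ∈ Finset.range K, 690 * A ^ 4 * (1 / 2) ^ k := by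
        refine Finset.sum_le_sum fun k _ ↦ (dyadicForms_count (hpow k)).2.trans_eq ?_
        rw [one_div_pow]
        ring
    _ = 690 * A ^ 4 * ∑ k ∈ Finset.range K, (1 / 2 : ℝ) ^ k := by rw [Finset.mul_sum]
    _ ≤ 690 * A ^ 4 * 2 := by gcongr; exact sum_geometric_two_le K
    _ = 1380 * A ^ 4 := by ring

end Count

end BinaryCubicForm

section SmallPrimes

/-- The sum of the reciprocals of the primes up to `N`; it is the approximate mean value of the
number of prime factors of the positive integers up to `N`. -/
noncomputable def primeReciprocalSum (N : ℕ) : ℝ := ∑ p ∈ N.primesLE, (p : ℝ)⁻¹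

lemma primeReciprocalSum_nonneg (N : ℕ) : 0 ≤ primeReciprocalSum N :=
  Finset.sum_nonneg fun _ _ ↦ by positivity

lemma log_add_one_le_prod_primesLE (N : ℕ) :
    Real.log (N + 1) ≤ ∏ p ∈ N.primesLE, (1 - (p : ℝ)⁻¹)⁻¹ := by
  let f : ℕ →* ℝ := (invMonoidWithZeroHom : ℝ →*₀ ℝ).toMonoidHom.comp (Nat.castRingHom ℝ : ℕ →* ℝ)
  have hf (n : ℕ) : 0 ≤ f n := inv_nonneg.2 (Nat.cast_nonneg n)
  have hlt {p : ℕ} (hp : p.Prime) : ‖f p‖ < 1 := by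
    rw [Real.norm_of_nonneg (hf p)]
    exact inv_lt_one_of_one_lt₀ (Nat.one_lt_cast.2 hp.one_lt)
  have hsum := hasSum_subtype_iff_indicator.1
    (EulerProduct.summable_and_hasSum_smoothNumbers_prod_primesBelow_geometric hlt (N + 1)).2
  calc Real.log (N + 1) ≤ harmonic N := mod_cast log_add_one_le_harmonic N
    _ = ∑ n ∈ Finset.Icc 1 N, f n := by
      rw [harmonic_eq_sum_Icc, Rat.cast_sum]
      exact Finset.sum_congr rfl fun n _ ↦ by rw [Rat.cast_inv, Rat.cast_natCast]; rfl
    _ = ∑ n ∈ Finset.Icc 1 N, ((N + 1).smoothNumbers.indicator f) n := by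
      refine Finset.sum_congr rfl fun n hn ↦ (Set.indicator_of_mem ?_ _).symm
      rw [Finset.mem_Icc] at hn
      exact Nat.mem_smoothNumbers_of_lt (by lia) (by lia)
    _ ≤ ∏ p ∈ N.primesLE, (1 - (p : ℝ)⁻¹)⁻¹ :=
      sum_le_hasSum _ (fun n _ ↦ Set.indicator_nonneg (fun n _ ↦ hf n) n) hsum

lemma log_inv_one_sub_inv_le {x : ℝ} (hx : 2 ≤ x) :
    Real.log (1 - x⁻¹)⁻¹ ≤ x⁻¹ + 2 * (x ^ 2)⁻¹ := by
  have hx₀ : 0 < x := by linarith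
  have hx₁ : 0 < x - 1 := by linarith
  have hinv : (1 - x⁻¹)⁻¹ = x / (x - 1) := by
    rw [← inv_div, sub_div, div_self hx₀.ne', one_div]
  calc Real.log (1 - x⁻¹)⁻¹ ≤ x / (x - 1) - 1 := by
        rw [hinv]
        exact Real.log_le_sub_one_of_pos (by positivity)
    _ = 1 / (x - 1) := by field_simp; ring
    _ ≤ (x + 2) / x ^ 2 := by
        rw [div_le_div_iff₀ hx₁ (by positivity)]
        nlinarith
    _ = x⁻¹ + 2 * (x ^ 2)⁻¹ := by field_simp

lemma sum_primesLE_inv_sq_le (N : ℕ) : ∑ p ∈ N.primesLE, ((p : ℝ) ^ 2)⁻¹ ≤ 1 := by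
  calc ∑ p ∈ N.primesLE, ((p : ℝ) ^ 2)⁻¹ ≤ ∑ p ∈ Finset.Ioo 1 (N + 1), ((p : ℝ) ^ 2)⁻¹ := by
        refine Finset.sum_le_sum_of_subset_of_nonneg (fun p hp ↦ ?_) fun _ _ _ ↦ by positivity
        rw [Nat.mem_primesLE] at hp
        exact Finset.mem_Ioo.2 ⟨hp.2.one_lt, Nat.lt_succ_of_le hp.1⟩
    _ ≤ 2 / ((1 : ℕ) + 1) := sum_Ioo_inv_sq_le 1 (N + 1)
    _ = 1 := by norm_num

lemma log_log_add_one_le_primeReciprocalSum {N : ℕ} (hN : 2 ≤ N) :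
    Real.log (Real.log (N + 1)) ≤ primeReciprocalSum N + 2 := by
  have hN' : (2 : ℝ) ≤ N := mod_cast hN
  have hprime {p : ℕ} (hp : p ∈ N.primesLE) : (2 : ℝ) ≤ p :=
    mod_cast (Nat.mem_primesLE.1 hp).2.two_le
  calc Real.log (Real.log (N + 1)) ≤ Real.log (∏ p ∈ N.primesLE, (1 - (p : ℝ)⁻¹)⁻¹) :=
        Real.log_le_log (Real.log_pos (by linarith)) (log_add_one_le_prod_primesLE N)
    _ = ∑ p ∈ N.primesLE, Real.log (1 - (p : ℝ)⁻¹)⁻¹ := Real.log_prod fun p hp ↦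
        inv_ne_zero (sub_pos.2 (inv_lt_one_of_one_lt₀ (by linarith [hprime hp]))).ne'
    _ ≤ ∑ p ∈ N.primesLE, ((p : ℝ)⁻¹ + 2 * ((p : ℝ) ^ 2)⁻¹) :=
        Finset.sum_le_sum fun p hp ↦ log_inv_one_sub_inv_le (hprime hp)
    _ = primeReciprocalSum N + 2 * ∑ p ∈ N.primesLE, ((p : ℝ) ^ 2)⁻¹ := by
        rw [Finset.sum_add_distrib, Finset.mul_sum, primeReciprocalSum]
    _ ≤ primeReciprocalSum N + 2 := by linarith [sum_primesLE_inv_sq_le N]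

end SmallPrimes

section Turan

variable (N : ℕ)

lemma card_primeFactors_eq_sum_primesLE {n : ℕ} (hn : n ∈ Finset.Ioc 0 N) :
    (n.primeFactors.card : ℝ) = ∑ p ∈ N.primesLE, if p ∣ n then 1 else 0 := by
  rw [Finset.sum_boole]
  congr 2
  ext p
  rw [Finset.mem_Ioc] at hn
  rw [Nat.mem_primeFactors, Finset.mem_filter, Nat.mem_primesLE]
  exact ⟨fun ⟨hp, hdvd, _⟩ ↦ ⟨⟨(Nat.le_of_dvd hn.1 hdvd).trans hn.2, hp⟩, hdvd⟩,
    fun ⟨⟨_, hp⟩, hdvd⟩ ↦ ⟨hp, hdvd, hn.1.ne'⟩⟩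

lemma sum_Ioc_ite_dvd (d : ℕ) :
    ∑ n ∈ Finset.Ioc 0 N, (if d ∣ n then (1 : ℝ) else 0) = (N / d : ℕ) := by
  rw [Finset.sum_boole, Nat.Ioc_filter_dvd_card_eq_div]

lemma card_primesLE_le : (N.primesLE.card : ℝ) ≤ N := by
  have hsub : N.primesLE ⊆ Finset.Ioc 0 N := fun p hp ↦ by
    rw [Nat.mem_primesLE] at hp
    exact Finset.mem_Ioc.2 ⟨hp.2.pos, hp.1⟩
  exact mod_cast (Finset.card_le_card hsub).trans_eq (Nat.card_Ioc 0 N)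

lemma sub_le_sum_card_primeFactors : N * primeReciprocalSum N - N ≤
    ∑ n ∈ Finset.Ioc 0 N, (n.primeFactors.card : ℝ) := by
  have hfloor (p : ℕ) : (N : ℝ) * (p : ℝ)⁻¹ - 1 ≤ (N / p : ℕ) := by
    have := Nat.lt_floor_add_one ((N : ℝ) / p)
    rw [Nat.floor_div_eq_div] at this
    rw [← div_eq_mul_inv]
    linarith
  calc N * primeReciprocalSum N - N
      ≤ N * primeReciprocalSum N - N.primesLE.card := by linarith [card_primesLE_le N]
    _ = ∑ p ∈ N.primesLE, ((N : ℝ) * (p : ℝ)⁻¹ - 1) := by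
        rw [Finset.sum_sub_distrib, ← Finset.mul_sum, Finset.sum_const, nsmul_one,
          primeReciprocalSum]
    _ ≤ ∑ p ∈ N.primesLE, ((N / p : ℕ) : ℝ) := Finset.sum_le_sum fun p _ ↦ hfloor p
    _ = ∑ p ∈ N.primesLE, ∑ n ∈ Finset.Ioc 0 N, (if p ∣ n then (1 : ℝ) else 0) := by
        simp only [sum_Ioc_ite_dvd]
    _ = ∑ n ∈ Finset.Ioc 0 N, (n.primeFactors.card : ℝ) := by
        rw [Finset.sum_comm]
        exact Finset.sum_congr rfl fun n hn ↦ (card_primeFactors_eq_sum_primesLE N hn).symm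

lemma sum_Ioc_ite_dvd_and_dvd_le {p q : ℕ} (hp : p.Prime) (hq : q.Prime) :
    ∑ n ∈ Finset.Ioc 0 N, (if p ∣ n ∧ q ∣ n then (1 : ℝ) else 0) ≤
      N * ((p : ℝ)⁻¹ * (q : ℝ)⁻¹) + if p = q then N * (p : ℝ)⁻¹ else 0 := by
  by_cases hpq : p = q
  · subst hpq
    simp only [and_self, if_true, sum_Ioc_ite_dvd]
    refine Nat.cast_div_le.trans ?_
    rw [div_eq_mul_inv]
    exact le_add_of_nonneg_left (by positivity)
  · have hcop : p.Coprime q := (Nat.coprime_primes hp hq).2 hpq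
    have hdvd (n : ℕ) : p ∣ n ∧ q ∣ n ↔ p * q ∣ n :=
      ⟨fun h ↦ hcop.mul_dvd_of_dvd_of_dvd h.1 h.2,
        fun h ↦ ⟨dvd_of_mul_right_dvd h, dvd_of_mul_left_dvd h⟩⟩
    simp only [hdvd, sum_Ioc_ite_dvd, if_neg hpq, add_zero]
    refine Nat.cast_div_le.trans_eq ?_
    rw [Nat.cast_mul, div_eq_mul_inv, mul_inv]

lemma sum_sq_card_primeFactors_le : ∑ n ∈ Finset.Ioc 0 N, (n.primeFactors.card : ℝ) ^ 2 ≤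
    N * primeReciprocalSum N ^ 2 + N * primeReciprocalSum N := by
  have hsq {n : ℕ} (hn : n ∈ Finset.Ioc 0 N) : (n.primeFactors.card : ℝ) ^ 2 =
      ∑ p ∈ N.primesLE, ∑ q ∈ N.primesLE, if p ∣ n ∧ q ∣ n then 1 else 0 := by
    rw [card_primeFactors_eq_sum_primesLE N hn, sq, Finset.sum_mul_sum]
    simp only [ite_and, ite_mul, one_mul, zero_mul]
  calc ∑ n ∈ Finset.Ioc 0 N, (n.primeFactors.card : ℝ) ^ 2
      = ∑ p ∈ N.primesLE, ∑ q ∈ N.primesLE,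
          ∑ n ∈ Finset.Ioc 0 N, (if p ∣ n ∧ q ∣ n then (1 : ℝ) else 0) := by
        rw [Finset.sum_congr rfl fun n hn ↦ hsq hn, Finset.sum_comm]
        exact Finset.sum_congr rfl fun p _ ↦ Finset.sum_comm
    _ ≤ ∑ p ∈ N.primesLE, ∑ q ∈ N.primesLE,
          (N * ((p : ℝ)⁻¹ * (q : ℝ)⁻¹) + if p = q then N * (p : ℝ)⁻¹ else 0) :=
        Finset.sum_le_sum fun p hp ↦ Finset.sum_le_sum fun q hq ↦
          sum_Ioc_ite_dvd_and_dvd_le N (Nat.mem_primesLE.1 hp).2 (Nat.mem_primesLE.1 hq).2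
    _ = N * primeReciprocalSum N ^ 2 + N * primeReciprocalSum N := by
        simp only [Finset.sum_add_distrib, Finset.sum_ite_eq, ← Finset.mul_sum, ← Finset.sum_mul,
          primeReciprocalSum, sq]
        rw [Finset.sum_ite_mem, Finset.inter_self, ← Finset.mul_sum]

theorem sum_sq_card_primeFactors_sub_le :
    ∑ n ∈ Finset.Ioc 0 N, ((n.primeFactors.card : ℝ) - primeReciprocalSum N) ^ 2 ≤
      3 * N * primeReciprocalSum N := by
  have hexpand : ∑ n ∈ Finset.Ioc 0 N, ((n.primeFactors.card : ℝ) - primeReciprocalSum N) ^ 2 =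
      ∑ n ∈ Finset.Ioc 0 N, (n.primeFactors.card : ℝ) ^ 2 -
        2 * primeReciprocalSum N * ∑ n ∈ Finset.Ioc 0 N, (n.primeFactors.card : ℝ) +
        N * primeReciprocalSum N ^ 2 := by
    simp only [sub_sq, Finset.sum_add_distrib, Finset.sum_sub_distrib, Finset.sum_const,
      Nat.card_Ioc, nsmul_eq_mul, tsub_zero, ← Finset.sum_mul, ← Finset.mul_sum]
    ring
  have hfirst := mul_le_mul_of_nonneg_left (sub_le_sum_card_primeFactors N)
    (mul_nonneg zero_le_two (primeReciprocalSum_nonneg N))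
  linarith [sum_sq_card_primeFactors_le N]

theorem card_filter_card_primeFactors_le (hN : 0 < primeReciprocalSum N) :
    (((Finset.Ioc 0 N).filter fun n ↦
      (n.primeFactors.card : ℝ) ≤ primeReciprocalSum N / 2).card : ℝ) ≤
        12 * (N / primeReciprocalSum N) := by
  set μ := primeReciprocalSum N
  set S := (Finset.Ioc 0 N).filter fun n ↦ (n.primeFactors.card : ℝ) ≤ μ / 2
  have hchebyshev : (S.card : ℝ) * (μ / 2) ^ 2 ≤ 3 * N * μ := calc
    _ = S.card • (μ / 2) ^ 2 := (nsmul_eq_mul _ _).symm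
    _ ≤ ∑ n ∈ S, ((n.primeFactors.card : ℝ) - μ) ^ 2 := by
      refine Finset.card_nsmul_le_sum _ _ _ fun n hn ↦ ?_
      have := (Finset.mem_filter.1 hn).2
      nlinarith
    _ ≤ ∑ n ∈ Finset.Ioc 0 N, ((n.primeFactors.card : ℝ) - μ) ^ 2 :=
      Finset.sum_le_sum_of_subset_of_nonneg (Finset.filter_subset _ _) fun _ _ _ ↦ sq_nonneg _
    _ ≤ 3 * N * μ := sum_sq_card_primeFactors_sub_le N
  rw [mul_div_assoc', le_div_iff₀ hN]
  nlinarith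

end Turan

section Counting

/-- The nonzero integers of absolute value at most `X`, over which the curves are counted. -/
noncomputable def nonzeroIntegersUpTo (X : ℝ) : Finset ℤ := (Finset.Icc (-⌊X⌋) ⌊X⌋).erase 0

lemma mem_nonzeroIntegersUpTo {X : ℝ} {a : ℤ} :
    a ∈ nonzeroIntegersUpTo X ↔ a ≠ 0 ∧ |(a : ℝ)| ≤ X := by
  rw [nonzeroIntegersUpTo, Finset.mem_erase, Finset.mem_Icc, ← abs_le, Int.le_floor, Int.cast_abs]

open Classical in
lemma card_filter_le_ncard_fiber_mul_le {ι κ T : Type*} (U : Finset ι) {S : Set T} (hS : S.Finite)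
    (g : T → κ) {φ : ι → κ} (hφ : φ.Injective) (Y : ℝ) :
    ((U.filter fun i ↦ Y ≤ ({x ∈ S | g x = φ i}.ncard : ℝ) + 1).card : ℝ) * Y ≤
      S.ncard + U.card := by
  let fiber : ι → Finset T := fun i ↦ hS.toFinset.filter fun x ↦ g x = φ i
  have hfiber (i : ι) : {x ∈ S | g x = φ i}.ncard = (fiber i).card := by
    rw [← Set.ncard_coe_finset]
    congr 1
    ext x
    simp only [fiber, Set.mem_ofPred_eq, Finset.coe_filter, Set.Finite.mem_toFinset]
  have hdisjoint : (U : Set ι).PairwiseDisjoint fiber := fun i _ j _ hij ↦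
    Finset.disjoint_left.2 fun x hi hj ↦
      hij (hφ ((Finset.mem_filter.1 hi).2.symm.trans (Finset.mem_filter.1 hj).2))
  have hsum : ∑ i ∈ U, (fiber i).card ≤ S.ncard := by
    rw [← Finset.card_biUnion hdisjoint, Set.ncard_eq_toFinset_card S hS]
    exact Finset.card_le_card (Finset.biUnion_subset.2 fun i _ ↦ Finset.filter_subset _ _)
  simp_rw [hfiber]
  set V := U.filter fun i ↦ Y ≤ ((fiber i).card : ℝ) + 1
  calc (V.card : ℝ) * Y = V.card • Y := (nsmul_eq_mul _ _).symm
    _ ≤ ∑ i ∈ V, (((fiber i).card : ℝ) + 1) :=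
      Finset.card_nsmul_le_sum _ _ _ fun i hi ↦ (Finset.mem_filter.1 hi).2
    _ ≤ ∑ i ∈ U, (((fiber i).card : ℝ) + 1) :=
      Finset.sum_le_sum_of_subset_of_nonneg (Finset.filter_subset _ _) fun _ _ _ ↦ by positivity
    _ = ∑ i ∈ U, ((fiber i).card : ℝ) + U.card := by
      rw [Finset.sum_add_distrib, Finset.sum_const, nsmul_one]
    _ ≤ S.ncard + U.card := by
      gcongr
      exact mod_cast hsum

open Classical in
lemma card_filter_isSquare_mul_le {k : ℤ} (hk : k ≠ 0) (X : ℝ) :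
    (((nonzeroIntegersUpTo X).filter fun a ↦ IsSquare ((k * a : ℤ) : ℚ)).card : ℝ) ≤
      √(|k| * X) + 1 := by
  have hsub : ((nonzeroIntegersUpTo X).filter fun a ↦ IsSquare ((k * a : ℤ) : ℚ)) ⊆
      (Finset.range (⌊√(|k| * X)⌋₊ + 1)).image fun m : ℕ ↦ (m : ℤ) ^ 2 / k := by
    intro a ha
    obtain ⟨haX, hsquare⟩ := Finset.mem_filter.1 ha
    obtain ⟨m, hm⟩ := Rat.isSquare_intCast_iff.1 hsquare
    have hm' : (m.natAbs : ℤ) ^ 2 = k * a := by rw [Int.natAbs_sq, hm, sq]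
    refine Finset.mem_image.2 ⟨m.natAbs, ?_, by rw [hm', Int.mul_ediv_cancel_left _ hk]⟩
    rw [Finset.mem_range, Nat.lt_succ_iff]
    refine Nat.le_floor (Real.le_sqrt_of_sq_le ?_)
    calc (m.natAbs : ℝ) ^ 2 = (((m.natAbs : ℤ) ^ 2 : ℤ) : ℝ) := by
          rw [Int.cast_pow, Int.cast_natCast]
      _ = k * a := by rw [hm', Int.cast_mul]
      _ ≤ |(k : ℝ)| * |(a : ℝ)| := (le_abs_self _).trans_eq (abs_mul _ _)
      _ ≤ |k| * X := by
        rw [Int.cast_abs]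
        exact mul_le_mul_of_nonneg_left (mem_nonzeroIntegersUpTo.1 haX).2 (abs_nonneg _)
  calc _ ≤ ((⌊√(|k| * X)⌋₊ + 1 : ℕ) : ℝ) := by
        refine mod_cast (Finset.card_le_card hsub).trans (Finset.card_image_le.trans_eq ?_)
        rw [Finset.card_range]
    _ ≤ √(|k| * X) + 1 := by
        push_cast
        gcongr
        exact Nat.floor_le (Real.sqrt_nonneg _)

lemma card_filter_omega_le {X : ℝ} (hX : 0 ≤ X) (hμ : 0 < primeReciprocalSum ⌊X⌋₊) :
    (((nonzeroIntegersUpTo X).filter fun a ↦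
      (omega a : ℝ) ≤ primeReciprocalSum ⌊X⌋₊ / 2).card : ℝ) ≤
        24 * (X / primeReciprocalSum ⌊X⌋₊) := by
  set μ := primeReciprocalSum ⌊X⌋₊
  set T := (Finset.Ioc 0 ⌊X⌋₊).filter fun n ↦ (n.primeFactors.card : ℝ) ≤ μ / 2
  have hsub : ((nonzeroIntegersUpTo X).filter fun a ↦ (omega a : ℝ) ≤ μ / 2) ⊆
      T.image (fun n : ℕ ↦ (n : ℤ)) ∪ T.image (fun n : ℕ ↦ -(n : ℤ)) := by
    intro a ha
    obtain ⟨haX, homega⟩ := Finset.mem_filter.1 ha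
    obtain ⟨ha₀, haX⟩ := mem_nonzeroIntegersUpTo.1 haX
    have hle : a.natAbs ≤ ⌊X⌋₊ := Nat.le_floor (by rwa [Nat.cast_natAbs, Int.cast_abs])
    have hmem : a.natAbs ∈ T :=
      Finset.mem_filter.2 ⟨Finset.mem_Ioc.2 ⟨Int.natAbs_pos.2 ha₀, hle⟩, homega⟩
    rw [Finset.mem_union, Finset.mem_image, Finset.mem_image]
    exact (Int.natAbs_eq a).imp (fun h ↦ ⟨_, hmem, h.symm⟩) fun h ↦ ⟨_, hmem, h.symm⟩
  have hcard := ((Finset.card_le_card hsub).trans (Finset.card_union_le _ _)).trans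
    (Nat.add_le_add Finset.card_image_le Finset.card_image_le)
  calc _ ≤ (T.card : ℝ) + T.card := mod_cast hcard
    _ ≤ 24 * (⌊X⌋₊ / μ) := by linarith [card_filter_card_primeFactors_le ⌊X⌋₊ hμ]
    _ ≤ 24 * (X / μ) := by
      gcongr
      exact Nat.floor_le hX

end Counting

namespace BinaryCubicForm

/-- The number of reduced forms of discriminant `4 b` in the region of size `A`; for suitable `A`
it bounds the size of a `3`-isogeny Selmer group. -/
noncomputable def reducedFormCount (A : ℝ) (b : ℤ) : ℕ :=
  {f ∈ reducedForms A | f.disc = 4 * b}.ncard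

lemma card_filter_le_reducedFormCount_mul_le {k : ℤ} (hk : k ≠ 0) (A : ℝ) {X : ℝ} (hX : 0 ≤ X)
    (Y : ℝ) :
    (((nonzeroIntegersUpTo X).filter fun a ↦ Y ≤ reducedFormCount A (k * a) + 1).card : ℝ) * Y ≤
      1380 * A ^ 4 + 2 * X := by
  have hinj : Function.Injective fun a : ℤ ↦ 4 * (k * a) := fun a b h ↦
    mul_left_cancel₀ hk (mul_left_cancel₀ four_ne_zero h)
  obtain ⟨hfinite, hcount⟩ := reducedForms_count A
  have hmarkov := card_filter_le_ncard_fiber_mul_le (nonzeroIntegersUpTo X) hfinite disc hinj Y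
  have hcard : ((nonzeroIntegersUpTo X).card : ℝ) ≤ 2 * X := card_Icc_floor_erase_zero_le hX
  unfold reducedFormCount
  convert hmarkov.trans (add_le_add hcount hcard)

end BinaryCubicForm

section RankVersusOmega

open BinaryCubicForm

lemma succ_sq_le_two_mul_three_pow (n : ℕ) : (n + 1) ^ 2 ≤ 2 * 3 ^ n := by
  induction n with
  | zero => norm_num
  | succ n ih =>
    rw [pow_succ 3]
    rcases n.eq_zero_or_pos with rfl | hn
    · norm_num
    · nlinarith

lemma third_le_or_third_le_of_three_pow_le {n : ℕ} {x y z : ℝ} (hx : 0 ≤ x) (hz : 0 < z)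
    (hn : z / 2 ≤ n + 1) (h : 3 ^ n ≤ x * y) : z / 3 ≤ x ∨ z / 3 ≤ y := by
  by_contra! hlt
  have hpow : ((n : ℝ) + 1) ^ 2 ≤ 2 * 3 ^ n := mod_cast succ_sq_le_two_mul_three_pow n
  have hxy : x * y ≤ z / 3 * (z / 3) := mul_le_mul_of_nonneg hlt.1.le hlt.2.le hx (by positivity)
  have hsq : (z / 2) ^ 2 ≤ ((n : ℝ) + 1) ^ 2 := by gcongr
  nlinarith

/-- The integers `a` with `0 < |a| ≤ X` for which the rank of `y² = x³ + a` exceeds `ω(a) - M`,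
with truncated subtraction. -/
def largeRank (M : ℕ) (X : ℝ) : Set ℤ :=
  {a : ℤ | 0 < |a| ∧ (|a| : ℝ) ≤ X ∧ ((omega a - M : ℕ) : Cardinal) < mwRank (Ea a)}

lemma mem_nonzeroIntegersUpTo_of_mem_largeRank {M : ℕ} {X : ℝ} {a : ℤ} (ha : a ∈ largeRank M X) :
    a ∈ nonzeroIntegersUpTo X :=
  mem_nonzeroIntegersUpTo.2 ⟨abs_pos.1 ha.1, ha.2.1⟩

lemma ncard_largeRank_le_two_mul (M : ℕ) {X : ℝ} (hX : 0 ≤ X) :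
    ((largeRank M X).ncard : ℝ) ≤ 2 * X := by
  have hsub : largeRank M X ⊆ nonzeroIntegersUpTo X := fun _ ↦
    mem_nonzeroIntegersUpTo_of_mem_largeRank
  have hcard := Set.ncard_le_ncard hsub (Finset.finite_toSet _)
  rw [Set.ncard_coe_finset] at hcard
  exact (Nat.cast_le.2 hcard).trans (card_Icc_floor_erase_zero_le hX)

lemma third_le_reducedFormCount_of_mem_largeRank {M : ℕ} {X Λ μ : ℝ} {a : ℤ}
    (ha : a ∈ largeRank M X) (hΛ : 0 ≤ Λ) (hX : 729 * X ≤ Λ ^ 4) (hμ : 0 < μ)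
    (h₁ : ¬IsSquare ((-27 * a : ℤ) : ℚ)) (h₂ : ¬IsSquare ((729 * a : ℤ) : ℚ))
    (homega : μ / 2 < omega a) :
    μ / (M + 1) / 3 ≤ reducedFormCount (12 * Λ) (-27 * a) + 1 ∨
      μ / (M + 1) / 3 ≤ reducedFormCount (12 * Λ) (729 * a) + 1 := by
  obtain ⟨ha₀, haX, hrank⟩ := ha
  have ha₀ : a ≠ 0 := abs_pos.1 ha₀
  have hcovers {k : ℤ} (hk₀ : k ≠ 0) (hk : |k| ≤ 729) :
      Covers (k * a) {f ∈ reducedForms (12 * Λ) | f.disc = 4 * (k * a)} := by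
    refine covers_reducedForms (mul_ne_zero hk₀ ha₀) hΛ (le_trans ?_ hX)
    rw [Int.cast_mul, abs_mul]
    have hk' : |(k : ℝ)| ≤ 729 := mod_cast hk
    gcongr
  have hfinite (b : ℤ) : {f ∈ reducedForms (12 * Λ) | f.disc = 4 * b}.Finite :=
    (reducedForms_count (12 * Λ)).1.subset (Set.sep_subset _ _)
  obtain ⟨n, hn, hpow⟩ := mordellCurve.rank_le_of_covers ha₀ h₁ h₂ (hfinite _) (hfinite _)
    (hcovers (by norm_num) (by norm_num)) (hcovers (by norm_num) (by norm_num))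
  have hlt : omega a - M < n := by
    rw [show mwRank (Ea a) = n from hn] at hrank
    exact mod_cast hrank
  have hle : (omega a : ℝ) ≤ n + M := mod_cast (by lia : omega a ≤ n + M)
  refine third_le_or_third_le_of_three_pow_le (n := n) (by positivity) (by positivity) ?_
    (mod_cast hpow)
  rw [div_div, div_le_iff₀ (by positivity)]
  nlinarith [mul_nonneg (Nat.cast_nonneg (α := ℝ) n) (Nat.cast_nonneg (α := ℝ) M)]

open Classical in
lemma ncard_largeRank_le_sum {M : ℕ} {X Λ μ : ℝ} (hΛ : 0 ≤ Λ) (hX : 729 * X ≤ Λ ^ 4)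
    (hμ : 0 < μ) :
    (largeRank M X).ncard ≤
      ((nonzeroIntegersUpTo X).filter fun a ↦ IsSquare ((-27 * a : ℤ) : ℚ)).card +
      ((nonzeroIntegersUpTo X).filter fun a ↦ IsSquare ((729 * a : ℤ) : ℚ)).card +
      ((nonzeroIntegersUpTo X).filter fun a ↦ (omega a : ℝ) ≤ μ / 2).card +
      ((nonzeroIntegersUpTo X).filter fun a ↦
        μ / (M + 1) / 3 ≤ reducedFormCount (12 * Λ) (-27 * a) + 1).card +
      ((nonzeroIntegersUpTo X).filter fun a ↦
        μ / (M + 1) / 3 ≤ reducedFormCount (12 * Λ) (729 * a) + 1).card := by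
  set U := nonzeroIntegersUpTo X
  have hsub : largeRank M X ⊆ ((U.filter (fun a ↦ IsSquare ((-27 * a : ℤ) : ℚ)) ∪
      U.filter (fun a ↦ IsSquare ((729 * a : ℤ) : ℚ)) ∪
      U.filter (fun a ↦ (omega a : ℝ) ≤ μ / 2) ∪
      U.filter (fun a ↦ μ / (M + 1) / 3 ≤ reducedFormCount (12 * Λ) (-27 * a) + 1) ∪
      U.filter (fun a ↦ μ / (M + 1) / 3 ≤ reducedFormCount (12 * Λ) (729 * a) + 1) :
        Finset ℤ) : Set ℤ) := by
    intro a ha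
    have haU : a ∈ U := mem_nonzeroIntegersUpTo_of_mem_largeRank ha
    by_contra hnot
    simp only [Finset.mem_coe, Finset.mem_union, Finset.mem_filter, haU, true_and, not_or] at hnot
    obtain ⟨⟨⟨⟨h₁, h₂⟩, homega⟩, hcount₁⟩, hcount₂⟩ := hnot
    exact (third_le_reducedFormCount_of_mem_largeRank ha hΛ hX hμ h₁ h₂ (not_le.1 homega)).elim
      hcount₁ hcount₂
  refine (Set.ncard_le_ncard hsub (Finset.finite_toSet _)).trans ?_
  rw [Set.ncard_coe_finset]
  refine (Finset.card_union_le _ _).trans (Nat.add_le_add_right ?_ _)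
  refine (Finset.card_union_le _ _).trans (Nat.add_le_add_right ?_ _)
  exact (Finset.card_union_le _ _).trans (Nat.add_le_add_right (Finset.card_union_le _ _) _)

theorem exists_ncard_largeRank_le (M : ℕ) : ∃ C : ℝ, 8 ≤ C ∧ ∀ X : ℝ, 1 ≤ X →
    0 < primeReciprocalSum ⌊X⌋₊ →
      ((largeRank M X).ncard : ℝ) ≤ C * (X / primeReciprocalSum ⌊X⌋₊) + 56 * √X := by
  let D : ℝ := 1380 * (12 ^ 4 * 729) + 2
  refine ⟨24 + 6 * (M + 1) * D, ?_, fun X hX hμ ↦ ?_⟩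
  · have : 0 ≤ 6 * (M + 1) * D := by positivity
    linarith
  have hX₀ : 0 ≤ X := by linarith
  set μ := primeReciprocalSum ⌊X⌋₊
  obtain ⟨Λ, hΛ, hΛ4⟩ : ∃ Λ : ℝ, 0 ≤ Λ ∧ Λ ^ 4 = 729 * X :=
    ⟨(729 * X) ^ ((4 : ℕ) : ℝ)⁻¹, by positivity,
      Real.rpow_inv_natCast_pow (by positivity) four_ne_zero⟩
  have hlarge {k : ℤ} (hk : k ≠ 0) : (((nonzeroIntegersUpTo X).filter fun a ↦
      μ / (M + 1) / 3 ≤ reducedFormCount (12 * Λ) (k * a) + 1).card : ℝ) ≤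
        3 * (M + 1) * D * (X / μ) := by
    have hmarkov :=
      card_filter_le_reducedFormCount_mul_le hk (12 * Λ) hX₀ (μ / (M + 1) / 3)
    rw [← le_div_iff₀ (by positivity), mul_pow, hΛ4] at hmarkov
    refine hmarkov.trans_eq ?_
    simp only [D]
    field_simp
  have hsquare {k : ℤ} (hk₀ : k ≠ 0) (hk : |k| ≤ 729) :
      (((nonzeroIntegersUpTo X).filter fun a ↦ IsSquare ((k * a : ℤ) : ℚ)).card : ℝ) ≤
        27 * √X + 1 := by
    refine (card_filter_isSquare_mul_le hk₀ X).trans ?_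
    have hk' : ((|k| : ℤ) : ℝ) ≤ 27 ^ 2 := mod_cast (hk.trans_eq (by norm_num) : |k| ≤ 27 ^ 2)
    have hsqrt : 27 * √X = √(27 ^ 2 * X) := by
      rw [Real.sqrt_mul (by norm_num), Real.sqrt_sq (by norm_num)]
    rw [hsqrt]
    gcongr
  have hsum : ((largeRank M X).ncard : ℝ) ≤ _ := Nat.cast_le.2 (ncard_largeRank_le_sum hΛ hΛ4.ge hμ)
  simp only [Nat.cast_add] at hsum
  linarith [hsquare (k := -27) (by norm_num) (by norm_num),
    hsquare (k := 729) (by norm_num) (by norm_num), hlarge (k := -27) (by norm_num),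
    hlarge (k := 729) (by norm_num), card_filter_omega_le hX₀ hμ, Real.one_le_sqrt.2 hX]

end RankVersusOmega

lemma log_log_le_two_mul_sqrt {x : ℝ} (hx : 1 < x) : Real.log (Real.log x) ≤ 2 * √x := by
  have hsqrt : Real.log x = 2 * Real.log √x := by
    rw [Real.log_sqrt (by linarith)]
    ring
  linarith [Real.log_le_sub_one_of_pos (Real.log_pos hx),
    Real.log_le_sub_one_of_pos (Real.sqrt_pos.2 (by linarith : 0 < x))]

lemma one_lt_log_of_three_le {x : ℝ} (hx : 3 ≤ x) : 1 < Real.log x := by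
  rw [Real.lt_log_iff_exp_lt (by linarith)]
  linarith [Real.exp_one_lt_d9]

lemma half_log_log_le_primeReciprocalSum_floor {X : ℝ} (hX : 3 ≤ X)
    (h : 4 ≤ Real.log (Real.log X)) :
    Real.log (Real.log X) / 2 ≤ primeReciprocalSum ⌊X⌋₊ := by
  have hN : 2 ≤ ⌊X⌋₊ := Nat.le_floor (by push_cast; linarith)
  have hmono : Real.log (Real.log X) ≤ Real.log (Real.log (⌊X⌋₊ + 1)) :=
    Real.log_le_log (by linarith [one_lt_log_of_three_le hX])
      (Real.log_le_log (by linarith) (Nat.lt_floor_add_one X).le)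
  linarith [log_log_add_one_le_primeReciprocalSum hN]

theorem typeI_mostly_M_Watkins (M : ℕ) :
    ∃ C : ℝ, 0 < C ∧ ∀ X : ℝ, 3 ≤ X →
      (Set.ncard {a : ℤ | 0 < |a| ∧ (|a| : ℝ) ≤ X ∧
          ((omega a - M : ℕ) : Cardinal) < mwRank (Ea a)} : ℝ) ≤
        C * X / Real.log (Real.log X) := by
  obtain ⟨C, hC, hcount⟩ := exists_ncard_largeRank_le M
  refine ⟨2 * C + 112, by positivity, fun X hX ↦ ?_⟩
  change ((largeRank M X).ncard : ℝ) ≤ _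
  have hl : 0 < Real.log (Real.log X) := Real.log_pos (one_lt_log_of_three_le hX)
  have hsqrt := log_log_le_two_mul_sqrt (x := X) (by linarith)
  set l := Real.log (Real.log X)
  rw [le_div_iff₀ hl]
  rcases le_or_gt 4 l with h4 | h4
  · have hμ : l / 2 ≤ primeReciprocalSum ⌊X⌋₊ := half_log_log_le_primeReciprocalSum_floor hX h4
    have hmain : X / primeReciprocalSum ⌊X⌋₊ ≤ X / (l / 2) := by gcongr
    calc ((largeRank M X).ncard : ℝ) * l ≤ (C * (X / (l / 2)) + 56 * √X) * l := by
          gcongr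
          refine (hcount X (by linarith) (by linarith)).trans ?_
          gcongr
      _ = 2 * C * X + 56 * (√X * l) := by field_simp
      _ ≤ 2 * C * X + 56 * (√X * (2 * √X)) := by gcongr
      _ = (2 * C + 112) * X := by linear_combination 112 * Real.mul_self_sqrt (by linarith : 0 ≤ X)
  · calc ((largeRank M X).ncard : ℝ) * l ≤ 2 * X * 4 := by
          gcongr
          exact ncard_largeRank_le_two_mul M (by linarith)
      _ ≤ (2 * C + 112) * X := by nlinarith
end

section
/- Let M ≥ 1 be an integer and let f ∈ ℤ[t] be a non-constant polynomial that is irreducible over ℚ. Then the number of rational numbers r with h(r) ≤ X, f(r) ≠ 0, and ω(s(f(r))) < M is O_{f,M}(X² / log log X); that is, there is a constant C (depending only on f and M) such that for all X ≥ 16 this count is at most C · X² / log log X. -/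
/-- The squarefree part of a nonzero integer: the product of all primes dividing it to an
odd power. -/
def sqfreePart (n : ℤ) : ℕ :=
  ∏ p ∈ n.natAbs.primeFactors.filter (fun p => Odd (n.natAbs.factorization p)), p

/-- The squarefree part of a nonzero rational `u/v` in lowest terms: the squarefree part of
the integer `u·v`. -/
def sqfreePartRat (x : ℚ) : ℕ := sqfreePart (x.num * (x.den : ℤ))

/-- The height of a rational number `a/b` in lowest terms: `max(|a|, b)`. -/
def ratHeight (r : ℚ) : ℕ := max r.num.natAbs r.den

/-!
The proof is a second-moment (Turán) sieve. If `f` has a simple root modulo a prime `p`, lift it to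
a root `x` modulo `p ^ 2`; then `f r` has `p`-adic valuation exactly `1`, so that `p` divides the
squarefree part of `f r`, as soon as `p` divides `r.num - r.den * x` exactly once. For a fixed
denominator these events have density about `1 / p` among the numerators and are nearly
independent for distinct `p`, so by Chebyshev's inequality the proportion of numerators for which
fewer than `M` of the events occur is `O(1 / ∑ 1 / p)`.

It remains to see that `∑ 1 / p ≫ log log X`, the sum being over the `p ≤ √X` modulo which `f` has a
simple root. Let `K` be generated by a simple root of `f`. The number of ideals of `𝓞 K` of norm at
most `n` is asymptotic to a multiple of `n`, so an Euler product gives `∑ 1 / N(𝔭) ≫ log log n` over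
the primes of norm at most `n`; the primes of degree greater than one contribute `O(1)` and, up to
finitely many exceptions, those of degree one lie above such a `p`.
-/

section EulerProduct

open UniqueFactorizationMonoid

variable {α : Type*} [CommMonoidWithZero α] [UniqueFactorizationMonoid α] [Subsingleton αˣ]

open Classical in
theorem prod_pow_count_factors {T : Finset α} {a : α} (ha : a ≠ 0)
    (haT : ∀ p, Prime p → p ∣ a → p ∈ T) : ∏ p ∈ T, p ^ (factors a).count p = a := by
  have hsub : (factors a).toFinset ⊆ T := fun p hp ↦
    have hp := Multiset.mem_toFinset.1 hp
    haT p (prime_of_factor p hp) (dvd_of_mem_factors hp)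
  calc ∏ p ∈ T, p ^ (factors a).count p
      = ∏ p ∈ (factors a).toFinset, p ^ (factors a).count p := by
        refine (Finset.prod_subset hsub fun p _ hp ↦ ?_).symm
        rw [Multiset.count_eq_zero.2 (Multiset.mem_toFinset.not.1 hp), pow_zero]
    _ = (factors a).prod := (Finset.prod_multiset_count _).symm
    _ = a := associated_iff_eq.1 (factors_prod ha)

theorem sum_map_le_prod_one_sub_map_inv (f : α →* ℝ) {T S : Finset α}
    (hf₀ : ∀ p ∈ T, 0 ≤ f p) (hf₁ : ∀ p ∈ T, f p < 1) (hS₀ : ∀ a ∈ S, a ≠ 0)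
    (hST : ∀ a ∈ S, ∀ p, Prime p → p ∣ a → p ∈ T) :
    ∑ a ∈ S, f a ≤ ∏ p ∈ T, (1 - f p)⁻¹ := by
  classical
  let e (a : α) (p : α) (_ : p ∈ T) : ℕ := (factors a).count p
  have hprod (a) (ha : a ∈ S) : ∏ p ∈ T.attach, p.1 ^ e a p.1 p.2 = a := by
    simp only [e]
    rw [Finset.prod_attach T fun p ↦ p ^ (factors a).count p]
    exact prod_pow_count_factors (hS₀ a ha) (hST a ha)
  have hinj : Set.InjOn e S := fun a ha b hb hab ↦ by rw [← hprod a ha, ← hprod b hb, hab]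
  obtain ⟨E, hE⟩ : ∃ E, ∀ a ∈ S, ∀ p (hp : p ∈ T), e a p hp < E :=
    ⟨(S.sup fun a ↦ T.sup fun p ↦ (factors a).count p) + 1, fun a ha p hp ↦ Nat.lt_succ_of_le <|
      (Finset.le_sup (f := fun p ↦ (factors a).count p) hp).trans
        (Finset.le_sup (f := fun a ↦ T.sup fun p ↦ (factors a).count p) ha)⟩
  calc ∑ a ∈ S, f a
      = ∑ a ∈ S, ∏ p ∈ T.attach, f p.1 ^ e a p.1 p.2 :=
        Finset.sum_congr rfl fun a ha ↦ by
          simpa only [map_prod, map_pow] using (congrArg f (hprod a ha)).symm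
    _ = ∑ g ∈ S.image e, ∏ p ∈ T.attach, f p.1 ^ g p.1 p.2 := by rw [Finset.sum_image hinj]
    _ ≤ ∑ g ∈ T.pi fun _ ↦ Finset.range E, ∏ p ∈ T.attach, f p.1 ^ g p.1 p.2 := by
        refine Finset.sum_le_sum_of_subset_of_nonneg (Finset.image_subset_iff.2 fun a ha ↦ ?_)
          fun g _ _ ↦ Finset.prod_nonneg fun p _ ↦ pow_nonneg (hf₀ p.1 p.2) _
        exact Finset.mem_pi.2 fun p hp ↦ Finset.mem_range.2 (hE a ha p hp)
    _ = ∏ p ∈ T, ∑ k ∈ Finset.range E, f p ^ k := by rw [Finset.prod_sum]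
    _ ≤ ∏ p ∈ T, (1 - f p)⁻¹ := by
        refine Finset.prod_le_prod
          (fun p hp ↦ Finset.sum_nonneg fun k _ ↦ pow_nonneg (hf₀ p hp) k) fun p hp ↦ ?_
        rw [← tsum_geometric_of_lt_one (hf₀ p hp) (hf₁ p hp)]
        exact (summable_geometric_of_lt_one (hf₀ p hp) (hf₁ p hp)).sum_le_tsum _
          fun k _ ↦ pow_nonneg (hf₀ p hp) k

theorem prod_one_sub_inv_le_exp {ι : Type*} {s : Finset ι} {x : ι → ℝ}
    (hx₀ : ∀ i ∈ s, 0 ≤ x i) (hx : ∀ i ∈ s, x i ≤ 1 / 2) :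
    ∏ i ∈ s, (1 - x i)⁻¹ ≤ Real.exp (2 * ∑ i ∈ s, x i) := by
  rw [Finset.mul_sum, Real.exp_sum]
  refine Finset.prod_le_prod (fun i hi ↦ inv_nonneg.2 (by linarith [hx i hi])) fun i hi ↦ ?_
  have h₀ := hx₀ i hi
  have h₁ := hx i hi
  calc (1 - x i)⁻¹ ≤ 2 * x i + 1 := by
        rw [inv_le_iff_one_le_mul₀ (by linarith)]
        nlinarith
    _ ≤ Real.exp (2 * x i) := Real.add_one_le_exp _

end EulerProduct

section DedekindDomain

open Finset

variable {R : Type*} [CommRing R] [IsDedekindDomain R] [Module.Free ℤ R]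

/-- The rational prime below a nonzero prime ideal `P`, encoded as the least prime factor of its
norm; a junk value for other ideals. -/
noncomputable def residueChar (P : Ideal R) : ℕ := (Ideal.absNorm P).minFac

theorem residueChar_dvd_absNorm (P : Ideal R) : residueChar P ∣ Ideal.absNorm P :=
  Nat.minFac_dvd _

variable [Module.Finite ℤ R] {P : Ideal R}

theorem two_le_absNorm (hP : P.IsPrime) (hP₀ : P ≠ ⊥) : 2 ≤ Ideal.absNorm P := by
  have h₀ := Ideal.absNorm_eq_zero_iff.not.2 hP₀
  have h₁ := Ideal.absNorm_eq_one_iff.not.2 hP.ne_top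
  lia

theorem prime_residueChar (hP : P.IsPrime) (hP₀ : P ≠ ⊥) : (residueChar P).Prime :=
  Nat.minFac_prime (by have := two_le_absNorm hP hP₀; lia)

theorem natCast_residueChar_mem (hP : P.IsPrime) (hP₀ : P ≠ ⊥) : (residueChar P : R) ∈ P := by
  have := hP.isMaximal hP₀
  obtain ⟨p, k, hk, hpP, hp, hNP⟩ := P.exists_prime_and_absNorm_eq_pow
  rwa [residueChar, hNP, hp.pow_minFac hk.ne']

theorem absNorm_eq_residueChar_or_sq_le (hP : P.IsPrime) (hP₀ : P ≠ ⊥) :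
    Ideal.absNorm P = residueChar P ∨ residueChar P ^ 2 ≤ Ideal.absNorm P := by
  have := hP.isMaximal hP₀
  obtain ⟨p, k, hk, -, hp, hNP⟩ := P.exists_prime_and_absNorm_eq_pow
  rw [residueChar, hNP, hp.pow_minFac hk.ne']
  obtain rfl | hk : k = 1 ∨ 2 ≤ k := by lia
  · exact Or.inl (pow_one p)
  · exact Or.inr (Nat.pow_le_pow_right hp.pos hk)

theorem card_primes_above_le_finrank {p : ℕ} (hp : p.Prime) {T : Finset (Ideal R)}
    (hT : ∀ P ∈ T, P.IsPrime ∧ P ≠ ⊥ ∧ (p : R) ∈ P ∧ p ≤ Ideal.absNorm P) :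
    #T ≤ Module.finrank ℤ R := by
  have hdvd : ∏ P ∈ T, P ∣ Ideal.span {(p : R)} :=
    prod_primes_dvd _ (fun P hP ↦ Ideal.prime_of_isPrime (hT P hP).2.1 (hT P hP).1)
      fun P hP ↦ Ideal.dvd_span_singleton.2 (hT P hP).2.2.1
  refine (Nat.pow_le_pow_iff_right hp.one_lt).1 ?_
  calc p ^ #T ≤ ∏ P ∈ T, Ideal.absNorm P := pow_card_le_prod _ _ _ fun P hP ↦ (hT P hP).2.2.2
    _ = Ideal.absNorm (∏ P ∈ T, P) := (map_prod _ _ _).symm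
    _ ≤ Ideal.absNorm (Ideal.span {(p : R)}) :=
      Nat.le_of_dvd (by rw [Ideal.absNorm_span_natCast]; exact pow_pos hp.pos _)
        (map_dvd Ideal.absNorm hdvd)
    _ = p ^ Module.finrank ℤ R := Ideal.absNorm_span_natCast p

theorem sum_residueChar_le {S : Finset (Ideal R)} {T : Finset ℕ} {g : ℕ → ℝ}
    (hS : ∀ P ∈ S, P.IsPrime ∧ P ≠ ⊥) (hST : ∀ P ∈ S, residueChar P ∈ T) (hg : ∀ p ∈ T, 0 ≤ g p) :
    ∑ P ∈ S, g (residueChar P) ≤ Module.finrank ℤ R * ∑ p ∈ T, g p := by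
  classical
  rw [← sum_fiberwise_of_maps_to hST, mul_sum]
  refine sum_le_sum fun p hp ↦ ?_
  rw [sum_congr rfl fun P hP ↦ congrArg g (mem_filter.1 hP).2, sum_const, nsmul_eq_mul]
  refine mul_le_mul_of_nonneg_right (Nat.cast_le.2 ?_) (hg p hp)
  obtain hempty | ⟨P, hP⟩ := {P ∈ S | residueChar P = p}.eq_empty_or_nonempty
  · simp [hempty]
  obtain ⟨hPS, rfl⟩ := mem_filter.1 hP
  refine card_primes_above_le_finrank (prime_residueChar (hS P hPS).1 (hS P hPS).2) fun Q hQ ↦ ?_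
  obtain ⟨hQS, hQP⟩ := mem_filter.1 hQ
  obtain ⟨hQ, hQ₀⟩ := hS Q hQS
  rw [← hQP]
  exact ⟨hQ, hQ₀, natCast_residueChar_mem hQ hQ₀, Nat.le_of_dvd
    (Nat.pos_of_ne_zero (Ideal.absNorm_eq_zero_iff.not.2 hQ₀)) (residueChar_dvd_absNorm Q)⟩

end DedekindDomain

section PartialSummation

open Finset

variable {ι : Type*} {s : Finset ι} {N : ι → ℕ} {n : ℕ}

theorem sum_Icc_inv_mul_succ {a : ℕ} (ha : 0 < a) (han : a ≤ n) :
    ∑ m ∈ Icc a n, ((m : ℝ) * (m + 1))⁻¹ = (a : ℝ)⁻¹ - ((n : ℝ) + 1)⁻¹ := by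
  induction n, han using Nat.le_induction with
  | base =>
    have : (0 : ℝ) < a := by exact_mod_cast ha
    rw [Icc_self, sum_singleton]
    field_simp
    ring
  | succ n han ih =>
    rw [sum_Icc_succ_top (by lia), ih]
    push_cast
    field_simp
    ring

theorem sum_card_filter_le_mul_le_sum_inv (hN : ∀ i ∈ s, 0 < N i ∧ N i ≤ n) :
    ∑ m ∈ Icc 1 n, (#{i ∈ s | N i ≤ m} : ℝ) * ((m : ℝ) * (m + 1))⁻¹ ≤ ∑ i ∈ s, (N i : ℝ)⁻¹ := by
  calc ∑ m ∈ Icc 1 n, (#{i ∈ s | N i ≤ m} : ℝ) * ((m : ℝ) * (m + 1))⁻¹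
      = ∑ m ∈ Icc 1 n, ∑ i ∈ s with N i ≤ m, ((m : ℝ) * (m + 1))⁻¹ :=
        sum_congr rfl fun m _ ↦ by rw [sum_const, nsmul_eq_mul]
    _ = ∑ i ∈ s, ∑ m ∈ Icc (N i) n, ((m : ℝ) * (m + 1))⁻¹ :=
        sum_comm' fun m i ↦ by
          simp only [mem_Icc, mem_filter]
          exact ⟨fun h ↦ ⟨⟨h.2.2, h.1.2⟩, h.2.1⟩,
            fun h ↦ ⟨⟨(hN i h.2).1.trans_le h.1.1, h.1.2⟩, h.2, h.1.1⟩⟩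
    _ ≤ ∑ i ∈ s, (N i : ℝ)⁻¹ := sum_le_sum fun i hi ↦ by
        rw [sum_Icc_inv_mul_succ (hN i hi).1 (hN i hi).2]
        exact sub_le_self _ (by positivity)

theorem half_mul_log_le_sum_inv {c : ℝ} (hc : 0 ≤ c) (hN : ∀ i ∈ s, 0 < N i ∧ N i ≤ n)
    (hs : ∀ m ∈ Icc 1 n, c * m ≤ #{i ∈ s | N i ≤ m}) :
    c / 2 * Real.log (n + 1) ≤ ∑ i ∈ s, (N i : ℝ)⁻¹ := by
  calc c / 2 * Real.log (n + 1)
      ≤ c / 2 * ∑ m ∈ Icc 1 n, (m : ℝ)⁻¹ := by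
        have := log_add_one_le_harmonic n
        rw [harmonic_eq_sum_Icc] at this
        push_cast at this
        gcongr
    _ = ∑ m ∈ Icc 1 n, c / 2 * (m : ℝ)⁻¹ := mul_sum _ _ _
    _ ≤ ∑ m ∈ Icc 1 n, (#{i ∈ s | N i ≤ m} : ℝ) * ((m : ℝ) * (m + 1))⁻¹ :=
        sum_le_sum fun m hm ↦ by
          have hm₁ : (1 : ℝ) ≤ m := by exact_mod_cast (mem_Icc.1 hm).1
          calc c / 2 * (m : ℝ)⁻¹ = c * m * (m * (2 * m) : ℝ)⁻¹ := by field_simp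
            _ ≤ c * m * ((m : ℝ) * (m + 1))⁻¹ := by gcongr; linarith
            _ ≤ _ := by gcongr; exact hs m hm
    _ ≤ ∑ i ∈ s, (N i : ℝ)⁻¹ := sum_card_filter_le_mul_le_sum_inv hN

end PartialSummation

section IdealsOfBoundedNorm

open NumberField Finset

variable (K : Type*) [Field K] [NumberField K]

/-- The nonzero integral ideals of the number field `K` of norm at most `n`. -/
noncomputable def idealsOfNormLE (n : ℕ) : Finset (Ideal (𝓞 K)) :=
  open Classical in {I ∈ (Ideal.finite_setOfPred_absNorm_le (S := 𝓞 K) n).toFinset | I ≠ ⊥}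

/-- The nonzero prime ideals of the number field `K` of norm at most `n`. -/
noncomputable def primeIdealsOfNormLE (n : ℕ) : Finset (Ideal (𝓞 K)) :=
  open Classical in {P ∈ idealsOfNormLE K n | P.IsPrime}

variable {K} {n : ℕ} {I P : Ideal (𝓞 K)}

theorem mem_idealsOfNormLE : I ∈ idealsOfNormLE K n ↔ Ideal.absNorm I ≤ n ∧ I ≠ ⊥ := by
  simp [idealsOfNormLE]

theorem mem_primeIdealsOfNormLE :
    P ∈ primeIdealsOfNormLE K n ↔ (Ideal.absNorm P ≤ n ∧ P ≠ ⊥) ∧ P.IsPrime := by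
  simp [primeIdealsOfNormLE, mem_idealsOfNormLE]

theorem filter_idealsOfNormLE {m : ℕ} (hmn : m ≤ n) :
    {I ∈ idealsOfNormLE K n | Ideal.absNorm I ≤ m} = idealsOfNormLE K m := by
  ext I
  simp only [mem_filter, mem_idealsOfNormLE]
  exact ⟨fun h ↦ ⟨h.2, h.1.2⟩, fun h ↦ ⟨⟨h.1.trans hmn, h.2⟩, h.1⟩⟩

variable (K)

theorem exists_mul_le_card_idealsOfNormLE : ∃ c > 0, ∀ n, c * n ≤ (#(idealsOfNormLE K n) : ℝ) := by
  have hcard (n : ℕ) : Nat.card {I : nonZeroDivisors (Ideal (𝓞 K)) //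
      (Ideal.absNorm (I : Ideal (𝓞 K)) : ℝ) ≤ n} = #(idealsOfNormLE K n) :=
    (Nat.card_congr <| Equiv.subtypeSubtypeEquivSubtypeInter (· ∈ nonZeroDivisors (Ideal (𝓞 K)))
      fun I ↦ (Ideal.absNorm I : ℝ) ≤ n).trans <| Nat.subtype_card _ fun I ↦ by
        rw [mem_idealsOfNormLE, mem_nonZeroDivisors_iff_ne_zero, Nat.cast_le, and_comm,
          Submodule.zero_eq_bot]
  have hρ := dedekindZeta_residue_pos K
  rw [dedekindZeta_residue_def] at hρ
  have hlim := ((Ideal.tendsto_norm_le_div_atTop₀ K).comp tendsto_natCast_atTop_atTop).inv₀ hρ.ne'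
  obtain ⟨C, hC⟩ := hlim.bddAbove_range
  refine ⟨(max C 1)⁻¹, by positivity, fun n ↦ ?_⟩
  rcases n.eq_zero_or_pos with rfl | hn
  · simp
  have hpos : 0 < (#(idealsOfNormLE K n) : ℝ) := by
    have htop : ⊤ ∈ idealsOfNormLE K n := by simp [mem_idealsOfNormLE, Nat.one_le_of_lt hn]
    exact_mod_cast card_pos.2 ⟨_, htop⟩
  have hCn : n / (#(idealsOfNormLE K n) : ℝ) ≤ C := by
    rw [← hcard, ← inv_div]
    exact hC ⟨n, rfl⟩
  rw [inv_mul_le_iff₀ (by positivity)]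
  exact ((div_le_iff₀ hpos).1 hCn).trans (by gcongr; exact le_max_left _ _)

theorem exists_mul_log_le_sum_inv_absNorm :
    ∃ c > 0, ∀ n : ℕ, c * Real.log (n + 1) ≤ ∑ I ∈ idealsOfNormLE K n, (Ideal.absNorm I : ℝ)⁻¹ := by
  obtain ⟨c, hc, hcard⟩ := exists_mul_le_card_idealsOfNormLE K
  refine ⟨c / 2, half_pos hc, fun n ↦ half_mul_log_le_sum_inv hc.le (fun I hI ↦ ?_) fun m hm ↦ ?_⟩
  · rw [mem_idealsOfNormLE] at hI
    exact ⟨Nat.pos_of_ne_zero (Ideal.absNorm_eq_zero_iff.not.2 hI.2), hI.1⟩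
  · rw [filter_idealsOfNormLE (mem_Icc.1 hm).2]
    exact hcard m

theorem sum_inv_absNorm_le_exp (n : ℕ) :
    ∑ I ∈ idealsOfNormLE K n, (Ideal.absNorm I : ℝ)⁻¹ ≤
      Real.exp (2 * ∑ P ∈ primeIdealsOfNormLE K n, (Ideal.absNorm P : ℝ)⁻¹) := by
  let invNorm : Ideal (𝓞 K) →*₀ ℝ :=
    invMonoidWithZeroHom.comp ((Nat.castRingHom ℝ).toMonoidWithZeroHom.comp Ideal.absNorm)
  have hle (P) (hP : P ∈ primeIdealsOfNormLE K n) : invNorm P ≤ 1 / 2 := by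
    obtain ⟨⟨-, hP₀⟩, hP⟩ := mem_primeIdealsOfNormLE.1 hP
    rw [one_div]
    exact inv_anti₀ two_pos (Nat.ofNat_le_cast.2 (two_le_absNorm hP hP₀))
  have hnonneg (I) : 0 ≤ invNorm I := inv_nonneg.2 (Nat.cast_nonneg _)
  refine (sum_map_le_prod_one_sub_map_inv (invNorm : Ideal (𝓞 K) →* ℝ)
    (fun P _ ↦ hnonneg P) (fun P hP ↦ (hle P hP).trans_lt one_half_lt_one) (fun I hI ↦ ?_)
    fun I hI P hP hPI ↦ ?_).trans (prod_one_sub_inv_le_exp (fun P _ ↦ hnonneg P) hle)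
  · exact (mem_idealsOfNormLE.1 hI).2
  · obtain ⟨hIn, hI₀⟩ := mem_idealsOfNormLE.1 hI
    refine mem_primeIdealsOfNormLE.2 ⟨⟨?_, hP.ne_zero⟩, Ideal.isPrime_of_prime hP⟩
    exact (Nat.le_of_dvd (Nat.pos_of_ne_zero (Ideal.absNorm_eq_zero_iff.not.2 hI₀))
      (map_dvd Ideal.absNorm hPI)).trans hIn

theorem exists_log_log_le_sum_inv_absNorm_prime : ∃ C : ℝ, ∀ n : ℕ, 1 ≤ n →
    Real.log (Real.log (n + 1)) ≤
      2 * ∑ P ∈ primeIdealsOfNormLE K n, (Ideal.absNorm P : ℝ)⁻¹ + C := by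
  obtain ⟨c, hc, h⟩ := exists_mul_log_le_sum_inv_absNorm K
  refine ⟨-Real.log c, fun n hn ↦ ?_⟩
  have hn₁ : (1 : ℝ) ≤ n := by exact_mod_cast hn
  have hlog : 0 < Real.log (n + 1) := Real.log_pos (by linarith)
  have := (Real.log_le_iff_le_exp (by positivity)).2 ((h n).trans (sum_inv_absNorm_le_exp K n))
  rw [Real.log_mul hc.ne' hlog.ne'] at this
  linarith

end IdealsOfBoundedNorm

section SimpleRoots

open NumberField Finset Polynomial

/-- The polynomial `f` has a simple root modulo `p`. -/
def HasSimpleRootMod (f : ℤ[X]) (p : ℕ) : Prop :=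
  ∃ x : ℤ, (p : ℤ) ∣ f.eval x ∧ ¬ (p : ℤ) ∣ f.derivative.eval x

/-- The primes `p ≤ n` modulo which `f` has a simple root; these are the sieving primes. -/
noncomputable def simpleRootPrimes (f : ℤ[X]) (n : ℕ) : Finset ℕ :=
  open Classical in {p ∈ n.primesLE | HasSimpleRootMod f p}

theorem mem_simpleRootPrimes {f : ℤ[X]} {n p : ℕ} :
    p ∈ simpleRootPrimes f n ↔ (p ≤ n ∧ p.Prime) ∧ HasSimpleRootMod f p := by
  simp [simpleRootPrimes, Nat.mem_primesLE]

theorem hasSimpleRootMod_of_zmod {f : ℤ[X]} {p : ℕ} {y : ZMod p} (hy : aeval y f = 0)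
    (hy' : aeval y f.derivative ≠ 0) : HasSimpleRootMod f p := by
  obtain ⟨x, rfl⟩ := ZMod.intCast_surjective y
  rw [← eq_intCast (algebraMap ℤ (ZMod p)), aeval_algebraMap_apply_eq_algebraMap_eval, eq_intCast,
    ZMod.intCast_zmod_eq_zero_iff_dvd] at hy
  rw [Ne, ← eq_intCast (algebraMap ℤ (ZMod p)), aeval_algebraMap_apply_eq_algebraMap_eval,
    eq_intCast, ZMod.intCast_zmod_eq_zero_iff_dvd] at hy'
  exact ⟨x, hy, hy'⟩

theorem aeval_intCast_mul_scaleRoots {A : Type*} [CommRing A] (g : ℤ[X]) (c : ℤ) (x : A) :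
    aeval (c * x) (g.scaleRoots c) = c ^ g.natDegree * aeval x g := by
  simpa [aeval_def] using scaleRoots_eval₂_mul (p := g) (algebraMap ℤ A) (r := x) c

theorem exists_forall_hasSimpleRootMod {K : Type*} [Field K] [CharZero K] {f : ℤ[X]} {θ : K}
    (hθ : aeval θ f = 0) (hθ' : aeval θ f.derivative ≠ 0) :
    ∃ δ : 𝓞 K, δ ≠ 0 ∧ ∀ (p : ℕ) [Fact p.Prime] (φ : 𝓞 K →+* ZMod p), φ δ ≠ 0 →
      HasSimpleRootMod f p := by
  set l := f.leadingCoeff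
  have hl : (l : K) ≠ 0 := by
    rw [Int.cast_ne_zero, leadingCoeff_ne_zero]
    rintro rfl
    simp at hθ'
  let α : 𝓞 K := ⟨l * θ, zsmul_eq_mul θ l ▸ isIntegral_leadingCoeff_smul f θ hθ⟩
  have hα (g : ℤ[X]) : algebraMap (𝓞 K) K (aeval α (g.scaleRoots l)) =
      l ^ g.natDegree * aeval θ g := by
    rw [← aeval_algebraMap_apply, ← aeval_intCast_mul_scaleRoots]
    rfl
  have hinj := RingOfIntegers.coe_injective (K := K)
  refine ⟨l * aeval α (f.derivative.scaleRoots l), fun h ↦ ?_, fun p _ φ hφ ↦ ?_⟩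
  · have := congrArg (algebraMap (𝓞 K) K) h
    rw [map_mul, hα, map_intCast, map_zero] at this
    exact mul_ne_zero hl (mul_ne_zero (pow_ne_zero _ hl) hθ') this
  · rw [map_mul, map_intCast] at hφ
    have hlp := left_ne_zero_of_mul hφ
    have hφα (g : ℤ[X]) : φ (aeval α (g.scaleRoots l)) =
        l ^ g.natDegree * aeval (φ α / l) g := by
      rw [← aeval_intCast_mul_scaleRoots, mul_div_cancel₀ _ hlp]
      exact (aeval_algHom_apply φ.toIntAlgHom α _).symm
    have hf : aeval α (f.scaleRoots l) = 0 := hinj (by rw [hα, hθ, mul_zero, map_zero])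
    refine hasSimpleRootMod_of_zmod (y := φ α / l) ?_ ?_
    · have := hφα f
      rw [hf, map_zero, zero_eq_mul] at this
      exact this.resolve_left (pow_ne_zero _ hlp)
    · have := right_ne_zero_of_mul hφ
      rw [hφα] at this
      exact right_ne_zero_of_mul this

theorem exists_ringHom_zmod_ker_eq {R : Type*} [CommRing R] [IsDedekindDomain R]
    [Module.Free ℤ R] {P : Ideal R} {p : ℕ} (hp : p.Prime) (hP : Ideal.absNorm P = p) :
    ∃ φ : R →+* ZMod p, RingHom.ker φ = P := by
  have hcard : Nat.card (R ⧸ P) = p := hP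
  have : Finite (R ⧸ P) := Nat.finite_of_card_ne_zero (hcard ▸ hp.ne_zero)
  have := Fintype.ofFinite (R ⧸ P)
  let e := ZMod.ringEquivOfPrime (R ⧸ P) hp (Nat.card_eq_fintype_card.symm.trans hcard)
  refine ⟨(e.symm : (R ⧸ P) →+* ZMod p).comp (Ideal.Quotient.mk P), ?_⟩
  ext x
  simp [RingHom.mem_ker, Ideal.Quotient.eq_zero_iff_mem]

theorem hasSimpleRootMod_residueChar_or {R : Type*} [CommRing R] [IsDedekindDomain R]
    [Module.Free ℤ R] [Module.Finite ℤ R] {f : ℤ[X]} {δ : R}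
    (hδ : ∀ (p : ℕ) [Fact p.Prime] (φ : R →+* ZMod p), φ δ ≠ 0 → HasSimpleRootMod f p)
    {P : Ideal R} (hP : P.IsPrime) (hP₀ : P ≠ ⊥) :
    HasSimpleRootMod f (residueChar P) ∧ Ideal.absNorm P = residueChar P ∨
      residueChar P ∣ Ideal.absNorm (Ideal.span {δ}) ∨ residueChar P ^ 2 ≤ Ideal.absNorm P := by
  have hp := prime_residueChar hP hP₀
  obtain hNP | hNP := absNorm_eq_residueChar_or_sq_le hP hP₀
  · have := Fact.mk hp
    obtain ⟨φ, hφ⟩ := exists_ringHom_zmod_ker_eq hp hNP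
    by_cases hδP : δ ∈ P
    · exact Or.inr <| Or.inl <| (residueChar_dvd_absNorm P).trans <|
        map_dvd Ideal.absNorm (Ideal.dvd_span_singleton.2 hδP)
    · exact Or.inl ⟨hδ _ φ fun h ↦ hδP (hφ ▸ h), hNP⟩
  · exact Or.inr (Or.inr hNP)

open Classical in
theorem inv_absNorm_le {R : Type*} [CommRing R] [IsDedekindDomain R] [Module.Free ℤ R]
    [Module.Finite ℤ R] {f : ℤ[X]} {δ : R}
    (hδ : ∀ (p : ℕ) [Fact p.Prime] (φ : R →+* ZMod p), φ δ ≠ 0 → HasSimpleRootMod f p)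
    {P : Ideal R} (hP : P.IsPrime) (hP₀ : P ≠ ⊥) :
    (Ideal.absNorm P : ℝ)⁻¹ ≤
      (if HasSimpleRootMod f (residueChar P) then (residueChar P : ℝ)⁻¹ else 0) +
        (if residueChar P ∣ Ideal.absNorm (Ideal.span {δ}) then 1 else 0) +
        ((residueChar P : ℝ) ^ 2)⁻¹ := by
  have hN : (Ideal.absNorm P : ℝ)⁻¹ ≤ 1 := Nat.cast_inv_le_one _
  have hpinv : (0 : ℝ) ≤ (residueChar P : ℝ)⁻¹ := by positivity
  have hpsq : (0 : ℝ) ≤ ((residueChar P : ℝ) ^ 2)⁻¹ := by positivity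
  obtain ⟨hroot, hNP⟩ | hpN | hNP := hasSimpleRootMod_residueChar_or hδ hP hP₀
  · rw [if_pos hroot, hNP]
    split_ifs <;> linarith
  · rw [if_pos hpN]
    split_ifs <;> linarith
  · have hp := Nat.cast_pos (α := ℝ).2 (prime_residueChar hP hP₀).pos
    have hinv : (Ideal.absNorm P : ℝ)⁻¹ ≤ ((residueChar P : ℝ) ^ 2)⁻¹ :=
      inv_anti₀ (pow_pos hp 2) (by exact_mod_cast hNP)
    split_ifs <;> linarith

theorem sum_inv_sq_le_two (s : Finset ℕ) : ∑ p ∈ s, ((p : ℝ) ^ 2)⁻¹ ≤ 2 := by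
  have h := hasSum_zeta_two
  simp only [one_div] at h
  have hpi : Real.pi ^ 2 ≤ 3.15 ^ 2 := by gcongr; exact Real.pi_lt_d2.le
  linarith [sum_le_hasSum s (fun _ _ ↦ by positivity) h]

theorem exists_sum_inv_absNorm_prime_le {K : Type*} [Field K] [NumberField K] {f : ℤ[X]} {θ : K}
    (hθ : aeval θ f = 0) (hθ' : aeval θ f.derivative ≠ 0) :
    ∃ C : ℝ, ∀ n, ∑ P ∈ primeIdealsOfNormLE K n, (Ideal.absNorm P : ℝ)⁻¹ ≤
      Module.finrank ℤ (𝓞 K) * ∑ p ∈ simpleRootPrimes f n, (p : ℝ)⁻¹ + C := by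
  classical
  obtain ⟨δ, hδ₀, hδ⟩ := exists_forall_hasSimpleRootMod hθ hθ'
  set B := Ideal.absNorm (Ideal.span {δ})
  have hB : B ≠ 0 := by simpa [B, Ideal.absNorm_eq_zero_iff] using hδ₀
  let g (p : ℕ) : ℝ :=
    (if HasSimpleRootMod f p then (p : ℝ)⁻¹ else 0) + (if p ∣ B then 1 else 0) + ((p : ℝ) ^ 2)⁻¹
  refine ⟨Module.finrank ℤ (𝓞 K) * (#B.divisors + 2), fun n ↦ ?_⟩
  have hprime (P) (hP : P ∈ primeIdealsOfNormLE K n) : P.IsPrime ∧ P ≠ ⊥ :=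
    have h := mem_primeIdealsOfNormLE.1 hP
    ⟨h.2, h.1.2⟩
  have hmaps (P) (hP : P ∈ primeIdealsOfNormLE K n) : residueChar P ∈ n.primesLE := by
    obtain ⟨⟨hPn, hP₀⟩, hP⟩ := mem_primeIdealsOfNormLE.1 hP
    exact Nat.mem_primesLE.2 ⟨(Nat.le_of_dvd (Nat.pos_of_ne_zero (Ideal.absNorm_eq_zero_iff.not.2
      hP₀)) (residueChar_dvd_absNorm P)).trans hPn, prime_residueChar hP hP₀⟩
  have hdvd : ∑ p ∈ n.primesLE, (if p ∣ B then (1 : ℝ) else 0) ≤ #B.divisors := by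
    rw [← sum_filter, sum_const, nsmul_eq_mul, mul_one]
    exact_mod_cast card_le_card fun p hp ↦ Nat.mem_divisors.2 ⟨(mem_filter.1 hp).2, hB⟩
  calc ∑ P ∈ primeIdealsOfNormLE K n, (Ideal.absNorm P : ℝ)⁻¹
      ≤ ∑ P ∈ primeIdealsOfNormLE K n, g (residueChar P) :=
        sum_le_sum fun P hP ↦ inv_absNorm_le hδ (hprime P hP).1 (hprime P hP).2
    _ ≤ Module.finrank ℤ (𝓞 K) * ∑ p ∈ n.primesLE, g p :=
        sum_residueChar_le hprime hmaps fun p _ ↦ by positivity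
    _ ≤ Module.finrank ℤ (𝓞 K) * (∑ p ∈ simpleRootPrimes f n, (p : ℝ)⁻¹ + (#B.divisors + 2)) := by
        rw [simpleRootPrimes, sum_filter, sum_add_distrib, sum_add_distrib, add_assoc]
        gcongr
        exact sum_inv_sq_le_two _
    _ = _ := mul_add _ _ _

theorem exists_log_log_le_sum_inv_simpleRootPrimes {f : ℤ[X]} {z : ℂ} (hz : aeval z f = 0)
    (hz' : aeval z f.derivative ≠ 0) :
    ∃ B D : ℝ, 0 ≤ B ∧ ∀ n : ℕ, 1 ≤ n →
      Real.log (Real.log (n + 1)) ≤ B * ∑ p ∈ simpleRootPrimes f n, (p : ℝ)⁻¹ + D := by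
  have hf : f ≠ 0 := by
    rintro rfl
    simp at hz'
  have halg : IsAlgebraic ℤ z := ⟨f, hf, hz⟩
  have hint : IsIntegral ℚ z := ((IsFractionRing.isAlgebraic_iff ℤ ℚ ℂ).1 halg).isIntegral
  have := IntermediateField.adjoin.finiteDimensional hint
  let K := IntermediateField.adjoin ℚ {z}
  have : NumberField K := ⟨⟩
  let θ : K := IntermediateField.AdjoinSimple.gen ℚ z
  have hθ (g : ℤ[X]) : algebraMap K ℂ (aeval θ g) = aeval z g :=
    (aeval_algebraMap_apply ℂ θ g).symm
  obtain ⟨C, hC⟩ := exists_log_log_le_sum_inv_absNorm_prime K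
  obtain ⟨C', hC'⟩ := exists_sum_inv_absNorm_prime_le (f := f) (θ := θ)
    (by simpa [hz] using hθ f) fun h ↦ hz' (by rw [← hθ, h, map_zero])
  refine ⟨2 * Module.finrank ℤ (𝓞 K), 2 * C' + C, by positivity, fun n hn ↦ ?_⟩
  linarith [hC n hn, hC' n]

end SimpleRoots

section LocalAnalysis

open Polynomial

variable {p : ℕ} {f : ℤ[X]}

theorem HasSimpleRootMod.exists_sq_dvd_eval (hp : p.Prime) (h : HasSimpleRootMod f p) :
    ∃ x : ℤ, (p : ℤ) ^ 2 ∣ f.eval x ∧ ¬ (p : ℤ) ∣ f.derivative.eval x := by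
  obtain ⟨x, ⟨m, hm⟩, hx'⟩ := h
  obtain ⟨a, b, hab⟩ : IsCoprime (f.derivative.eval x) (p : ℤ) :=
    ((Nat.prime_iff_prime_int.1 hp).coprime_iff_not_dvd.2 hx').symm
  refine ⟨x + p * (-(a * m)), ?_, ?_⟩
  · obtain ⟨k, hk⟩ := f.binomExpansion x (p * (-(a * m)))
    refine ⟨m * b + k * (a * m) ^ 2, ?_⟩
    rw [hk, hm]
    linear_combination (-m * p) * hab
  · have hsub := f.derivative.sub_dvd_eval_sub (x + p * (-(a * m))) x
    rw [add_sub_cancel_left] at hsub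
    exact (dvd_iff_dvd_of_dvd_sub ((dvd_mul_right _ _).trans hsub)).not.2 hx'

theorem aeval_mul_den_pow (f : ℤ[X]) (r : ℚ) :
    aeval r f * (r.den : ℚ) ^ f.natDegree = (f.scaleRoots r.den).eval r.num := by
  have h := aeval_intCast_mul_scaleRoots f r.den r
  rw [Int.cast_natCast, Rat.den_mul_eq_num, ← eq_intCast (algebraMap ℤ ℚ),
    aeval_algebraMap_apply_eq_algebraMap_eval, eq_intCast] at h
  rw [h, mul_comm]

variable [Fact p.Prime]

theorem padicValInt_eq_one_iff {a : ℤ} :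
    padicValInt p a = 1 ↔ (p : ℤ) ∣ a ∧ ¬ (p : ℤ) ^ 2 ∣ a := by
  rw [← pow_one (p : ℤ), ← pow_mul, padicValInt_dvd_iff, padicValInt_dvd_iff]
  obtain rfl | ha := eq_or_ne a 0
  · simp
  · simp only [ha, false_or]
    lia

theorem padicValInt_eq_one_congr {a b u : ℤ} (hu : ¬ (p : ℤ) ∣ u)
    (h : (p : ℤ) ^ 2 ∣ b - u * a) : padicValInt p b = 1 ↔ padicValInt p a = 1 := by
  have hp : Prime (p : ℤ) := Nat.prime_iff_prime_int.1 Fact.out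
  rw [padicValInt_eq_one_iff, padicValInt_eq_one_iff, dvd_iff_dvd_of_dvd_sub h,
    dvd_iff_dvd_of_dvd_sub ((dvd_pow_self (p : ℤ) two_ne_zero).trans h), hp.dvd_mul,
    or_iff_right hu]
  exact and_congr_right' (not_congr
    ⟨hp.pow_dvd_of_dvd_mul_left 2 hu, fun hdvd ↦ hdvd.mul_left u⟩)

theorem padicValInt_eval_eq_one {x y : ℤ} (hx : (p : ℤ) ^ 2 ∣ f.eval x)
    (hx' : ¬ (p : ℤ) ∣ f.derivative.eval x) (hxy : padicValInt p (y - x) = 1) :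
    padicValInt p (f.eval y) = 1 := by
  refine (padicValInt_eq_one_congr hx' ?_).2 hxy
  obtain ⟨k, hk⟩ := f.binomExpansion x (y - x)
  rw [add_sub_cancel] at hk
  rw [hk, add_sub_right_comm, add_sub_cancel_right]
  exact dvd_add hx ((pow_dvd_pow_of_dvd (padicValInt_eq_one_iff.1 hxy).1 2).mul_left k)

theorem not_dvd_den_of_dvd_num_sub {r : ℚ} {x : ℤ} (h : (p : ℤ) ∣ r.num - r.den * x) :
    ¬ p ∣ r.den := fun hden ↦ by
  have hnum : (p : ℤ) ∣ r.num :=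
    (dvd_iff_dvd_of_dvd_sub h).2 ((Int.natCast_dvd_natCast.2 hden).mul_right x)
  exact (Fact.out : p.Prime).not_dvd_one
    (r.reduced ▸ Nat.dvd_gcd (Int.natCast_dvd.1 hnum) hden)

theorem padicValRat_aeval_eq_one {r : ℚ} {x : ℤ} (hx : (p : ℤ) ^ 2 ∣ f.eval x)
    (hx' : ¬ (p : ℤ) ∣ f.derivative.eval x) (hr : padicValInt p (r.num - r.den * x) = 1) :
    padicValRat p (aeval r f) = 1 := by
  have hp : p.Prime := Fact.out
  have hden : ¬ p ∣ r.den := not_dvd_den_of_dvd_num_sub (padicValInt_eq_one_iff.1 hr).1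
  have hden' : ¬ (p : ℤ) ∣ r.den := Int.natCast_dvd_natCast.not.2 hden
  -- `y` represents `r` modulo `p ^ 2`
  obtain ⟨y, hy⟩ : ∃ y : ℤ, (p : ℤ) ^ 2 ∣ r.num - r.den * y := by
    obtain ⟨u, v, huv⟩ : IsCoprime (r.den : ℤ) ((p : ℤ) ^ 2) :=
      ((Nat.prime_iff_prime_int.1 hp).coprime_iff_not_dvd.2 hden').symm.pow_right
    exact ⟨u * r.num, v * r.num, by linear_combination (-r.num) * huv⟩
  have hyx : padicValInt p (y - x) = 1 :=
    (padicValInt_eq_one_congr hden' (by convert hy using 1; ring)).1 hr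
  have hpow : ¬ (p : ℤ) ∣ (r.den : ℤ) ^ f.natDegree :=
    mt (Nat.prime_iff_prime_int.1 hp).dvd_of_dvd_pow hden'
  have hF : padicValInt p ((f.scaleRoots r.den).eval r.num) = 1 := by
    refine (padicValInt_eq_one_congr hpow ?_).2 (padicValInt_eval_eq_one hx hx' hyx)
    rw [← scaleRoots_eval_mul]
    exact hy.trans (sub_dvd_eval_sub _ _ _)
  have hF₀ : aeval r f * (r.den : ℚ) ^ f.natDegree ≠ 0 := by
    rw [aeval_mul_den_pow, Int.cast_ne_zero]
    rintro h
    simp [h] at hF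
  have hval := padicValRat.mul (p := p) (left_ne_zero_of_mul hF₀) (right_ne_zero_of_mul hF₀)
  rw [aeval_mul_den_pow, padicValRat.of_int, hF, padicValRat.pow,
    padicValRat.of_nat, padicValNat.eq_zero_of_not_dvd hden] at hval
  simpa using hval.symm

theorem primeFactors_sqfreePart (n : ℤ) : (sqfreePart n).primeFactors =
    n.natAbs.primeFactors.filter fun p ↦ Odd (n.natAbs.factorization p) :=
  Nat.primeFactors_prod fun _ hp ↦ Nat.prime_of_mem_primeFactors (Finset.mem_of_mem_filter _ hp)

theorem mem_primeFactors_sqfreePartRat {x : ℚ} :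
    p ∈ (sqfreePartRat x).primeFactors ↔ Odd (padicValRat p x) := by
  have hp : p.Prime := Fact.out
  obtain rfl | hx := eq_or_ne x 0
  · simp [sqfreePartRat, sqfreePart]
  have hfac : (x.num * x.den).natAbs.factorization p =
      padicValInt p x.num + padicValNat p x.den := by
    rw [Int.natAbs_mul, Int.natAbs_natCast, Nat.factorization_mul
      (Int.natAbs_ne_zero.2 (Rat.num_ne_zero.2 hx)) x.den_ne_zero, Finsupp.add_apply,
      Nat.factorization_def _ hp, Nat.factorization_def _ hp, padicValInt]
  rw [sqfreePartRat, primeFactors_sqfreePart, Finset.mem_filter, ← Nat.support_factorization,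
    Finsupp.mem_support_iff, and_iff_right_of_imp fun h ↦ h.pos.ne', hfac, padicValRat_def,
    Nat.odd_add, Int.odd_sub, Int.odd_coe_nat, Int.even_coe_nat]

end LocalAnalysis

section TuranSieve

open Finset

section Moments

variable {ι κ : Type*} {I : Finset ι} {P : Finset κ} (r : ι → κ → Prop) [DecidableRel r]
  {w e : κ → ℝ}

theorem card_mul_sum_sub_sum_le_sum_card_filter
    (hlower : ∀ p ∈ P, #I * w p - e p ≤ #{x ∈ I | r x p}) :
    #I * ∑ p ∈ P, w p - ∑ p ∈ P, e p ≤ ∑ x ∈ I, (#{p ∈ P | r x p} : ℝ) :=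
  calc #I * ∑ p ∈ P, w p - ∑ p ∈ P, e p
      = ∑ p ∈ P, (#I * w p - e p) := by rw [sum_sub_distrib, mul_sum]
    _ ≤ ∑ p ∈ P, (#{x ∈ I | r x p} : ℝ) := sum_le_sum hlower
    _ = ∑ x ∈ I, (#{p ∈ P | r x p} : ℝ) := by
        exact_mod_cast (sum_card_bipartiteAbove_eq_sum_card_bipartiteBelow r).symm

theorem sum_sq_card_filter_le (hupper : ∀ p ∈ P, #{x ∈ I | r x p} ≤ #I * w p + 1)
    (hpair : ∀ p ∈ P, ∀ q ∈ P, p ≠ q → #{x ∈ I | r x p ∧ r x q} ≤ #I * (w p * w q) + 1) :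
    ∑ x ∈ I, (#{p ∈ P | r x p} : ℝ) ^ 2 ≤
      #I * (∑ p ∈ P, w p) ^ 2 + #I * ∑ p ∈ P, w p + #P ^ 2 := by
  classical
  have hsq (x : ι) : #{p ∈ P | r x p} ^ 2 = #{pq ∈ P ×ˢ P | r x pq.1 ∧ r x pq.2} := by
    rw [filter_product, card_product, sq]
  calc ∑ x ∈ I, (#{p ∈ P | r x p} : ℝ) ^ 2
      = ∑ pq ∈ P ×ˢ P, (#{x ∈ I | r x pq.1 ∧ r x pq.2} : ℝ) := by
        simp only [← Nat.cast_pow, hsq]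
        exact_mod_cast sum_card_bipartiteAbove_eq_sum_card_bipartiteBelow
          fun x (pq : κ × κ) ↦ r x pq.1 ∧ r x pq.2
    _ ≤ ∑ p ∈ P, ∑ q ∈ P, (#I * (w p * w q) + 1 + if p = q then #I * w p else 0) := by
        rw [sum_product]
        refine sum_le_sum fun p hp ↦ sum_le_sum fun q hq ↦ ?_
        obtain rfl | hpq := eq_or_ne p q
        · have hpp : 0 ≤ #I * (w p * w p) := mul_nonneg (Nat.cast_nonneg _) (mul_self_nonneg _)
          simp only [and_self, if_true]
          linarith [hupper p hp]
        · simpa [hpq] using hpair p hp q hq hpq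
    _ = #I * (∑ p ∈ P, w p) ^ 2 + #I * ∑ p ∈ P, w p + #P ^ 2 := by
        simp only [sum_add_distrib, ← mul_sum, sum_ite_eq, sum_const, nsmul_eq_mul, mul_one,
          ← sum_mul, sum_ite_mem, inter_self]
        ring

theorem sum_sq_card_filter_sub_sum_le (hw : ∀ p ∈ P, 0 ≤ w p)
    (hlower : ∀ p ∈ P, #I * w p - e p ≤ #{x ∈ I | r x p})
    (hupper : ∀ p ∈ P, #{x ∈ I | r x p} ≤ #I * w p + 1)
    (hpair : ∀ p ∈ P, ∀ q ∈ P, p ≠ q → #{x ∈ I | r x p ∧ r x q} ≤ #I * (w p * w q) + 1) :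
    ∑ x ∈ I, (#{p ∈ P | r x p} - ∑ p ∈ P, w p) ^ 2 ≤
      #I * ∑ p ∈ P, w p + #P ^ 2 + 2 * (∑ p ∈ P, w p) * ∑ p ∈ P, e p := by
  have hfirst := card_mul_sum_sub_sum_le_sum_card_filter r hlower
  have hsecond := sum_sq_card_filter_le r hupper hpair
  set E := ∑ p ∈ P, w p
  have hE : 0 ≤ E := sum_nonneg hw
  calc ∑ x ∈ I, (#{p ∈ P | r x p} - E) ^ 2
      = ∑ x ∈ I, (#{p ∈ P | r x p} : ℝ) ^ 2 - 2 * E * ∑ x ∈ I, (#{p ∈ P | r x p} : ℝ)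
          + #I * E ^ 2 := by
        simp only [sub_sq, sum_add_distrib, sum_sub_distrib, sum_const, nsmul_eq_mul, mul_sum]
        congr 2
        exact sum_congr rfl fun _ _ ↦ by ring
    _ ≤ _ := by linarith [mul_le_mul_of_nonneg_left hfirst hE]

theorem card_filter_lt_mul_sq_le {W : ι → ℕ} {M : ℕ} {E : ℝ} (hM : M ≤ E) :
    #{x ∈ I | W x < M} * (E - M) ^ 2 ≤ ∑ x ∈ I, (W x - E) ^ 2 := by
  rw [← nsmul_eq_mul]
  refine (card_nsmul_le_sum _ _ _ fun x hx ↦ ?_).trans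
    (sum_le_sum_of_subset_of_nonneg (filter_subset _ _) fun x _ _ ↦ sq_nonneg _)
  have hx : (W x : ℝ) < M := by exact_mod_cast (mem_filter.1 hx).2
  nlinarith

end Moments

variable (a b : ℤ)

theorem abs_card_filter_dvd_sub_le {m : ℕ} (hm : 0 < m) (c : ℤ) :
    |(#{x ∈ Ico a b | (m : ℤ) ∣ x - c} : ℝ) - #(Ico a b) * (m : ℝ)⁻¹| ≤ 1 := by
  obtain hab | hab := lt_or_ge b a
  · simp [Ico_eq_empty_of_le hab.le]
  have hcard := Int.Ico_filter_modEq_card a b (Nat.cast_pos.2 hm : 0 < (m : ℤ)) c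
  simp only [Int.modEq_iff_dvd, dvd_sub_comm (b := c)] at hcard
  set u : ℚ := (b - c) / (m : ℤ)
  set v : ℚ := (a - c) / (m : ℤ)
  have huv : u - v = #(Ico a b) * (m : ℚ)⁻¹ := by
    have hI : (#(Ico a b) : ℚ) = b - a := by
      rw [Int.card_Ico, ← Int.cast_natCast, Int.toNat_of_nonneg (sub_nonneg.2 hab), Int.cast_sub]
    rw [hI, ← sub_div, sub_sub_sub_cancel_right, Int.cast_natCast, div_eq_mul_inv]
  have hvu : v ≤ u := sub_nonneg.1 (huv ▸ by positivity)
  rw [max_eq_left (sub_nonneg.2 (Int.ceil_le_ceil hvu)), ← Int.cast_inj (α := ℚ), Int.cast_sub,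
    Int.cast_natCast] at hcard
  have hle : |(#{x ∈ Ico a b | (m : ℤ) ∣ x - c} : ℚ) - #(Ico a b) * (m : ℚ)⁻¹| ≤ 1 := by
    rw [hcard, ← huv, abs_sub_le_iff]
    constructor <;>
      linarith [Int.le_ceil u, Int.le_ceil v, Int.ceil_lt_add_one u, Int.ceil_lt_add_one v]
  simpa only [Rat.cast_abs, Rat.cast_sub, Rat.cast_mul, Rat.cast_inv, Rat.cast_natCast,
    Rat.cast_one] using (Rat.cast_le (K := ℝ)).2 hle

theorem card_filter_dvd_dvd_le {m n : ℕ} (hm : 0 < m) (hn : 0 < n) (hmn : m.Coprime n) (c d : ℤ) :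
    #{x ∈ Ico a b | (m : ℤ) ∣ x - c ∧ (n : ℤ) ∣ x - d} ≤
      #(Ico a b) * ((m : ℝ)⁻¹ * (n : ℝ)⁻¹) + 1 := by
  obtain hempty | ⟨y, hy⟩ := {x ∈ Ico a b | (m : ℤ) ∣ x - c ∧ (n : ℤ) ∣ x - d}.eq_empty_or_nonempty
  · rw [hempty, card_empty, Nat.cast_zero]
    positivity
  obtain ⟨-, hym, hyn⟩ := mem_filter.1 hy
  have hsub : {x ∈ Ico a b | (m : ℤ) ∣ x - c ∧ (n : ℤ) ∣ x - d} ⊆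
      {x ∈ Ico a b | ((m * n : ℕ) : ℤ) ∣ x - y} := by
    refine monotone_filter_right _ fun x _ hx ↦ ?_
    rw [Nat.cast_mul]
    exact (Nat.isCoprime_iff_coprime.2 hmn).mul_dvd
      ((sub_sub_sub_cancel_right x y c) ▸ dvd_sub hx.1 hym)
      ((sub_sub_sub_cancel_right x y d) ▸ dvd_sub hx.2 hyn)
  have hle := (abs_sub_le_iff.1 (abs_card_filter_dvd_sub_le a b (Nat.mul_pos hm hn) y)).1
  rw [Nat.cast_mul (α := ℝ), mul_inv] at hle
  have hcard : (#{x ∈ Ico a b | (m : ℤ) ∣ x - c ∧ (n : ℤ) ∣ x - d} : ℝ) ≤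
    #{x ∈ Ico a b | ((m * n : ℕ) : ℤ) ∣ x - y} := by exact_mod_cast card_le_card hsub
  linarith

theorem card_filter_padicValInt_eq_one_le {p : ℕ} (hp : p.Prime) (c : ℤ) :
    #{x ∈ Ico a b | padicValInt p (x - c) = 1} ≤ #(Ico a b) * (p : ℝ)⁻¹ + 1 := by
  have : Fact p.Prime := ⟨hp⟩
  have hle : (#{x ∈ Ico a b | padicValInt p (x - c) = 1} : ℝ) ≤
      #{x ∈ Ico a b | (p : ℤ) ∣ x - c} := by
    exact_mod_cast card_le_card (monotone_filter_right _ fun _ _ h ↦ (padicValInt_eq_one_iff.1 h).1)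
  linarith [(abs_sub_le_iff.1 (abs_card_filter_dvd_sub_le a b hp.pos c)).1]

theorem le_card_filter_padicValInt_eq_one {p : ℕ} (hp : p.Prime) (c : ℤ) :
    #(Ico a b) * (p : ℝ)⁻¹ - (#(Ico a b) * ((p : ℝ) ^ 2)⁻¹ + 2) ≤
      #{x ∈ Ico a b | padicValInt p (x - c) = 1} := by
  have : Fact p.Prime := ⟨hp⟩
  have hunion : {x ∈ Ico a b | (p : ℤ) ∣ x - c} ⊆ {x ∈ Ico a b | padicValInt p (x - c) = 1} ∪
      {x ∈ Ico a b | ((p ^ 2 : ℕ) : ℤ) ∣ x - c} := fun x ↦ by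
    simp only [mem_union, mem_filter, padicValInt_eq_one_iff, Nat.cast_pow]
    tauto
  have hle : (#{x ∈ Ico a b | (p : ℤ) ∣ x - c} : ℝ) ≤
      #{x ∈ Ico a b | padicValInt p (x - c) = 1} +
        #{x ∈ Ico a b | ((p ^ 2 : ℕ) : ℤ) ∣ x - c} := by
    exact_mod_cast (card_le_card hunion).trans (card_union_le _ _)
  have hsq := (abs_sub_le_iff.1 (abs_card_filter_dvd_sub_le a b (pow_pos hp.pos 2) c)).1
  rw [Nat.cast_pow (α := ℝ)] at hsq
  linarith [(abs_sub_le_iff.1 (abs_card_filter_dvd_sub_le a b hp.pos c)).2]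

theorem card_filter_padicValInt_eq_one_and_le {p q : ℕ} (hp : p.Prime) (hq : q.Prime)
    (hpq : p ≠ q) (c d : ℤ) :
    #{x ∈ Ico a b | padicValInt p (x - c) = 1 ∧ padicValInt q (x - d) = 1} ≤
      #(Ico a b) * ((p : ℝ)⁻¹ * (q : ℝ)⁻¹) + 1 := by
  have : Fact p.Prime := ⟨hp⟩
  have : Fact q.Prime := ⟨hq⟩
  refine le_trans ?_ (card_filter_dvd_dvd_le a b hp.pos hq.pos ((Nat.coprime_primes hp hq).2 hpq)
    c d)
  exact Nat.cast_le.2 (card_le_card <| monotone_filter_right _ fun x _ h ↦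
    ⟨(padicValInt_eq_one_iff.1 h.1).1, (padicValInt_eq_one_iff.1 h.2).1⟩)

variable {a b}

theorem sum_sq_card_filter_padicValInt_sub_sum_inv_le {P : Finset ℕ} (hP : ∀ p ∈ P, p.Prime)
    (hcard : #P ^ 2 ≤ #(Ico a b)) (c : ℕ → ℤ) :
    ∑ x ∈ Ico a b, (#{p ∈ P | padicValInt p (x - c p) = 1} - ∑ p ∈ P, (p : ℝ)⁻¹) ^ 2 ≤
      #(Ico a b) * (9 * ∑ p ∈ P, (p : ℝ)⁻¹ + 1) := by
  have hmoment := sum_sq_card_filter_sub_sum_le (fun x p ↦ padicValInt p (x - c p) = 1)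
    (w := fun p : ℕ ↦ (p : ℝ)⁻¹)
    (fun p _ ↦ by positivity) (fun p hp ↦ le_card_filter_padicValInt_eq_one a b (hP p hp) (c p))
    (fun p hp ↦ card_filter_padicValInt_eq_one_le a b (hP p hp) (c p))
    (fun p hp q hq hpq ↦ card_filter_padicValInt_eq_one_and_le a b (hP p hp) (hP q hq) hpq _ _)
  have hPI : (#P : ℝ) ^ 2 ≤ #(Ico a b) := by exact_mod_cast hcard
  have hPI' : (#P : ℝ) ≤ #(Ico a b) := by
    exact_mod_cast (Nat.le_self_pow two_ne_zero #P).trans hcard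
  have herror : ∑ p ∈ P, (#(Ico a b) * ((p : ℝ) ^ 2)⁻¹ + 2) ≤ 4 * #(Ico a b) := by
    rw [sum_add_distrib, ← mul_sum, sum_const, nsmul_eq_mul]
    nlinarith [sum_inv_sq_le_two P]
  set E := ∑ p ∈ P, (p : ℝ)⁻¹
  have hE : 0 ≤ E := by positivity
  linarith [mul_le_mul_of_nonneg_left herror hE]

theorem card_filter_padicValInt_lt_mul_sum_inv_le {P : Finset ℕ} (hP : ∀ p ∈ P, p.Prime)
    (hcard : #P ^ 2 ≤ #(Ico a b)) (c : ℕ → ℤ) (M : ℕ) :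
    #{x ∈ Ico a b | #{p ∈ P | padicValInt p (x - c p) = 1} < M} * ∑ p ∈ P, (p : ℝ)⁻¹ ≤
      (40 + 2 * M) * #(Ico a b) := by
  have hmoment := sum_sq_card_filter_padicValInt_sub_sum_inv_le hP hcard c
  set W : ℤ → ℕ := fun x ↦ #{p ∈ P | padicValInt p (x - c p) = 1}
  set E := ∑ p ∈ P, (p : ℝ)⁻¹
  have hA : (#{x ∈ Ico a b | W x < M} : ℝ) ≤ #(Ico a b) :=
    Nat.cast_le.2 (card_filter_le _ _)
  set A := (#{x ∈ Ico a b | W x < M} : ℝ)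
  have hA₀ : 0 ≤ A := Nat.cast_nonneg _
  obtain hE | hE := lt_or_ge E (2 * M + 1)
  · nlinarith
  have hchebyshev : A * (E - M) ^ 2 ≤ #(Ico a b) * (9 * E + 1) :=
    (card_filter_lt_mul_sq_le (by linarith)).trans hmoment
  have hhalf : E ^ 2 ≤ 4 * (E - M) ^ 2 := by nlinarith
  have hE₁ : 1 ≤ E := by linarith [Nat.cast_nonneg (α := ℝ) M]
  refine le_of_mul_le_mul_right ?_ (zero_lt_one.trans_le hE₁)
  calc A * E * E = A * E ^ 2 := by ring
    _ ≤ A * (4 * (E - M) ^ 2) := by gcongr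
    _ = 4 * (A * (E - M) ^ 2) := by ring
    _ ≤ 4 * (#(Ico a b) * (9 * E + 1)) := by linarith
    _ ≤ 4 * (#(Ico a b) * (9 * E + E)) := by gcongr
    _ = 40 * #(Ico a b) * E := by ring
    _ ≤ (40 + 2 * M) * #(Ico a b) * E := by gcongr; linarith [Nat.cast_nonneg (α := ℝ) M]

end TuranSieve

section RationalsOfBoundedHeight

open Finset Polynomial

variable {f : ℤ[X]} {P : Finset ℕ} {S : Finset ℚ} {M : ℕ}

theorem card_mul_sum_inv_le_of_den_eq (hP : ∀ p ∈ P, p.Prime)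
    (hroot : ∀ p ∈ P, HasSimpleRootMod f p) {a b : ℤ} (hcard : #P ^ 2 ≤ #(Ico a b)) {d : ℕ}
    (hden : ∀ r ∈ S, r.den = d) (hnum : ∀ r ∈ S, r.num ∈ Ico a b)
    (hS : ∀ r ∈ S, #(sqfreePartRat (aeval r f)).primeFactors < M) :
    #S * ∑ p ∈ P, (p : ℝ)⁻¹ ≤ (40 + 2 * M) * #(Ico a b) := by
  choose! x hx hx' using fun p hp ↦ (hroot p hp).exists_sq_dvd_eval (hP p hp)
  have hsub (r : ℚ) (hr : r ∈ S) : {p ∈ P | padicValInt p (r.num - d * x p) = 1} ⊆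
      (sqfreePartRat (aeval r f)).primeFactors := fun p hp ↦ by
    obtain ⟨hp, hval⟩ := mem_filter.1 hp
    have : Fact p.Prime := ⟨hP p hp⟩
    rw [mem_primeFactors_sqfreePartRat,
      padicValRat_aeval_eq_one (hx p hp) (hx' p hp) (hden r hr ▸ hval)]
    exact odd_one
  have hle : #S ≤ #{n ∈ Ico a b | #{p ∈ P | padicValInt p (n - d * x p) = 1} < M} :=
    card_le_card_of_injOn Rat.num
      (fun r hr ↦ mem_filter.2 ⟨hnum r hr, (card_le_card (hsub r hr)).trans_lt (hS r hr)⟩)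
      (fun r hr s hs h ↦ Rat.ext h ((hden r hr).trans (hden s hs).symm))
  refine le_trans ?_ (card_filter_padicValInt_lt_mul_sum_inv_le hP hcard (fun p ↦ d * x p) M)
  gcongr

theorem ratHeight_le_iff {r : ℚ} {N : ℕ} :
    ratHeight r ≤ N ↔ r.num ∈ Ico (-N : ℤ) (N + 1) ∧ r.den ∈ Icc 1 N := by
  rw [ratHeight, max_le_iff, mem_Ico, mem_Icc, and_iff_right (Nat.one_le_iff_ne_zero.2 r.den_nz)]
  exact and_congr_left' (by lia)

theorem injective_num_den : Function.Injective fun r : ℚ ↦ (r.num, r.den) :=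
  fun _ _ h ↦ Rat.ext (Prod.ext_iff.1 h).1 (Prod.ext_iff.1 h).2

theorem finite_setOf_ratHeight_le (N : ℕ) : {r : ℚ | ratHeight r ≤ N}.Finite := by
  refine ((Ico (-N : ℤ) (N + 1) ×ˢ Icc 1 N).finite_toSet.preimage
    injective_num_den.injOn).subset fun r hr ↦ ?_
  exact mem_product.2 (ratHeight_le_iff.1 hr)

variable {N : ℕ} (hN : ∀ r ∈ S, ratHeight r ≤ N)

include hN

theorem card_le_of_ratHeight_le : #S ≤ N * (2 * N + 1) := by
  refine (card_le_card_of_injOn _ (fun r hr ↦ mem_product.2 (ratHeight_le_iff.1 (hN r hr)))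
    injective_num_den.injOn).trans_eq ?_
  rw [card_product, Int.card_Ico, Nat.card_Icc, mul_comm]
  congr 1
  lia

theorem card_mul_sum_inv_le_of_ratHeight_le (hP : ∀ p ∈ P, p.Prime)
    (hroot : ∀ p ∈ P, HasSimpleRootMod f p) (hcard : #P ^ 2 ≤ 2 * N + 1)
    (hS : ∀ r ∈ S, #(sqfreePartRat (aeval r f)).primeFactors < M) :
    #S * ∑ p ∈ P, (p : ℝ)⁻¹ ≤ (40 + 2 * M) * (N * (2 * N + 1)) := by
  have hI : #(Ico (-N : ℤ) (N + 1)) = 2 * N + 1 := by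
    rw [Int.card_Ico]
    lia
  have hfiber (d : ℕ) : #{r ∈ S | r.den = d} * ∑ p ∈ P, (p : ℝ)⁻¹ ≤
      (40 + 2 * M) * (2 * N + 1) := by
    have h := card_mul_sum_inv_le_of_den_eq (S := {r ∈ S | r.den = d}) hP hroot
      (hI.symm ▸ hcard) (fun r hr ↦ (mem_filter.1 hr).2)
      (fun r hr ↦ (ratHeight_le_iff.1 (hN r (mem_of_mem_filter r hr))).1)
      (fun r hr ↦ hS r (mem_of_mem_filter r hr))
    rw [hI] at h
    exact_mod_cast h
  calc #S * ∑ p ∈ P, (p : ℝ)⁻¹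
      = ∑ d ∈ Icc 1 N, #{r ∈ S | r.den = d} * ∑ p ∈ P, (p : ℝ)⁻¹ := by
        rw [card_eq_sum_card_fiberwise fun r hr ↦ (ratHeight_le_iff.1 (hN r hr)).2,
          Nat.cast_sum, sum_mul]
    _ ≤ ∑ d ∈ Icc 1 N, (40 + 2 * M) * (2 * N + 1 : ℝ) := sum_le_sum fun d _ ↦ hfiber d
    _ = (40 + 2 * M) * (N * (2 * N + 1)) := by
        rw [sum_const, Nat.card_Icc, Nat.add_sub_cancel, nsmul_eq_mul]
        ring

end RationalsOfBoundedHeight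

section FewPrimeFactors

open Polynomial

theorem log_log_le_log_log_sqrt_floor_add {X : ℝ} (hX : 1 < X) :
    Real.log (Real.log X) ≤ Real.log (Real.log (Nat.sqrt ⌊X⌋₊ + 1)) + Real.log 2 := by
  have hlt : X < (Nat.sqrt ⌊X⌋₊ + 1 : ℝ) ^ 2 := by
    exact_mod_cast (Nat.floor_lt (by linarith)).1 (Nat.lt_succ_sqrt' ⌊X⌋₊)
  have hlog : Real.log X ≤ 2 * Real.log (Nat.sqrt ⌊X⌋₊ + 1) := by
    simpa only [Real.log_pow, Nat.cast_ofNat] using Real.log_le_log (by linarith) hlt.le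
  have hpos : 0 < Real.log X := Real.log_pos hX
  calc Real.log (Real.log X) ≤ Real.log (2 * Real.log (Nat.sqrt ⌊X⌋₊ + 1)) :=
        Real.log_le_log hpos hlog
    _ = Real.log (Real.log (Nat.sqrt ⌊X⌋₊ + 1)) + Real.log 2 := by
        rw [Real.log_mul two_ne_zero (by linarith), add_comm]

theorem card_simpleRootPrimes_sqrt_sq_le (f : ℤ[X]) (N : ℕ) :
    (simpleRootPrimes f N.sqrt).card ^ 2 ≤ N := by
  refine le_trans (Nat.pow_le_pow_left ?_ 2) N.sqrt_le'
  refine (Finset.card_le_card (t := Finset.Icc 1 N.sqrt) fun p hp ↦ ?_).trans_eq (by simp)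
  obtain ⟨⟨hpN, hp⟩, -⟩ := mem_simpleRootPrimes.1 hp
  exact Finset.mem_Icc.2 ⟨hp.one_le, hpN⟩

theorem exists_card_mul_log_log_le (M : ℕ) {f : ℤ[X]} {z : ℂ} (hz : aeval z f = 0)
    (hz' : aeval z f.derivative ≠ 0) :
    ∃ C : ℝ, ∀ X : ℝ, 1 < X → ∀ S : Finset ℚ, (∀ r ∈ S, ratHeight r ≤ ⌊X⌋₊) →
      (∀ r ∈ S, (sqfreePartRat (aeval r f)).primeFactors.card < M) →
      S.card * Real.log (Real.log X) ≤ C * X ^ 2 := by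
  obtain ⟨B, D, hB, hBD⟩ := exists_log_log_le_sum_inv_simpleRootPrimes hz hz'
  refine ⟨3 * (B * (40 + 2 * M) + (|D| + Real.log 2)), fun X hX S hheight hS ↦ ?_⟩
  have hlog := log_log_le_log_log_sqrt_floor_add hX
  have hN : (⌊X⌋₊ : ℝ) ≤ X := Nat.floor_le (by linarith)
  have hz₁ : 1 ≤ Nat.sqrt ⌊X⌋₊ := Nat.sqrt_pos.2 (Nat.floor_pos.2 hX.le)
  have hprime := hBD _ hz₁
  have hsieve := card_mul_sum_inv_le_of_ratHeight_le hheight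
    (fun p hp ↦ (mem_simpleRootPrimes.1 hp).1.2) (fun p hp ↦ (mem_simpleRootPrimes.1 hp).2)
    ((card_simpleRootPrimes_sqrt_sq_le f ⌊X⌋₊).trans (by lia)) hS
  have htrivial : (S.card : ℝ) ≤ ⌊X⌋₊ * (2 * ⌊X⌋₊ + 1) := by
    exact_mod_cast card_le_of_ratHeight_le hheight
  have hT : (⌊X⌋₊ * (2 * ⌊X⌋₊ + 1) : ℝ) ≤ 3 * X ^ 2 :=
    calc (⌊X⌋₊ * (2 * ⌊X⌋₊ + 1) : ℝ) ≤ X * (2 * X + X) := by gcongr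
      _ = 3 * X ^ 2 := by ring
  set E := ∑ p ∈ simpleRootPrimes f (Nat.sqrt ⌊X⌋₊), (p : ℝ)⁻¹
  set T : ℝ := ⌊X⌋₊ * (2 * ⌊X⌋₊ + 1)
  calc S.card * Real.log (Real.log X)
      ≤ S.card * (B * E + (|D| + Real.log 2)) := by
        gcongr
        linarith [le_abs_self D]
    _ = B * (S.card * E) + S.card * (|D| + Real.log 2) := by ring
    _ ≤ B * ((40 + 2 * M) * T) + T * (|D| + Real.log 2) := by gcongr
    _ = (B * (40 + 2 * M) + (|D| + Real.log 2)) * T := by ring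
    _ ≤ (B * (40 + 2 * M) + (|D| + Real.log 2)) * (3 * X ^ 2) := by gcongr
    _ = 3 * (B * (40 + 2 * M) + (|D| + Real.log 2)) * X ^ 2 := by ring

theorem few_rationals_with_few_prime_factors_general (M : ℕ) {f : ℤ[X]} {z : ℂ}
    (hz : aeval z f = 0) (hz' : aeval z f.derivative ≠ 0) :
    ∃ C : ℝ, ∀ X : ℝ, 16 ≤ X →
      (Set.ncard {r : ℚ | (ratHeight r : ℝ) ≤ X ∧ aeval r f ≠ 0 ∧
          (sqfreePartRat (aeval r f)).primeFactors.card < M} : ℝ) ≤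
        C * X ^ 2 / Real.log (Real.log X) := by
  obtain ⟨C, hC⟩ := exists_card_mul_log_log_le M hz hz'
  refine ⟨C, fun X hX ↦ ?_⟩
  set R := {r : ℚ | (ratHeight r : ℝ) ≤ X ∧ aeval r f ≠ 0 ∧
    (sqfreePartRat (aeval r f)).primeFactors.card < M}
  have hheight (r : ℚ) (hr : r ∈ R) : ratHeight r ≤ ⌊X⌋₊ := Nat.le_floor hr.1
  have hfin : R.Finite := (finite_setOf_ratHeight_le ⌊X⌋₊).subset hheight
  have hlog : 1 < Real.log X :=
    (Real.lt_log_iff_exp_lt (by linarith)).2 (by linarith [Real.exp_one_lt_d9])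
  rw [Set.ncard_eq_toFinset_card R hfin, le_div_iff₀ (Real.log_pos hlog)]
  exact hC X (by linarith) _ (fun r hr ↦ hheight r (hfin.mem_toFinset.1 hr))
    fun r hr ↦ (hfin.mem_toFinset.1 hr).2.2

end FewPrimeFactors

theorem few_rationals_with_few_prime_factors (M : ℕ) (hM : 1 ≤ M)
    (f : Polynomial ℤ) (hf : 0 < f.natDegree)
    (hirr : Irreducible (f.map (Int.castRingHom ℚ))) :
    ∃ C : ℝ, ∀ X : ℝ, 16 ≤ X →
      (Set.ncard {r : ℚ | (ratHeight r : ℝ) ≤ X ∧ Polynomial.aeval r f ≠ 0 ∧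
          (sqfreePartRat (Polynomial.aeval r f)).primeFactors.card < M} : ℝ) ≤
        C * X ^ 2 / Real.log (Real.log X) := by
  obtain ⟨z, hz⟩ := IsAlgClosed.exists_aeval_eq_zero ℂ (f.map (Int.castRingHom ℚ))
    hirr.degree_pos.ne'
  have hz' := hirr.separable.aeval_derivative_ne_zero hz
  rw [Polynomial.derivative_map, ← algebraMap_int_eq, Polynomial.aeval_map_algebraMap] at hz'
  rw [← algebraMap_int_eq, Polynomial.aeval_map_algebraMap] at hz
  exact few_rationals_with_few_prime_factors_general M hz hz'
end
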